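/- (Gravitational lensing with shear) Let N ≥ 2 be an even integer and set γ₀ = (2 − √2)/(2 + √2). Then for every real γ with γ₀ < γ < 1 there exist positive real numbers ε₁, …, ε_N and distinct points z₁, …, z_N ∈ ℂ such that the equation conj(z) = −γ·z + Σ_{j=1}^N ε_j/(z − z_j) has exactly 5N − 1 solutions z ∈ ℂ ∖ {z₁, …, z_N}. -/

import Mathlib

/-- The set of solutions `w ∈ ℂ ∖ {z₁, …, z_N}` of the gravitational lensing equation
`conj w = −γ·w + Σ_j ε_j/(w − z_j)`. -/
def lensSolutions (N : ℕ) (γ : ℝ) (ε : Fin N → ℝ) (z : Fin N → ℂ) : Set ℂ :=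
  {w | (∀ j, w ≠ z j) ∧
    (starRingEnd ℂ) w = -(γ : ℂ) * w + ∑ j, (ε j : ℂ) / (w - z j)}

/-!
Put all masses on one line. After a rotation and a translation the lens equation becomes
`r z = conj z` with `r z = γ z + c + ∑ ε_j / (z - x_j)`, where the `x_j` are real. On the real line
it has `N + 1` solutions, one in each gap between the poles. In the upper half-plane its imaginary
part reads `∑ ε_j / |z - x_j|² = 1 + γ`, which describes arcs parametrised by the real part of `z`,
and the solutions are the zeros of a continuous function (`arcDisp`) along these arcs. Having `2N`
alternating signs, it has at least `2N - 1` zeros. At a zero where it decreases, `|r'| < 1`, so by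
Fatou's theorem the zero attracts a critical point of `r` of its own; only `N - 1` of these lie in
the upper half-plane, and counting sign changes bounds the number of zeros by `2N - 1`. Together
with the complex conjugates this makes `2(2N - 1) + N + 1 = 5N - 1` solutions.

It remains to find masses for which the signs alternate. If `(N + 1)(1 - γ) < 2`, let `r z - z` be
the negative reciprocal of the field of `N + 1` point charges in electrostatic equilibrium: near
the charges the field is dominated by a single one of them. If `(N + 1)(1 - γ) > 1 + γ`, put the
masses at Chebyshev nodes: in the coordinate `z = ζ + 1/ζ`, the two sides of the equation nearly
agree along the whole circle `γ |ζ|² = 1`, and their difference oscillates with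
`1 / (ζ ^ (2N + 2) - 1)`.
-/

open Filter Topology Set Metric ComplexConjugate Bornology Polynomial

section HolomorphicLifting

variable {r : ℂ → ℂ} {Ω : Set ℂ}

theorem isLocalHomeomorphOn_restrictPreimage (hΩ : IsOpen Ω) (hpre : IsOpen (r ⁻¹' Ω))
    (hr : DifferentiableOn ℂ r (r ⁻¹' Ω)) :
    IsLocalHomeomorphOn (Ω.restrictPreimage r) {z | deriv r z ≠ 0} := by
  have hstrict : ∀ z ∈ r ⁻¹' Ω, HasStrictDerivAt r (deriv r z) z := fun z hz =>
    (hr.analyticAt (hpre.mem_nhds hz)).hasStrictDerivAt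
  have hlocal : IsLocalHomeomorphOn r {z | z ∈ r ⁻¹' Ω ∧ deriv r z ≠ 0} := fun z hz =>
    ⟨_, ((hstrict z hz.1).hasStrictFDerivAt_equiv hz.2).mem_toOpenPartialHomeomorph_source,
      by simp⟩
  have hcont : Continuous (Ω.restrictPreimage r) :=
    (continuousOn_iff_continuous_domRestrict.1 hr.continuousOn).subtype_mk _
  refine IsLocalHomeomorphOn.of_comp_left (g := (Subtype.val : Ω → ℂ)) ?_
    hΩ.isOpenEmbedding_subtypeVal.isLocalHomeomorph.isLocalHomeomorphOn
    fun z _ => hcont.continuousAt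
  exact hlocal.comp hpre.isOpenEmbedding_subtypeVal.isLocalHomeomorph.isLocalHomeomorphOn
    fun z hz => ⟨z.2, hz⟩

theorem isCoveringMapOn_restrictPreimage (hΩ : IsOpen Ω) (hpre : IsOpen (r ⁻¹' Ω))
    (hr : DifferentiableOn ℂ r (r ⁻¹' Ω)) (hproper : IsProperMap (Ω.restrictPreimage r)) :
    IsCoveringMapOn (Ω.restrictPreimage r) {t | ∀ z, r z = t → deriv r z ≠ 0} := by
  have hlocal := isLocalHomeomorphOn_restrictPreimage hΩ hpre hr
  refine hproper.isClosedMap.isCoveringMapOn_of_isLocalHomeomorphOn (fun t ht => ?_)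
    (hlocal.mono fun z hz => hz z rfl)
  refine (hproper.isCompact_preimage isCompact_singleton).finite ?_
  refine (hlocal.mono fun z hz => ht z (congrArg Subtype.val hz)).isDiscrete_of_image ?_
  exact (subsingleton_singleton.anti (image_preimage_subset _ _)).isDiscrete

theorem exists_differentiableOn_lift (hΩ : IsOpen Ω) (hpre : IsOpen (r ⁻¹' Ω))
    (hr : DifferentiableOn ℂ r (r ⁻¹' Ω)) (hproper : IsProperMap (Ω.restrictPreimage r))
    {U : Set ℂ} (hU : IsOpen U) (hUconv : Convex ℝ U) {a : ℂ} (ha : a ∈ U) {ψ : ℂ → ℂ}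
    (hψ : DifferentiableOn ℂ ψ U) (hψΩ : MapsTo ψ U Ω)
    (hreg : ∀ u ∈ U, ∀ z, r z = ψ u → deriv r z ≠ 0) {e : ℂ} (he : r e = ψ a) :
    ∃ χ : ℂ → ℂ, DifferentiableOn ℂ χ U ∧ χ a = e ∧ ∀ u ∈ U, r (χ u) = ψ u := by
  have : ContractibleSpace U := hUconv.contractibleSpace ⟨a, ha⟩
  have : LocallyPathConnectedSpace U := hU.locallyPathConnectedSpace
  have : SimplyConnectedSpace U := SimplyConnectedSpace.ofContractible _
  let g : C(U, Ω) := ⟨hψΩ.restrict, hψ.continuousOn.mapsToRestrict hψΩ⟩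
  obtain ⟨F, ⟨hFa, hF⟩, -⟩ :=
    (isCoveringMapOn_restrictPreimage hΩ hpre hr hproper).existsUnique_continuousMap_lifts g
      (a₀ := ⟨a, ha⟩) (e₀ := ⟨e, by rw [mem_preimage, he]; exact hψΩ ha⟩) (Subtype.ext he)
      fun u => hreg u u.2
  classical
  let χ : ℂ → ℂ := fun u => if hu : u ∈ U then (F ⟨u, hu⟩ : ℂ) else 0
  have hχ : ∀ u (hu : u ∈ U), χ u = F ⟨u, hu⟩ := fun u hu => dif_pos hu
  have hχr : ∀ u ∈ U, r (χ u) = ψ u := fun u hu => by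
    rw [hχ u hu]
    exact congrArg Subtype.val (congrFun hF ⟨u, hu⟩)
  have hχcont : ContinuousOn χ U := by
    rw [continuousOn_iff_continuous_domRestrict]
    convert continuous_subtype_val.comp F.continuous using 1
    exact funext fun u => hχ u u.2
  refine ⟨χ, fun u hu => ?_, by rw [hχ a ha, hFa], hχr⟩
  have hχu : r ⁻¹' Ω ∈ 𝓝 (χ u) := hpre.mem_nhds (by rw [hχ u hu]; exact (F _).2)
  have hψu := (hψ.differentiableAt (hU.mem_nhds hu)).hasDerivAt
  exact (HasDerivAt.of_comp_left (hχcont.continuousAt (hU.mem_nhds hu))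
    (hr.differentiableAt hχu).hasDerivAt hψu (hreg u hu _ (hχr u hu))
    (eventually_of_mem (hU.mem_nhds hu) hχr)).differentiableAt.differentiableWithinAt

end HolomorphicLifting

/-- Apply Cauchy's estimate to `1 / (f - b)`. -/
theorem norm_deriv_le_of_forall_le_norm_sub {f : ℂ → ℂ} {a b : ℂ} {R ρ : ℝ} (hR : 0 < R)
    (hρ : 0 < ρ) (hf : DifferentiableOn ℂ f (ball a R)) (hfar : ∀ u ∈ ball a R, ρ ≤ ‖f u - b‖) :
    ‖deriv f a‖ ≤ 1 / ρ / (R / 2) * ‖f a - b‖ ^ 2 := by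
  have ha : a ∈ ball a R := mem_ball_self hR
  have hne : ∀ u ∈ ball a R, f u - b ≠ 0 := fun u hu =>
    norm_pos_iff.1 (hρ.trans_le (hfar u hu))
  have hsub : closedBall a (R / 2) ⊆ ball a R := closedBall_subset_ball (by linarith)
  have hcauchy := Complex.norm_deriv_le_of_forall_mem_sphere_norm_le (half_pos hR)
    (f := fun u => (f u - b)⁻¹) (C := 1 / ρ)
    (((hf.sub_const b).inv hne).mono
      ((closure_ball a (half_pos hR).ne').trans_subset hsub)).diffContOnCl
    fun z hz => by
      rw [norm_inv, inv_eq_one_div]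
      exact one_div_le_one_div_of_le hρ (hfar z (hsub (sphere_subset_closedBall hz)))
  have hderiv := ((hf.differentiableAt (isOpen_ball.mem_nhds ha)).hasDerivAt.sub_const b).fun_inv
    (hne a ha)
  rwa [hderiv.deriv, norm_div, norm_neg, norm_pow,
    div_le_iff₀ (pow_pos (norm_pos_iff.2 (hne a ha)) 2)] at hcauchy

/-- Functions commuting with complex conjugation and holomorphic off the real axis, that are proper
over the complement of the real axis: the class of maps in which every attracting solution of
`r z = conj z` is shown to attract a critical point. -/
structure IsRealProper (r : ℂ → ℂ) : Prop where
  map_conj : ∀ z, r (conj z) = conj (r z)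
  differentiableAt : ∀ z, z.im ≠ 0 → DifferentiableAt ℂ r z
  isProperMap : IsProperMap ({z : ℂ | z.im ≠ 0}.restrictPreimage r)

namespace IsRealProper

theorem isOpen_im_ne_zero : IsOpen {z : ℂ | z.im ≠ 0} :=
  isOpen_ne_fun Complex.continuous_im continuous_const

variable {r : ℂ → ℂ} (hr : IsRealProper r)

include hr

theorem iterate_conj (k : ℕ) (z : ℂ) : r^[k] (conj z) = conj (r^[k] z) :=
  (Function.Commute.iterate_left hr.map_conj k) z

theorem im_iterate_eq_zero (k : ℕ) {z : ℂ} (hz : z.im = 0) : (r^[k] z).im = 0 := by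
  rw [← Complex.conj_eq_iff_im, ← hr.iterate_conj, Complex.conj_eq_iff_im.2 hz]

theorem im_ne_zero_of_iterate {k : ℕ} {z : ℂ} (hz : (r^[k] z).im ≠ 0) : z.im ≠ 0 :=
  fun h => hz (hr.im_iterate_eq_zero k h)

theorem deriv_conj (z : ℂ) : deriv r (conj z) = conj (deriv r z) := by
  have hsymm : conj ∘ r ∘ conj = r := funext fun w => by simp [hr.map_conj]
  have hderiv := congrFun (deriv_conj_conj (f := r)) z
  rw [hsymm] at hderiv
  simp [hderiv]

theorem exists_differentiableOn_lift {U : Set ℂ} (hU : IsOpen U) (hUconv : Convex ℝ U) {a : ℂ}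
    (ha : a ∈ U) {ψ : ℂ → ℂ} (hψ : DifferentiableOn ℂ ψ U) (hψim : ∀ u ∈ U, (ψ u).im ≠ 0)
    (hreg : ∀ u ∈ U, ∀ z, r z = ψ u → deriv r z ≠ 0) {e : ℂ} (he : r e = ψ a) :
    ∃ χ : ℂ → ℂ, DifferentiableOn ℂ χ U ∧ χ a = e ∧ ∀ u ∈ U, r (χ u) = ψ u := by
  have hpre : r ⁻¹' {z | z.im ≠ 0} ⊆ {z | z.im ≠ 0} := fun z => hr.im_ne_zero_of_iterate (k := 1)
  have hdiff : DifferentiableOn ℂ r {z | z.im ≠ 0} := fun z hz =>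
    (hr.differentiableAt z hz).differentiableWithinAt
  refine _root_.exists_differentiableOn_lift isOpen_im_ne_zero ?_ (hdiff.mono hpre)
    hr.isProperMap hU hUconv ha hψ hψim hreg he
  have hopen := hdiff.continuousOn.isOpen_inter_preimage isOpen_im_ne_zero isOpen_im_ne_zero
  rwa [inter_eq_right.2 hpre] at hopen

section AttractingDisc

variable {a : ℂ} {δ : ℝ}

theorem iterate_eq_or_eq_conj (ha : r a = conj a) (k : ℕ) :
    r^[k] a = a ∨ r^[k] a = conj a := by
  induction k with
  | zero => exact Or.inl rfl
  | succ k ih =>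
    rw [Function.iterate_succ_apply']
    rcases ih with h | h
    · exact Or.inr (by rw [h, ha])
    · exact Or.inl (by rw [h, hr.map_conj, ha, Complex.conj_conj])

theorem norm_deriv_iterate (ha : r a = conj a) (k : ℕ) :
    ‖deriv r (r^[k] a)‖ = ‖deriv r a‖ := by
  rcases hr.iterate_eq_or_eq_conj ha k with h | h
  · rw [h]
  · rw [h, hr.deriv_conj, Complex.norm_conj]

theorem exists_inverse_branch (ha : r a = conj a) (hδ : 0 < δ)
    (hupper : ∀ z ∈ ball a δ, 0 < z.im)
    (hreg : ∀ z, deriv r z = 0 → ∀ k, r^[k] z ∉ ball a δ) (k : ℕ) :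
    ∃ ψ : ℂ → ℂ, DifferentiableOn ℂ ψ (ball a δ) ∧ (∀ u ∈ ball a δ, r^[k] (ψ u) = u) ∧
      ψ a = r^[k] a ∧ ‖deriv ψ a‖ * ‖deriv r a‖ ^ k = 1 := by
  have haδ : a ∈ ball a δ := mem_ball_self hδ
  induction k with
  | zero => exact ⟨id, differentiableOn_id, by simp, by simp, by simp⟩
  | succ k ih =>
    obtain ⟨ψ, hψ, hψinv, hψa, hψderiv⟩ := ih
    have hψim : ∀ u ∈ ball a δ, (ψ u).im ≠ 0 := fun u hu =>
      hr.im_ne_zero_of_iterate (by rw [hψinv u hu]; exact (hupper u hu).ne')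
    have hperiod : r (r^[k + 1] a) = r^[k] a := by
      rw [← Function.iterate_succ_apply' r, Function.iterate_add_apply r k 2]
      exact congrArg _ (by simp [ha, hr.map_conj])
    obtain ⟨χ, hχ, hχa, hχr⟩ := hr.exists_differentiableOn_lift isOpen_ball (convex_ball a δ) haδ
      hψ hψim (fun u hu z hz h0 => hreg z h0 (k + 1)
        (by rwa [Function.iterate_succ_apply, hz, hψinv u hu])) (hperiod.trans hψa.symm)
    have hχinv : ∀ u ∈ ball a δ, r^[k + 1] (χ u) = u := fun u hu => by
      rw [Function.iterate_succ_apply, hχr u hu, hψinv u hu]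
    refine ⟨χ, hχ, hχinv, hχa, ?_⟩
    have hballa : ball a δ ∈ 𝓝 a := isOpen_ball.mem_nhds haδ
    have hχa_im : (χ a).im ≠ 0 :=
      hr.im_ne_zero_of_iterate (by rw [hχinv a haδ]; exact (hupper a haδ).ne')
    have hchain : deriv ψ a = deriv r (χ a) * deriv χ a := by
      rw [← ((hr.differentiableAt _ hχa_im).hasDerivAt.comp a
        (hχ.differentiableAt hballa).hasDerivAt).deriv]
      exact EventuallyEq.deriv_eq (eventually_of_mem hballa fun u hu => (hχr u hu).symm)
    rw [hchain, norm_mul, hχa, hr.norm_deriv_iterate ha] at hψderiv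
    rw [← hψderiv]
    ring

theorem mapsTo_conj_preimage {D : Set ℂ} (hmap : ∀ z ∈ D, conj (r z) ∈ D) :
    MapsTo r (conj ⁻¹' D) D := fun z hz => by
  simpa [hr.map_conj] using hmap _ hz

/-- The inverse branches of `r^[2 * k]` on the disc fixing `a` omit the reflected disc, so their
derivatives at `a` are bounded. -/
theorem norm_deriv_inverse_branch_le (ha : r a = conj a) (hδ : 0 < δ)
    (hupper : ∀ z ∈ ball a δ, 0 < z.im) (hmap : ∀ z ∈ ball a δ, conj (r z) ∈ ball a δ) {k : ℕ}
    {ψ : ℂ → ℂ} (hψ : DifferentiableOn ℂ ψ (ball a δ))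
    (hψinv : ∀ u ∈ ball a δ, r^[2 * k] (ψ u) = u) (hψa : ψ a = r^[2 * k] a) :
    ‖deriv ψ a‖ ≤ 1 / δ / (δ / 2) * ‖a - conj a‖ ^ 2 := by
  have htwo : MapsTo r^[2] (conj ⁻¹' ball a δ) (conj ⁻¹' ball a δ) := fun z hz =>
    hmap (r z) (hr.mapsTo_conj_preimage hmap hz)
  have hreflect : MapsTo r^[2 * k] (conj ⁻¹' ball a δ) (conj ⁻¹' ball a δ) := by
    rw [Function.iterate_mul]
    exact htwo.iterate k
  have hfar : ∀ u ∈ ball a δ, δ ≤ ‖ψ u - conj a‖ := by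
    intro u hu
    by_contra! hlt
    have hψu : ψ u ∈ conj ⁻¹' ball a δ := by
      rw [mem_preimage, mem_ball_iff_norm, ← Complex.norm_conj]
      simpa using hlt
    have hconj := hupper _ (hreflect hψu)
    rw [hψinv u hu, Complex.conj_im] at hconj
    linarith [hupper u hu]
  have hperiod : r^[2 * k] a = a := by
    rw [Function.iterate_mul]
    exact Function.iterate_fixed (by simp [ha, hr.map_conj]) k
  have hbound := norm_deriv_le_of_forall_le_norm_sub hδ hδ hψ hfar
  rwa [hψa, hperiod] at hbound

/-- Fatou's argument: otherwise all inverse branches would extend to the disc, and their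
derivatives `(r' a)⁻ᵏ` would blow up, contradicting the Cauchy bound. -/
theorem exists_critical_iterate_mem (ha : r a = conj a) (hattr : ‖deriv r a‖ < 1) (hδ : 0 < δ)
    (hupper : ∀ z ∈ ball a δ, 0 < z.im) (hmap : ∀ z ∈ ball a δ, conj (r z) ∈ ball a δ) :
    ∃ z, deriv r z = 0 ∧ ∃ k, r^[k] z ∈ ball a δ := by
  by_contra! hreg
  have hderiv_pos : 0 < ‖deriv r a‖ :=
    norm_pos_iff.2 fun h => hreg a h 0 (mem_ball_self hδ)
  set B := 1 / δ / (δ / 2) * ‖a - conj a‖ ^ 2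
  have hlim : Tendsto (fun k : ℕ => B * (‖deriv r a‖ ^ 2) ^ k) atTop (𝓝 (B * 0)) :=
    (tendsto_pow_atTop_nhds_zero_of_lt_one (by positivity) (by nlinarith)).const_mul B
  rw [mul_zero] at hlim
  obtain ⟨k, hk⟩ := (hlim.eventually (gt_mem_nhds one_pos)).exists
  obtain ⟨ψ, hψ, hψinv, hψa, hψderiv⟩ := hr.exists_inverse_branch ha hδ hupper hreg (2 * k)
  have hbound := hr.norm_deriv_inverse_branch_le ha hδ hupper hmap hψ hψinv hψa
  have : 1 ≤ B * (‖deriv r a‖ ^ 2) ^ k := by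
    rw [← hψderiv, ← pow_mul]
    gcongr
  linarith

theorem exists_critical_upper_iterate_mem (ha : r a = conj a) (hattr : ‖deriv r a‖ < 1)
    (hδ : 0 < δ) (hupper : ∀ z ∈ ball a δ, 0 < z.im)
    (hmap : ∀ z ∈ ball a δ, conj (r z) ∈ ball a δ) :
    ∃ z, 0 < z.im ∧ deriv r z = 0 ∧ ∃ k, r^[k] z ∈ ball a δ ∪ conj ⁻¹' ball a δ := by
  obtain ⟨z, hz, k, hk⟩ := hr.exists_critical_iterate_mem ha hattr hδ hupper hmap
  have him : z.im ≠ 0 := hr.im_ne_zero_of_iterate (hupper _ hk).ne'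
  rcases him.lt_or_gt with hneg | hpos
  · exact ⟨conj z, by simpa using hneg, by rw [hr.deriv_conj, hz, map_zero], k,
      Or.inr (by rwa [mem_preimage, hr.iterate_conj, Complex.conj_conj])⟩
  · exact ⟨z, hpos, hz, k, Or.inl hk⟩

theorem mapsTo_union_conj {D : Set ℂ} (hmap : ∀ z ∈ D, conj (r z) ∈ D) :
    MapsTo r (D ∪ conj ⁻¹' D) (D ∪ conj ⁻¹' D) := by
  rintro z (hz | hz)
  · exact Or.inr (hmap z hz)
  · exact Or.inl (hr.mapsTo_conj_preimage hmap hz)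

end AttractingDisc

theorem eventually_attractingDisc {a : ℂ} (haim : 0 < a.im) (ha : r a = conj a)
    (hattr : ‖deriv r a‖ < 1) :
    ∀ᶠ δ in 𝓝[>] (0 : ℝ), (∀ z ∈ ball a δ, 0 < z.im) ∧ ∀ z ∈ ball a δ, conj (r z) ∈ ball a δ := by
  have hlittle := (hasDerivAt_iff_isLittleO.1
    (hr.differentiableAt a haim.ne').hasDerivAt).def (sub_pos.2 hattr)
  have hupper : ∀ᶠ z : ℂ in 𝓝 a, 0 < z.im :=
    Complex.continuous_im.continuousAt.eventually (lt_mem_nhds haim)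
  obtain ⟨δ₀, hδ₀, hball⟩ := eventually_nhds_iff_ball.1 (hlittle.and hupper)
  filter_upwards [Ioo_mem_nhdsGT hδ₀] with δ hδ
  have hsub := ball_subset_ball (x := a) hδ.2.le
  refine ⟨fun z hz => (hball z (hsub hz)).2, fun z hz => ?_⟩
  have hrem := (hball z (hsub hz)).1
  rw [mem_ball_iff_norm] at hz ⊢
  rw [← Complex.norm_conj, map_sub, Complex.conj_conj, ← ha]
  calc ‖r z - r a‖ ≤ ‖r z - r a - (z - a) • deriv r a‖ + ‖(z - a) • deriv r a‖ :=
        norm_le_norm_sub_add _ _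
    _ ≤ (1 - ‖deriv r a‖) * ‖z - a‖ + ‖z - a‖ * ‖deriv r a‖ := by
        rw [norm_smul]
        gcongr
    _ = ‖z - a‖ := by ring
    _ < δ := hz

/-- Distinct attracting solutions attract distinct critical points, since their attracting discs
can be chosen disjoint. -/
theorem exists_injOn_critical (A : Finset ℂ)
    (hA : ∀ a ∈ A, 0 < a.im ∧ r a = conj a ∧ ‖deriv r a‖ < 1) :
    ∃ f : ℂ → ℂ, InjOn f A ∧ ∀ a ∈ A, 0 < (f a).im ∧ deriv r (f a) = 0 := by
  have hdiscs : ∀ᶠ δ in 𝓝[>] (0 : ℝ), ∀ a ∈ A,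
      (∀ z ∈ ball a δ, 0 < z.im) ∧ ∀ z ∈ ball a δ, conj (r z) ∈ ball a δ :=
    (eventually_all_finset A).2 fun a ha =>
      hr.eventually_attractingDisc (hA a ha).1 (hA a ha).2.1 (hA a ha).2.2
  have hdisj : ∀ᶠ δ in 𝓝[>] (0 : ℝ), ∀ a ∈ A, ∀ b ∈ A, a ≠ b →
      Disjoint (ball a δ) (ball b δ) := by
    refine (eventually_all_finset A).2 fun a _ => (eventually_all_finset A).2 fun b _ => ?_
    by_cases hab : a = b
    · simp [hab]
    · filter_upwards [Ioo_mem_nhdsGT (half_pos (dist_pos.2 hab))] with δ hδ _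
      exact ball_disjoint_ball (by linarith [hδ.2])
  obtain ⟨δ, ⟨hdisc, hdisj⟩, hδ⟩ := ((hdiscs.and hdisj).and self_mem_nhdsWithin).exists
  choose! f hfim hfcrit k hk using fun a ha => hr.exists_critical_upper_iterate_mem (hA a ha).2.1
    (hA a ha).2.2 hδ (hdisc a ha).1 (hdisc a ha).2
  refine ⟨f, fun a ha b hb hab => by_contra fun hne => ?_, fun a ha => ⟨hfim a ha, hfcrit a ha⟩⟩
  have horbit : ∀ c ∈ A, ∀ m, r^[m + k c] (f c) ∈ ball c δ ∪ conj ⁻¹' ball c δ := fun c hc m => by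
    rw [Function.iterate_add_apply]
    exact (hr.mapsTo_union_conj (hdisc c hc).2).iterate m (hk c hc)
  have hwa := horbit a ha (k b)
  have hwb := horbit b hb (k a)
  rw [hab, add_comm] at hwa
  have hopposite : ∀ {c d : ℂ}, c ∈ A → d ∈ A → ∀ w ∈ ball c δ, conj w ∉ ball d δ := by
    intro c d hc hd w hw hw'
    have him := (hdisc d hd).1 _ hw'
    rw [Complex.conj_im] at him
    linarith [(hdisc c hc).1 w hw]
  have hab_disj := disjoint_left.1 (hdisj a ha b hb hne)
  rcases hwa with hwa | hwa <;> rcases hwb with hwb | hwb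
  · exact hab_disj hwa hwb
  · exact hopposite ha hb _ hwa hwb
  · exact hopposite hb ha _ hwb hwa
  · exact hab_disj hwa hwb

end IsRealProper

section PartialFractions

theorem tendsto_sum_div_sub_pow_cobounded {𝕜 ι : Type*} [NormedField 𝕜] [Fintype ι]
    (ε w : ι → 𝕜) {n : ℕ} (hn : n ≠ 0) :
    Tendsto (fun z => ∑ j, ε j / (z - w j) ^ n) (cobounded 𝕜) (𝓝 0) := by
  have hterm (j : ι) : Tendsto (fun z => ε j / (z - w j) ^ n) (cobounded 𝕜) (𝓝 0) := by
    have hinv := ((tendsto_inv₀_cobounded.comp (tendsto_sub_const_cobounded (w j))).pow n).const_mul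
      (ε j)
    simpa [hn, div_eq_mul_inv] using hinv
  simpa using tendsto_finsetSum Finset.univ fun j _ => hterm j

variable {K ι : Type*} [Field K] [Fintype ι] [DecidableEq ι]

theorem sum_div_mul_prod (ε y : ι → K) (hy : ∀ j, y j ≠ 0) :
    (∑ j, ε j / y j) * ∏ j, y j = ∑ j, ε j * ∏ i ∈ Finset.univ.erase j, y i := by
  rw [Finset.sum_mul]
  refine Finset.sum_congr rfl fun j _ => ?_
  rw [← Finset.mul_prod_erase Finset.univ y (Finset.mem_univ j), ← mul_assoc,
    div_mul_cancel₀ _ (hy j)]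

/-- The numerator of the partial fraction `∑ j, ε j / (X - w j)` over the common denominator
`Lagrange.nodal univ w`. -/
noncomputable def partialFractionNumer (ε w : ι → K) : K[X] :=
  ∑ j, C (ε j) * Lagrange.nodal (Finset.univ.erase j) w

theorem eval_partialFractionNumer (ε w : ι → K) {z : K} (hz : ∀ j, z ≠ w j) :
    (partialFractionNumer ε w).eval z =
      (∑ j, ε j / (z - w j)) * (Lagrange.nodal Finset.univ w).eval z := by
  rw [Lagrange.eval_nodal, sum_div_mul_prod _ _ fun j => sub_ne_zero.2 (hz j)]
  simp [partialFractionNumer, eval_finsetSum, Lagrange.eval_nodal]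

theorem eval_partialFractionNumer_node (ε w : ι → K) (j : ι) :
    (partialFractionNumer ε w).eval (w j) = ε j * ∏ i ∈ Finset.univ.erase j, (w j - w i) := by
  rw [partialFractionNumer, eval_finsetSum, Finset.sum_eq_single j]
  · rw [eval_mul, eval_C, Lagrange.eval_nodal]
  · intro i _ hij
    rw [eval_mul, Lagrange.eval_nodal_at_node (by simpa using hij.symm), mul_zero]
  · simp

end PartialFractions

theorem two_mul_card_upper_roots_add_card_le {p : ℝ[X]} (hp : p ≠ 0) (A : Finset ℂ)
    (hA : ∀ z ∈ A, 0 < z.im ∧ aeval z p = 0) (B : Finset ℝ) (hB : ∀ x ∈ B, p.eval x = 0) :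
    2 * A.card + B.card ≤ p.natDegree := by
  classical
  set A' := A.image conj
  set B' := B.image ((↑) : ℝ → ℂ)
  have hAA' : Disjoint A A' := by
    simp only [A', Finset.disjoint_left, Finset.mem_image, not_exists, not_and]
    rintro z hz u hu rfl
    have := (hA _ hz).1
    have := (hA u hu).1
    simp only [Complex.conj_im] at *
    linarith
  have hABB' : Disjoint (A ∪ A') B' := by
    simp only [A', B', Finset.disjoint_left, Finset.mem_union, Finset.mem_image]
    rintro z (hz | ⟨u, hu, rfl⟩) ⟨x, -, hx⟩
    · simpa [← hx] using (hA z hz).1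
    · have := (hA u hu).1
      have := congrArg Complex.im hx
      simp only [Complex.ofReal_im, Complex.conj_im] at this
      linarith
  have hsub : A ∪ A' ∪ B' ⊆ (p.aroots ℂ).toFinset := by
    intro z hz
    simp only [A', B', Finset.mem_union, Finset.mem_image] at hz
    rw [Multiset.mem_toFinset, mem_aroots]
    refine ⟨hp, ?_⟩
    obtain (hz | ⟨u, hu, rfl⟩) | ⟨x, hx, rfl⟩ := hz
    · exact (hA z hz).2
    · rw [aeval_conj, (hA u hu).2, map_zero]
    · simpa [hB x hx] using aeval_algebraMap_apply ℂ x p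
  have hcard := (Finset.card_le_card hsub).trans
    ((Multiset.toFinset_card_le _).trans (card_roots_map_le_natDegree p))
  rwa [Finset.card_union_of_disjoint hABB', Finset.card_union_of_disjoint hAA',
    Finset.card_image_of_injective _ (starRingEnd ℂ).injective,
    Finset.card_image_of_injective _ Complex.ofReal_injective, ← two_mul] at hcard

/-- A gravitational lens with finitely many point masses on the real line, with shear and a constant
shift of the source. Rotating the plane by `i` turns the shear term `-γ z` of the lens equation
into `+γ z` for such a lens, and this is the sign used below. -/
structure CollinearLens (N : ℕ) where
  shear : ℝ
  shift : ℝ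
  mass : Fin N → ℝ
  pos : Fin N → ℝ
  shear_pos : 0 < shear
  mass_pos : ∀ j, 0 < mass j
  pos_strictMono : StrictMono pos

namespace CollinearLens

variable {N : ℕ} (L : CollinearLens N)

/-- The rational function `r` of the lens equation `r z = conj z`; it has junk values at the
masses. -/
noncomputable def lensMap (z : ℂ) : ℂ :=
  L.shear * z + L.shift + ∑ j, (L.mass j : ℂ) / (z - L.pos j)

theorem lensMap_conj (z : ℂ) : L.lensMap (conj z) = conj (L.lensMap z) := by
  simp [lensMap]

theorem ne_pos_of_im_ne_zero {z : ℂ} (hz : z.im ≠ 0) (j : Fin N) : z ≠ L.pos j := by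
  rintro rfl
  exact hz (Complex.ofReal_im _)

theorem hasDerivAt_lensMap {z : ℂ} (hz : ∀ j, z ≠ L.pos j) :
    HasDerivAt L.lensMap (L.shear - ∑ j, (L.mass j : ℂ) / (z - L.pos j) ^ 2) z := by
  have hfrac (j : Fin N) : HasDerivAt (fun z : ℂ => (L.mass j : ℂ) / (z - L.pos j))
      (-((L.mass j : ℂ) / (z - L.pos j) ^ 2)) z := by
    simpa [neg_div] using (hasDerivAt_const z (L.mass j : ℂ)).fun_div
      ((hasDerivAt_id z).sub_const _) (sub_ne_zero.2 (hz j))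
  have hlin : HasDerivAt (fun z : ℂ => (L.shear : ℂ) * z + L.shift) L.shear z := by
    simpa using ((hasDerivAt_id z).const_mul (L.shear : ℂ)).add_const (L.shift : ℂ)
  refine (hlin.fun_add (HasDerivAt.fun_sum fun j (_ : j ∈ Finset.univ) => hfrac j)).congr_deriv ?_
  rw [Finset.sum_neg_distrib, sub_eq_add_neg]

theorem tendsto_lensMap_cobounded : Tendsto L.lensMap (cobounded ℂ) (cobounded ℂ) := by
  have hlin : Tendsto (fun z : ℂ => (L.shear : ℂ) * z) (cobounded ℂ) (cobounded ℂ) :=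
    tendsto_mul_left_cobounded (by exact_mod_cast L.shear_pos.ne')
  have hrest : Tendsto (fun z : ℂ => (L.shift : ℂ) + ∑ j, (L.mass j : ℂ) / (z - L.pos j))
      (cobounded ℂ) (𝓝 (L.shift + 0)) := by
    refine tendsto_const_nhds.add ?_
    simpa using tendsto_sum_div_sub_pow_cobounded (fun j => (L.mass j : ℂ))
      (fun j => (L.pos j : ℂ)) one_ne_zero
  rw [← tendsto_norm_atTop_iff_cobounded] at hlin ⊢
  refine tendsto_atTop_mono (fun z => ?_) (hlin.atTop_add hrest.norm.neg)
  have hle := norm_sub_le (L.lensMap z) (L.shift + ∑ j, (L.mass j : ℂ) / (z - L.pos j))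
  rw [lensMap, add_assoc, add_sub_cancel_right] at hle
  rw [lensMap, add_assoc]
  linarith

/-- The denominator of `lensMap`. -/
noncomputable def denom : ℂ[X] :=
  Lagrange.nodal Finset.univ fun j => (L.pos j : ℂ)

/-- The numerator of `lensMap` over `denom`. -/
noncomputable def numer : ℂ[X] :=
  (C (L.shear : ℂ) * X + C (L.shift : ℂ)) * L.denom +
    partialFractionNumer (fun j => (L.mass j : ℂ)) fun j => (L.pos j : ℂ)

theorem eval_denom_ne_zero {z : ℂ} (hz : ∀ j, z ≠ L.pos j) : L.denom.eval z ≠ 0 :=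
  Lagrange.eval_nodal_not_at_node fun j _ => hz j

theorem eval_denom_pos (j : Fin N) : L.denom.eval (L.pos j : ℂ) = 0 :=
  Lagrange.eval_nodal_at_node (v := fun j => (L.pos j : ℂ)) (Finset.mem_univ j)

theorem eval_numer {z : ℂ} (hz : ∀ j, z ≠ L.pos j) :
    L.numer.eval z = L.lensMap z * L.denom.eval z := by
  simp only [numer, eval_add, eval_mul, eval_C, eval_X, eval_partialFractionNumer _ _ hz, lensMap]
  rw [denom]
  ring

theorem eval_numer_pos_ne_zero (j : Fin N) : L.numer.eval (L.pos j : ℂ) ≠ 0 := by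
  have hnode := eval_partialFractionNumer_node (fun j => (L.mass j : ℂ)) (fun j => (L.pos j : ℂ)) j
  rw [numer, eval_add, eval_mul, eval_denom_pos, mul_zero, zero_add, hnode]
  refine mul_ne_zero (by exact_mod_cast (L.mass_pos j).ne')
    (Finset.prod_ne_zero_iff.2 fun i hi => ?_)
  exact sub_ne_zero.2 fun h =>
    Finset.ne_of_mem_erase hi (L.pos_strictMono.injective (Complex.ofReal_injective h)).symm

theorem im_lensMap_eq_zero {z : ℂ} (hz : z.im = 0) : (L.lensMap z).im = 0 := by
  rw [← Complex.conj_eq_iff_im, ← lensMap_conj, Complex.conj_eq_iff_im.2 hz]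

theorem lensMap_mem_iff {K : Set ℂ} (hK : ∀ t ∈ K, t.im ≠ 0) (z : ℂ) :
    L.lensMap z ∈ K ↔ ∃ t ∈ K, L.numer.eval z = t * L.denom.eval z := by
  constructor
  · intro h
    exact ⟨_, h, L.eval_numer
      (L.ne_pos_of_im_ne_zero fun h0 => hK _ h (L.im_lensMap_eq_zero h0))⟩
  · rintro ⟨t, ht, h⟩
    have hz (j : Fin N) : z ≠ L.pos j := by
      rintro rfl
      rw [eval_denom_pos, mul_zero] at h
      exact L.eval_numer_pos_ne_zero j h
    rw [L.eval_numer hz] at h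
    rwa [mul_right_cancel₀ (L.eval_denom_ne_zero hz) h]

theorem isCompact_preimage_lensMap {K : Set ℂ} (hK : IsCompact K) (hKim : ∀ t ∈ K, t.im ≠ 0) :
    IsCompact (L.lensMap ⁻¹' K) := by
  have himage : L.lensMap ⁻¹' K =
      Prod.snd '' {p : K × ℂ | L.numer.eval p.2 = p.1 * L.denom.eval p.2} := by
    ext z
    simp [L.lensMap_mem_iff hKim]
  refine Metric.isCompact_of_isClosed_isBounded ?_ ?_
  · have : CompactSpace K := isCompact_iff_compactSpace.1 hK
    rw [himage]
    exact isClosedMap_snd_of_compactSpace _ (isClosed_eq (by fun_prop) (by fun_prop))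
  · rw [← isCobounded_compl_iff]
    exact L.tendsto_lensMap_cobounded hK.isBounded.compl

theorem isRealProper_lensMap : IsRealProper L.lensMap where
  map_conj := L.lensMap_conj
  differentiableAt _ hz :=
    (L.hasDerivAt_lensMap (L.ne_pos_of_im_ne_zero hz)).differentiableAt
  isProperMap := by
    have hcont : ContinuousOn L.lensMap (L.lensMap ⁻¹' {z | z.im ≠ 0}) := fun z hz =>
      (L.hasDerivAt_lensMap (L.ne_pos_of_im_ne_zero fun h =>
        hz (L.im_lensMap_eq_zero h))).continuousAt.continuousWithinAt
    refine isProperMap_iff_isCompact_preimage.2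
      ⟨hcont.mapsToRestrict (mapsTo_preimage _ _), fun K hK => ?_⟩
    rw [Subtype.isCompact_iff] at hK ⊢
    convert L.isCompact_preimage_lensMap hK (by simp +contextual) using 1
    ext z
    simp [restrictPreimage, MapsTo.restrict, Subtype.map]

/-- The polynomial `numer - a • denom`, that is, the numerator of `lensMap - a`, for `a` the
position of the `j`-th mass. -/
noncomputable def shiftedNumer (j : Fin N) : ℂ[X] :=
  L.numer - C (L.pos j : ℂ) * L.denom

/-- The numerator of `lensMap (lensMap z) - z`, whose roots contain all non-real solutions of the
lens equation. -/
noncomputable def iterateNumer : ℂ[X] :=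
  (C (L.shear : ℂ) * L.numer + (C (L.shift : ℂ) - X) * L.denom) * ∏ j, L.shiftedNumer j +
    L.denom ^ 2 * ∑ j, C (L.mass j : ℂ) * ∏ i ∈ Finset.univ.erase j, L.shiftedNumer i

theorem iterateNumer_ne_zero [NeZero N] : L.iterateNumer ≠ 0 := by
  intro h
  have heval := congrArg (eval (L.pos 0 : ℂ)) h
  simp [iterateNumer, shiftedNumer, eval_prod, L.eval_denom_pos, L.eval_numer_pos_ne_zero,
    L.shear_pos.ne'] at heval

theorem eval_iterateNumer {z : ℂ} (hz : z.im ≠ 0) (hr : (L.lensMap z).im ≠ 0) :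
    L.iterateNumer.eval z = (L.lensMap (L.lensMap z) - z) * L.denom.eval z *
      ∏ j, (L.shiftedNumer j).eval z := by
  have hd : L.denom.eval z ≠ 0 := L.eval_denom_ne_zero (L.ne_pos_of_im_ne_zero hz)
  have hn : L.numer.eval z = L.lensMap z * L.denom.eval z :=
    L.eval_numer (L.ne_pos_of_im_ne_zero hz)
  have hshift (j : Fin N) :
      (L.shiftedNumer j).eval z = (L.lensMap z - L.pos j) * L.denom.eval z := by
    simp only [shiftedNumer, eval_sub, eval_mul, eval_C, hn]
    ring
  have hclear := sum_div_mul_prod (fun j => (L.mass j : ℂ)) (fun j => (L.shiftedNumer j).eval z)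
    fun j => by
      rw [hshift]
      exact mul_ne_zero (sub_ne_zero.2 (L.ne_pos_of_im_ne_zero hr j)) hd
  have hsum : (∑ j, (L.mass j : ℂ) / (L.shiftedNumer j).eval z) * L.denom.eval z =
      L.lensMap (L.lensMap z) - L.shear * L.lensMap z - L.shift := by
    rw [lensMap, Finset.sum_mul]
    simp only [hshift, ← div_div, div_mul_cancel₀ _ hd]
    ring
  simp only [iterateNumer, eval_add, eval_mul, eval_prod, eval_finsetSum, eval_C, eval_X, eval_sub,
    eval_pow, hn, ← hclear]
  linear_combination (L.denom.eval z * ∏ j, (L.shiftedNumer j).eval z) * hsum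

theorem finite_nonreal_solutions [NeZero N] :
    {z : ℂ | z.im ≠ 0 ∧ L.lensMap z = conj z}.Finite := by
  refine (L.iterateNumer.roots.toFinset.finite_toSet).subset ?_
  rintro z ⟨hz, hr⟩
  rw [Finset.mem_coe, Multiset.mem_toFinset, mem_roots L.iterateNumer_ne_zero, IsRoot.def,
    L.eval_iterateNumer hz (by simpa [hr] using hz), hr, lensMap_conj, hr, Complex.conj_conj,
    sub_self, zero_mul, zero_mul]

theorem tendsto_shear_sub_sum_sq {l : Filter ℝ} (hl : l ≤ cobounded ℝ) :
    Tendsto (fun x => L.shear - ∑ j, L.mass j / (x - L.pos j) ^ 2) l (𝓝 L.shear) := by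
  simpa using ((tendsto_sum_div_sub_pow_cobounded L.mass L.pos two_ne_zero).mono_left hl).const_sub
    L.shear

/-- The numerator of the derivative of `lensMap`. -/
noncomputable def criticalPoly : ℝ[X] :=
  C L.shear * Lagrange.nodal Finset.univ L.pos ^ 2 -
    ∑ j, C (L.mass j) * Lagrange.nodal (Finset.univ.erase j) L.pos ^ 2

theorem natDegree_criticalPoly_le : L.criticalPoly.natDegree ≤ 2 * N := by
  have hterm (b : ℝ) (s : Finset (Fin N)) :
      (C b * Lagrange.nodal s L.pos ^ 2).natDegree ≤ 2 * N := by
    refine (natDegree_C_mul_le _ _).trans (natDegree_pow_le.trans ?_)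
    rw [Lagrange.natDegree_nodal]
    exact Nat.mul_le_mul_left 2 (s.card_le_univ.trans (by simp))
  exact (natDegree_sub_le _ _).trans
    (max_le (hterm _ _) (natDegree_sum_le_of_forall_le _ _ fun j _ => hterm _ _))

theorem aeval_criticalPoly {K : Type*} [Field K] [Algebra ℝ K] {z : K}
    (hz : ∀ j, z ≠ algebraMap ℝ K (L.pos j)) :
    aeval z L.criticalPoly = (algebraMap ℝ K L.shear - ∑ j, algebraMap ℝ K (L.mass j) /
      (z - algebraMap ℝ K (L.pos j)) ^ 2) * (∏ j, (z - algebraMap ℝ K (L.pos j))) ^ 2 := by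
  rw [sub_mul, ← Finset.prod_pow, sum_div_mul_prod _ _ fun j =>
    pow_ne_zero 2 (sub_ne_zero.2 (hz j))]
  simp [criticalPoly, Lagrange.nodal, map_prod, Finset.prod_pow]

theorem eval_criticalPoly_pos_neg (j : Fin N) : L.criticalPoly.eval (L.pos j) < 0 := by
  have hsum : 0 < ∑ i, L.mass i *
      (Lagrange.nodal (Finset.univ.erase i) L.pos).eval (L.pos j) ^ 2 := by
    refine Finset.sum_pos' (fun i _ => mul_nonneg (L.mass_pos i).le (sq_nonneg _))
      ⟨j, Finset.mem_univ _, mul_pos (L.mass_pos j) (sq_pos_of_ne_zero ?_)⟩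
    exact Lagrange.eval_nodal_not_at_node fun i hi h =>
      Finset.ne_of_mem_erase hi (L.pos_strictMono.injective h).symm
  simpa [criticalPoly, eval_finsetSum, Lagrange.eval_nodal_at_node (Finset.mem_univ j)] using hsum

theorem eval_criticalPoly_pos {x : ℝ} (hx : ∀ j, x ≠ L.pos j)
    (h : 0 < L.shear - ∑ j, L.mass j / (x - L.pos j) ^ 2) : 0 < L.criticalPoly.eval x := by
  have haeval := L.aeval_criticalPoly (K := ℝ) hx
  rw [coe_aeval_eq_eval] at haeval
  rw [haeval]
  exact mul_pos h (sq_pos_of_ne_zero (Finset.prod_ne_zero_iff.2 fun j _ => sub_ne_zero.2 (hx j)))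

theorem exists_criticalPoly_root_gt [NeZero N] :
    ∃ x, (∀ j, L.pos j < x) ∧ L.criticalPoly.eval x = 0 := by
  obtain ⟨m, hm⟩ := Finite.exists_max L.pos
  have hlim := L.tendsto_shear_sub_sum_sq (l := atTop) (by simp)
  obtain ⟨x, hx, hpos⟩ := ((eventually_gt_atTop (L.pos m)).and
    (hlim.eventually (lt_mem_nhds L.shear_pos))).exists
  obtain ⟨y, hy, hy0⟩ := intermediate_value_Ioo hx.le L.criticalPoly.continuous.continuousOn
    ⟨L.eval_criticalPoly_pos_neg m,
      L.eval_criticalPoly_pos (fun j => ((hm j).trans_lt hx).ne') hpos⟩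
  exact ⟨y, fun j => (hm j).trans_lt hy.1, hy0⟩

theorem exists_criticalPoly_root_lt [NeZero N] :
    ∃ x, (∀ j, x < L.pos j) ∧ L.criticalPoly.eval x = 0 := by
  obtain ⟨m, hm⟩ := Finite.exists_min L.pos
  have hlim := L.tendsto_shear_sub_sum_sq (l := atBot) (by simp)
  obtain ⟨x, hx, hpos⟩ := ((eventually_lt_atBot (L.pos m)).and
    (hlim.eventually (lt_mem_nhds L.shear_pos))).exists
  obtain ⟨y, hy, hy0⟩ := intermediate_value_Ioo' hx.le L.criticalPoly.continuous.continuousOn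
    ⟨L.eval_criticalPoly_pos_neg m,
      L.eval_criticalPoly_pos (fun j => (hx.trans_le (hm j)).ne) hpos⟩
  exact ⟨y, fun j => hy.2.trans_le (hm j), hy0⟩

theorem card_upper_critical_le [NeZero N] (A : Finset ℂ)
    (hA : ∀ z ∈ A, 0 < z.im ∧ deriv L.lensMap z = 0) : A.card ≤ N - 1 := by
  obtain ⟨x, hx, hx0⟩ := L.exists_criticalPoly_root_gt
  obtain ⟨y, hy, hy0⟩ := L.exists_criticalPoly_root_lt
  have hne : L.criticalPoly ≠ 0 := fun h => by
    simpa [h] using L.eval_criticalPoly_pos_neg 0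
  have hAroot : ∀ z ∈ A, 0 < z.im ∧ aeval z L.criticalPoly = 0 := by
    intro z hz
    have hzpos := L.ne_pos_of_im_ne_zero (hA z hz).1.ne'
    have hd := (L.hasDerivAt_lensMap hzpos).deriv.symm.trans (hA z hz).2
    refine ⟨(hA z hz).1, (L.aeval_criticalPoly hzpos).trans ?_⟩
    simp only [Complex.coe_algebraMap, hd, zero_mul]
  have hcard := two_mul_card_upper_roots_add_card_le hne A hAroot {x, y} (by simp [hx0, hy0])
  rw [Finset.card_pair ((hy 0).trans (hx 0)).ne'] at hcard
  have := L.natDegree_criticalPoly_le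
  lia

theorem card_attracting_le [NeZero N] (A : Finset ℂ)
    (hA : ∀ a ∈ A, 0 < a.im ∧ L.lensMap a = conj a ∧ ‖deriv L.lensMap a‖ < 1) :
    A.card ≤ N - 1 := by
  classical
  obtain ⟨f, hf, hcrit⟩ := L.isRealProper_lensMap.exists_injOn_critical A hA
  rw [← Finset.card_image_of_injOn hf]
  exact L.card_upper_critical_le _ (by simpa using hcrit)

end CollinearLens

section RealFunctions

variable {φ : ℝ → ℝ}

theorem forall_pos_or_forall_neg_of_isPreconnected {X : Type*} [TopologicalSpace X] {f : X → ℝ}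
    {s : Set X} (hs : IsPreconnected s) (hf : ContinuousOn f s) (hne : ∀ x ∈ s, f x ≠ 0) :
    (∀ x ∈ s, 0 < f x) ∨ ∀ x ∈ s, f x < 0 := by
  by_contra! h
  obtain ⟨⟨a, ha, ha0⟩, b, hb, hb0⟩ := h
  obtain ⟨c, hc, hc0⟩ := hs.intermediate_value ha hb hf ⟨ha0, hb0⟩
  exact hne c hc hc0

theorem deriv_nonpos_of_eventually_le_nhdsLT {t : ℝ} (h : ∀ᶠ u in 𝓝[<] t, φ t ≤ φ u) :
    deriv φ t ≤ 0 := by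
  by_cases hd : DifferentiableAt ℝ φ t
  · have hslope := (hasDerivAt_iff_tendsto_slope.1 hd.hasDerivAt).mono_left
      (nhdsLT_le_nhdsNE t)
    refine le_of_tendsto hslope ?_
    filter_upwards [h, self_mem_nhdsWithin] with u hu hut
    rw [slope_def_field]
    exact div_nonpos_of_nonneg_of_nonpos (sub_nonneg.2 hu) (sub_nonpos.2 (le_of_lt hut))
  · exact (deriv_zero_of_not_differentiableAt hd).le

theorem exists_eq_and_deriv_nonpos_of_lt {x y s : ℝ} (hφ : ContinuousOn φ (Icc x y)) (hxy : x ≤ y)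
    (hx : s < φ x) (hy : φ y < s) : ∃ t ∈ Ioo x y, φ t = s ∧ deriv φ t ≤ 0 := by
  -- The first time at which `φ` reaches `s`.
  have hclosed : IsClosed (Icc x y ∩ φ ⁻¹' Iic s) :=
    hφ.preimage_isClosed_of_isClosed isClosed_Icc isClosed_Iic
  obtain ⟨t, ⟨htmem, hts⟩, hleast⟩ := (isCompact_Icc.of_isClosed_subset hclosed
    inter_subset_left).exists_isLeast ⟨y, right_mem_Icc.2 hxy, hy.le⟩
  have hxt : x < t := htmem.1.lt_of_ne fun h => hx.not_ge (h ▸ hts)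
  have hbefore : ∀ u ∈ Ico x t, s < φ u := fun u hu => by
    by_contra! hus
    exact hu.2.not_ge (hleast ⟨⟨hu.1, hu.2.le.trans htmem.2⟩, hus⟩)
  have hev : ∀ᶠ u in 𝓝[<] t, s < φ u := by
    filter_upwards [Ico_mem_nhdsLT hxt] with u hu using hbefore u hu
  have heq : φ t = s := by
    refine le_antisymm hts (ge_of_tendsto (x := 𝓝[<] t) ?_ (hev.mono fun _ => le_of_lt))
    refine (hφ t htmem).tendsto.mono_left (le_inf inf_le_left ?_)
    exact le_principal_iff.2 (mem_of_superset (Ico_mem_nhdsLT hxt) fun u hu =>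
      ⟨hu.1, hu.2.le.trans htmem.2⟩)
  refine ⟨t, ⟨hxt, htmem.2.lt_of_ne fun h => (h ▸ heq).not_lt hy⟩, heq,
    deriv_nonpos_of_eventually_le_nhdsLT (hev.mono fun u hu => heq ▸ hu.le)⟩

theorem volume_image_setOf_deriv_eq_zero {O : Set ℝ} (hO : IsOpen O)
    (hd : DifferentiableOn ℝ φ O) : MeasureTheory.volume (φ '' {x ∈ O | deriv φ x = 0}) = 0 := by
  refine MeasureTheory.addHaar_image_eq_zero_of_det_fderivWithin_eq_zero MeasureTheory.volume
    (f' := fun _ => 0) (fun x hx => ?_) (fun x _ => by simp [ContinuousLinearMap.det])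
  have hderiv := (hd.differentiableAt (hO.mem_nhds hx.1)).hasDerivAt
  rw [hx.2] at hderiv
  simpa using hderiv.hasFDerivAt.hasFDerivWithinAt

theorem exists_mem_Ioo_forall_deriv_ne_zero {O : Set ℝ} (hO : IsOpen O)
    (hd : DifferentiableOn ℝ φ O) {a b : ℝ} (hab : a < b) :
    ∃ s ∈ Ioo a b, ∀ t ∈ O, φ t = s → deriv φ t ≠ 0 := by
  by_contra! h
  have hsub : Ioo a b ⊆ φ '' {x ∈ O | deriv φ x = 0} := fun s hs => by
    obtain ⟨t, htO, hts, ht0⟩ := h s hs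
    exact ⟨t, ⟨htO, ht0⟩, hts⟩
  have hnull := MeasureTheory.measure_mono_null hsub (volume_image_setOf_deriv_eq_zero hO hd)
  rw [Real.volume_Ioo, ENNReal.ofReal_eq_zero] at hnull
  linarith

theorem exists_level_of_eventually_neg_right {O : Set ℝ} (hφ : Continuous φ) (hO : IsOpen O)
    (hd : DifferentiableOn ℝ φ O) (T : Finset ℝ)
    (hT : ∀ x ∈ T, x ∈ O ∧ φ x = 0 ∧ ∀ᶠ y in 𝓝[>] x, φ y < 0) :
    ∃ (s : ℝ) (T' : Finset ℝ), T'.card = T.card ∧ ∀ t ∈ T', t ∈ O ∧ φ t = s ∧ deriv φ t < 0 := by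
  classical
  obtain ⟨η, hη, hnear⟩ : ∃ η > 0, ∀ x ∈ T, ∀ y ∈ Ioc x (x + η), y ∈ O ∧ φ y < 0 := by
    have hev : ∀ᶠ η in 𝓝[>] (0 : ℝ), ∀ x ∈ T, ∀ y ∈ Ioc x (x + η), y ∈ O ∧ φ y < 0 := by
      refine (eventually_all_finset T).2 fun x hx => ?_
      have hmem : ∀ᶠ y in 𝓝[>] x, y ∈ O ∧ φ y < 0 :=
        (eventually_nhdsWithin_of_eventually_nhds (hO.mem_nhds (hT x hx).1)).and (hT x hx).2.2
      obtain ⟨u, hxu, hu⟩ := mem_nhdsGT_iff_exists_Ioo_subset.1 hmem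
      filter_upwards [Ioo_mem_nhdsGT (sub_pos.2 hxu)] with η hη y hy
      exact hu ⟨hy.1, hy.2.trans_lt (by linarith [hη.2])⟩
    obtain ⟨η, h, hη⟩ := (hev.and self_mem_nhdsWithin).exists
    exact ⟨η, hη, h⟩
  obtain ⟨l, hl, hlT⟩ : ∃ l < 0, ∀ x ∈ T, φ (x + η) ≤ l := by
    have hev : ∀ᶠ l in 𝓝[<] (0 : ℝ), ∀ x ∈ T, φ (x + η) ≤ l :=
      (eventually_all_finset T).2 fun x hx => nhdsWithin_le_nhds
        (eventually_ge_nhds (hnear x hx _ ⟨by linarith, le_rfl⟩).2)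
    obtain ⟨l, h, hl⟩ := (hev.and self_mem_nhdsWithin).exists
    exact ⟨l, hl, h⟩
  obtain ⟨s, hs, hreg⟩ := exists_mem_Ioo_forall_deriv_ne_zero hO hd hl
  have hcross : ∀ x ∈ T, ∃ t ∈ Ioo x (x + η), φ t = s ∧ deriv φ t < 0 := fun x hx => by
    obtain ⟨t, ht, hts, hle⟩ := exists_eq_and_deriv_nonpos_of_lt hφ.continuousOn
      (le_add_of_nonneg_right hη.le) (hs.2.trans_eq (hT x hx).2.1.symm)
      ((hlT x hx).trans_lt hs.1)
    exact ⟨t, ht, hts, hle.lt_of_ne (hreg t (hnear x hx t ⟨ht.1, ht.2.le⟩).1 hts)⟩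
  choose! f hf hfs hfd using hcross
  have hmono : StrictMonoOn f T := fun x hx y hy hxy => by
    have hgap : x + η < y := by
      by_contra! hle
      exact (hnear x hx y ⟨hxy, hle⟩).2.ne (hT y hy).2.1
    linarith [(hf x hx).2, (hf y hy).1]
  refine ⟨s, T.image f, Finset.card_image_of_injOn hmono.injOn, fun t ht => ?_⟩
  obtain ⟨x, hx, rfl⟩ := Finset.mem_image.1 ht
  exact ⟨(hnear x hx _ ⟨(hf x hx).1, (hf x hx).2.le⟩).1, hfs x hx, hfd x hx⟩

theorem exists_level_of_eventually_pos_left {O : Set ℝ} (hφ : Continuous φ) (hO : IsOpen O)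
    (hd : DifferentiableOn ℝ φ O) (T : Finset ℝ)
    (hT : ∀ x ∈ T, x ∈ O ∧ φ x = 0 ∧ ∀ᶠ y in 𝓝[<] x, 0 < φ y) :
    ∃ (s : ℝ) (T' : Finset ℝ), T'.card = T.card ∧ ∀ t ∈ T', t ∈ O ∧ φ t = s ∧ deriv φ t < 0 := by
  classical
  have hTneg : ∀ x ∈ T.image Neg.neg, x ∈ -O ∧ -φ (-x) = 0 ∧ ∀ᶠ y in 𝓝[>] x, -φ (-y) < 0 := by
    intro x hx
    obtain ⟨y, hy, rfl⟩ := Finset.mem_image.1 hx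
    obtain ⟨hyO, hy0, hev⟩ := hT y hy
    refine ⟨by simpa using hyO, by simpa using hy0, ?_⟩
    filter_upwards [(tendsto_neg_nhdsGT_neg (a := y)).eventually hev] with u hu
    linarith
  obtain ⟨s, T', hcard, hT'⟩ := exists_level_of_eventually_neg_right (φ := fun x => -φ (-x))
    (by fun_prop) hO.neg (hd.comp (differentiableOn_neg _) fun _ hx => hx).neg _ hTneg
  refine ⟨-s, T'.image Neg.neg, ?_, fun t ht => ?_⟩
  · rw [Finset.card_image_of_injective _ neg_injective, hcard,
      Finset.card_image_of_injective _ neg_injective]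
  · obtain ⟨y, hy, rfl⟩ := Finset.mem_image.1 ht
    obtain ⟨hyO, hys, hyd⟩ := hT' y hy
    refine ⟨hyO, by rw [← hys, neg_neg], ?_⟩
    simpa [deriv.fun_neg, deriv_comp_neg] using hyd

section SignChanges

variable (hφ : Continuous φ) (hbot : ∀ᶠ x in atBot, 0 < φ x) (htop : ∀ᶠ x in atTop, φ x < 0)
include hφ

include hbot in
theorem eventually_pos_left_of_forall_lt_ne_zero {z : ℝ} (hz : ∀ u < z, φ u ≠ 0) :
    ∀ᶠ y in 𝓝[<] z, 0 < φ y := by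
  obtain ⟨a, ha, haz⟩ := (hbot.and (eventually_lt_atBot z)).exists
  rcases forall_pos_or_forall_neg_of_isPreconnected isPreconnected_Iio hφ.continuousOn hz with
    hpos | hneg
  · exact eventually_mem_nhdsWithin.mono hpos
  · exact absurd ha (hneg a haz).not_gt

include htop in
theorem eventually_neg_right_of_forall_gt_ne_zero {z : ℝ} (hz : ∀ u > z, φ u ≠ 0) :
    ∀ᶠ y in 𝓝[>] z, φ y < 0 := by
  obtain ⟨a, ha, haz⟩ := (htop.and (eventually_gt_atTop z)).exists
  rcases forall_pos_or_forall_neg_of_isPreconnected isPreconnected_Ioi hφ.continuousOn hz with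
    hpos | hneg
  · exact absurd ha (hpos a haz).not_gt
  · exact eventually_mem_nhdsWithin.mono hneg

theorem eventually_neg_right_or_eventually_pos_left {z z' : ℝ} (hzz' : z < z')
    (hne : ∀ u ∈ Ioo z z', φ u ≠ 0) :
    (∀ᶠ y in 𝓝[>] z, φ y < 0) ∨ ∀ᶠ y in 𝓝[<] z', 0 < φ y := by
  rcases forall_pos_or_forall_neg_of_isPreconnected isPreconnected_Ioo hφ.continuousOn hne with
    hpos | hneg
  · exact .inr (mem_of_superset (Ioo_mem_nhdsLT hzz') hpos)
  · exact .inl (mem_of_superset (Ioo_mem_nhdsGT hzz') hneg)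

include htop in
theorem exists_next_zero_eventually_pos_left (Z : Finset ℝ) (hZ : ∀ x, x ∈ Z ↔ φ x = 0) {z : ℝ}
    (hz : ¬ ∀ᶠ y in 𝓝[>] z, φ y < 0) :
    ∃ z' ∈ Z, (∀ᶠ y in 𝓝[<] z', 0 < φ y) ∧ z < z' ∧ ∀ u ∈ Z, z < u → z' ≤ u := by
  have hW : {u ∈ Z | z < u}.Nonempty := by
    by_contra! hW
    exact hz (eventually_neg_right_of_forall_gt_ne_zero hφ htop fun u hzu hu =>
      Finset.eq_empty_iff_forall_notMem.1 hW u (Finset.mem_filter.2 ⟨(hZ u).2 hu, hzu⟩))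
  obtain ⟨hz'Z, hzz'⟩ := Finset.mem_filter.1 (Finset.min'_mem _ hW)
  have hmin : ∀ u ∈ Z, z < u → Finset.min' _ hW ≤ u := fun u hu hzu =>
    Finset.min'_le _ u (Finset.mem_filter.2 ⟨hu, hzu⟩)
  refine ⟨_, hz'Z, ?_, hzz', hmin⟩
  exact (eventually_neg_right_or_eventually_pos_left hφ hzz' fun u hu hu0 =>
    hu.2.not_ge (hmin u ((hZ u).2 hu0) hu.1)).resolve_left hz

open Classical in
include hbot htop in
theorem card_zeros_add_one_le (Z : Finset ℝ) (hZ : ∀ x, x ∈ Z ↔ φ x = 0) :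
    Z.card + 1 ≤ {x ∈ Z | ∀ᶠ y in 𝓝[>] x, φ y < 0}.card +
      {x ∈ Z | ∀ᶠ y in 𝓝[<] x, 0 < φ y}.card := by
  set R := {x ∈ Z | ∀ᶠ y in 𝓝[>] x, φ y < 0}
  set L := {x ∈ Z | ∀ᶠ y in 𝓝[<] x, 0 < φ y}
  have hZne : Z.Nonempty := by
    obtain ⟨a, ha⟩ := hbot.exists
    obtain ⟨b, hb⟩ := htop.exists
    obtain ⟨u, -, hu⟩ := isPreconnected_univ.intermediate_value (mem_univ b) (mem_univ a)
      hφ.continuousOn ⟨hb.le, ha.le⟩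
    exact ⟨u, (hZ u).2 hu⟩
  set m := Z.min' hZne
  have hmL : m ∈ L := by
    refine Finset.mem_filter.2 ⟨Z.min'_mem hZne, ?_⟩
    exact eventually_pos_left_of_forall_lt_ne_zero hφ hbot fun u hum hu =>
      hum.not_ge (Z.min'_le u ((hZ u).2 hu))
  -- Sending each zero outside `R` to the next zero injects `Z \ R` into `L \ {m}`.
  have hnext : ∀ z ∈ Z \ R, ∃ z' ∈ L, z < z' ∧ ∀ u ∈ Z, z < u → z' ≤ u := fun z hz => by
    obtain ⟨hzZ, hzR⟩ := Finset.mem_sdiff.1 hz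
    obtain ⟨z', hz'Z, hpos, hz'⟩ := exists_next_zero_eventually_pos_left hφ htop Z hZ
      fun h => hzR (Finset.mem_filter.2 ⟨hzZ, h⟩)
    exact ⟨z', Finset.mem_filter.2 ⟨hz'Z, hpos⟩, hz'⟩
  choose! f hfL hlt hmin using hnext
  have hmono : StrictMonoOn f ↑(Z \ R) := fun x hx y hy hxy =>
    (hmin x hx y (Finset.mem_sdiff.1 hy).1 hxy).trans_lt (hlt y hy)
  have hcard : (Z \ R).card ≤ (L.erase m).card :=
    Finset.card_le_card_of_injOn f (fun z hz => Finset.mem_erase.2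
      ⟨((Z.min'_le z (Finset.mem_sdiff.1 hz).1).trans_lt (hlt z hz)).ne', hfL z hz⟩) hmono.injOn
  rw [Finset.card_erase_of_mem hmL] at hcard
  have := Finset.card_pos.2 ⟨m, hmL⟩
  have := Finset.le_card_sdiff R Z
  lia

open Classical in
include hbot htop in
theorem card_zeros_mem_add_one_le {O : Set ℝ} (hO : IsOpen O) (hd : DifferentiableOn ℝ φ O) {M : ℕ}
    (hM : ∀ (s : ℝ) (T : Finset ℝ), (∀ t ∈ T, t ∈ O ∧ φ t = s ∧ deriv φ t < 0) → T.card ≤ M)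
    (Z : Finset ℝ) (hZ : ∀ x, x ∈ Z ↔ φ x = 0) :
    {x ∈ Z | x ∈ O}.card + 1 ≤ 2 * M + {x ∈ Z | x ∉ O}.card := by
  have hsplit (p : ℝ → Prop) (hp : {x ∈ {x ∈ Z | x ∈ O} | p x}.card ≤ M) :
      {x ∈ Z | p x}.card ≤ M + {x ∈ Z | x ∉ O}.card := by
    have hsub : {x ∈ Z | p x} ⊆ {x ∈ {x ∈ Z | x ∈ O} | p x} ∪ {x ∈ Z | x ∉ O} := by
      grind
    exact (Finset.card_le_card hsub).trans ((Finset.card_union_le _ _).trans (by lia))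
  have hright := hsplit (fun x => ∀ᶠ y in 𝓝[>] x, φ y < 0) (by
    obtain ⟨s, T, hT, hTs⟩ := exists_level_of_eventually_neg_right hφ hO hd
      {x ∈ {x ∈ Z | x ∈ O} | ∀ᶠ y in 𝓝[>] x, φ y < 0} (by simp +contextual [hZ])
    exact hT ▸ hM s T hTs)
  have hleft := hsplit (fun x => ∀ᶠ y in 𝓝[<] x, 0 < φ y) (by
    obtain ⟨s, T, hT, hTs⟩ := exists_level_of_eventually_pos_left hφ hO hd
      {x ∈ {x ∈ Z | x ∈ O} | ∀ᶠ y in 𝓝[<] x, 0 < φ y} (by simp +contextual [hZ])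
    exact hT ▸ hM s T hTs)
  have hZcard := card_zeros_add_one_le hφ hbot htop Z hZ
  have := Finset.card_filter_add_card_filter_not (s := Z) (· ∈ O)
  lia

theorem exists_finset_zeros_of_alternating {m : ℕ} {xs : ℕ → ℝ} (hxs : StrictMonoOn xs (Iic m))
    (halt : ∀ k < m, φ (xs k) * φ (xs (k + 1)) < 0) :
    ∃ T : Finset ℝ, T.card = m ∧ ∀ t ∈ T, φ t = 0 ∧ t ∈ Icc (xs 0) (xs m) := by
  have hzero (k : Fin m) : ∃ t ∈ Ioo (xs k) (xs (k + 1)), φ t = 0 := by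
    have hlt : xs k < xs (k + 1) := hxs (mem_Iic.2 k.2.le) (mem_Iic.2 k.2) k.1.lt_succ_self
    rcases mul_neg_iff.1 (halt k k.2) with ⟨hpos, hneg⟩ | ⟨hneg, hpos⟩
    · exact intermediate_value_Ioo' hlt.le hφ.continuousOn ⟨hneg, hpos⟩
    · exact intermediate_value_Ioo hlt.le hφ.continuousOn ⟨hneg, hpos⟩
  choose t ht ht0 using hzero
  have hmono : StrictMono t := fun k l hkl =>
    (ht k).2.trans_le ((hxs.monotoneOn (mem_Iic.2 k.2) (mem_Iic.2 l.2.le) hkl).trans (ht l).1.le)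
  refine ⟨Finset.univ.image t, by simp [Finset.card_image_of_injective _ hmono.injective], ?_⟩
  simp only [Finset.mem_image, Finset.mem_univ, true_and]
  rintro _ ⟨k, rfl⟩
  exact ⟨ht0 k, (hxs.monotoneOn (mem_Iic.2 m.zero_le) (mem_Iic.2 k.2.le) k.1.zero_le).trans
    (ht k).1.le, (ht k).2.le.trans (hxs.monotoneOn (mem_Iic.2 k.2) (mem_Iic.2 le_rfl) k.2)⟩

end SignChanges

end RealFunctions

namespace CollinearLens

variable {N : ℕ} (L : CollinearLens N) {x y v : ℝ} {z : ℂ}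

/-- The sum `∑ j, ε j / ‖z - w j‖ ^ 2` at a point `z` with `z.re = x` and `z.im ^ 2 = v`, which
controls the imaginary part of `lensMap`. -/
noncomputable def kernelSum (x v : ℝ) : ℝ := ∑ j, L.mass j / ((x - L.pos j) ^ 2 + v)

/-- The real parts of the points in the upper half-plane at which the imaginary parts of
`L.lensMap z` and `conj z` agree. These points form arcs, one over each component. -/
def arcDomain : Set ℝ := {x | ∃ v > 0, L.kernelSum x v = 1 + L.shear}

open Classical in
/-- The squared height of the arc point over `x`, extended by zero outside `arcDomain`. -/
noncomputable def arcHeightSq (x : ℝ) : ℝ :=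
  if h : x ∈ L.arcDomain then Classical.choose h else 0

/-- The point of the arc over `x`, which is `x` itself outside `arcDomain`. -/
noncomputable def arcPoint (x : ℝ) : ℂ := ⟨x, √(L.arcHeightSq x)⟩

/-- The remaining (real) part of the lens equation along the arcs. -/
noncomputable def arcDisp (x : ℝ) : ℝ := (L.lensMap (L.arcPoint x)).re - x

/-- The lens equation on the real line: `L.lensMap x = x + L.realDisp x`. -/
noncomputable def realDisp (x : ℝ) : ℝ :=
  -(1 - L.shear) * x + L.shift + ∑ j, L.mass j / (x - L.pos j)

theorem lensMap_ofReal (x : ℝ) : L.lensMap x = (x + L.realDisp x : ℝ) := by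
  simp only [lensMap, realDisp]
  push_cast
  ring

theorem normSq_sub_pos (z : ℂ) (j : Fin N) :
    Complex.normSq (z - L.pos j) = (z.re - L.pos j) ^ 2 + z.im ^ 2 := by
  simp [Complex.normSq_apply, sq]

theorem im_lensMap (z : ℂ) :
    (L.lensMap z).im = z.im * (L.shear - L.kernelSum z.re (z.im ^ 2)) := by
  have hfrac (j : Fin N) : ((L.mass j : ℂ) / (z - L.pos j)).im =
      -(z.im * (L.mass j / ((z.re - L.pos j) ^ 2 + z.im ^ 2))) := by
    simp only [Complex.div_im, Complex.ofReal_im, Complex.sub_re, Complex.ofReal_re, zero_mul,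
      normSq_sub_pos, zero_div, Complex.sub_im, sub_zero, zero_sub, neg_inj]
    ring
  simp only [lensMap, Complex.add_im, Complex.im_sum, hfrac, Finset.sum_neg_distrib, kernelSum,
    mul_sub, Finset.mul_sum, Complex.mul_im, Complex.ofReal_re, Complex.ofReal_im, zero_mul,
    add_zero]
  ring

theorem arcHeightSq_pos (hx : x ∈ L.arcDomain) : 0 < L.arcHeightSq x := by
  rw [arcHeightSq, dif_pos hx]
  exact (Classical.choose_spec hx).1

theorem kernelSum_arcHeightSq (hx : x ∈ L.arcDomain) :
    L.kernelSum x (L.arcHeightSq x) = 1 + L.shear := by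
  rw [arcHeightSq, dif_pos hx]
  exact (Classical.choose_spec hx).2

theorem arcHeightSq_of_notMem (hx : x ∉ L.arcDomain) : L.arcHeightSq x = 0 := dif_neg hx

theorem arcHeightSq_nonneg (x : ℝ) : 0 ≤ L.arcHeightSq x := by
  by_cases hx : x ∈ L.arcDomain
  · exact (L.arcHeightSq_pos hx).le
  · exact (L.arcHeightSq_of_notMem hx).ge

theorem mem_arcDomain_iff : x ∈ L.arcDomain ↔ 0 < L.arcHeightSq x :=
  ⟨L.arcHeightSq_pos, fun h => by_contra fun hx => h.ne' (L.arcHeightSq_of_notMem hx)⟩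

theorem arcPoint_of_notMem (hx : x ∉ L.arcDomain) : L.arcPoint x = x := by
  simp [arcPoint, L.arcHeightSq_of_notMem hx, Complex.ext_iff]

theorem arcDisp_of_notMem (hx : x ∉ L.arcDomain) : L.arcDisp x = L.realDisp x := by
  rw [arcDisp, L.arcPoint_of_notMem hx, lensMap_ofReal, Complex.ofReal_re, add_sub_cancel_left]

theorem im_arcPoint_pos (hx : x ∈ L.arcDomain) : 0 < (L.arcPoint x).im :=
  Real.sqrt_pos.2 (L.arcHeightSq_pos hx)

theorem im_arcPoint_nonneg (x : ℝ) : 0 ≤ (L.arcPoint x).im := Real.sqrt_nonneg _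

theorem im_arcPoint_sq (x : ℝ) : (L.arcPoint x).im ^ 2 = L.arcHeightSq x :=
  Real.sq_sqrt (L.arcHeightSq_nonneg x)

theorem lensMap_arcPoint (x : ℝ) :
    L.lensMap (L.arcPoint x) = conj (L.arcPoint x) + L.arcDisp x := by
  apply Complex.ext
  · simp [arcDisp, arcPoint]
  · by_cases hx : x ∈ L.arcDomain
    · rw [im_lensMap, im_arcPoint_sq]
      change _ * (L.shear - L.kernelSum x _) = _
      rw [L.kernelSum_arcHeightSq hx]
      simp
    · rw [L.arcPoint_of_notMem hx, lensMap_ofReal]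
      simp

theorem arcDisp_sub_shift (s x : ℝ) :
    arcDisp {L with shift := L.shift - s} x = L.arcDisp x - s := by
  change (lensMap {L with shift := L.shift - s} (L.arcPoint x)).re - x = _
  simp only [arcDisp, lensMap, Complex.add_re, Complex.ofReal_re]
  ring

theorem continuous_kernelSum_left (hv : 0 < v) : Continuous fun x => L.kernelSum x v := by
  unfold kernelSum
  exact continuous_finsetSum _ fun j _ => .div (by fun_prop) (by fun_prop) fun x => by positivity

theorem continuousOn_kernelSum_right (x : ℝ) : ContinuousOn (L.kernelSum x) (Ioi 0) := by
  unfold kernelSum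
  refine continuousOn_finsetSum _ fun j _ => .div (by fun_prop) (by fun_prop) fun v hv => ?_
  exact (add_pos_of_nonneg_of_pos (sq_nonneg _) hv).ne'

theorem tendsto_kernelSum_atTop (x : ℝ) : Tendsto (L.kernelSum x) atTop (𝓝 0) := by
  unfold kernelSum
  rw [← Finset.sum_const_zero (ι := Fin N) (s := Finset.univ)]
  exact tendsto_finsetSum _ fun j _ =>
    (tendsto_atTop_add_const_left _ _ tendsto_id).const_div_atTop _

theorem kernelSum_lt_of_notMem (hx : x ∉ L.arcDomain) (hv : 0 < v) :
    L.kernelSum x v < 1 + L.shear := by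
  by_contra! hle
  have hlevel : 0 < 1 + L.shear := by linarith [L.shear_pos]
  obtain ⟨u, hu, hvu⟩ := (((L.tendsto_kernelSum_atTop x).eventually_lt_const hlevel).and
    (eventually_ge_atTop v)).exists
  obtain ⟨t, ht, heq⟩ := intermediate_value_Icc' hvu ((L.continuousOn_kernelSum_right x).mono
    fun t ht => hv.trans_le ht.1) ⟨hu.le, hle⟩
  exact hx ⟨t, hv.trans_le ht.1, heq⟩

theorem mem_arcDomain_of_lt_kernelSum_zero (hx : ∀ j, x ≠ L.pos j)
    (hlt : 1 + L.shear < L.kernelSum x 0) : x ∈ L.arcDomain := by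
  by_contra hmem
  have hcont : ContinuousAt (L.kernelSum x) 0 := by
    unfold kernelSum
    refine tendsto_finsetSum _ fun j _ => ContinuousAt.div (by fun_prop) (by fun_prop) ?_
    simpa using sub_ne_zero.2 (hx j)
  obtain ⟨v, hv, hv0⟩ := ((hcont.eventually_const_lt hlt).filter_mono nhdsWithin_le_nhds
    |>.and self_mem_nhdsWithin).exists (f := 𝓝[>] 0)
  exact hv.not_gt (L.kernelSum_lt_of_notMem hmem hv0)

theorem mass_div_le_kernelSum (hv : 0 ≤ v) (j : Fin N) :
    L.mass j / ((x - L.pos j) ^ 2 + v) ≤ L.kernelSum x v := by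
  refine Finset.single_le_sum (f := fun i => L.mass i / ((x - L.pos i) ^ 2 + v))
    (fun i _ => ?_) (Finset.mem_univ j)
  have := (L.mass_pos i).le
  positivity

section NeZero

variable [NeZero N]

theorem strictAntiOn_kernelSum (x : ℝ) : StrictAntiOn (L.kernelSum x) (Ioi 0) := by
  intro v hv v' _ h
  have hv : 0 < v := hv
  refine Finset.sum_lt_sum_of_nonempty Finset.univ_nonempty fun j _ => ?_
  exact div_lt_div_of_pos_left (L.mass_pos j) (by positivity) (by linarith)

theorem lt_arcHeightSq_iff (hv : 0 < v) :
    v < L.arcHeightSq x ↔ 1 + L.shear < L.kernelSum x v := by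
  by_cases hx : x ∈ L.arcDomain
  · rw [← L.kernelSum_arcHeightSq hx,
      (L.strictAntiOn_kernelSum x).lt_iff_gt (L.arcHeightSq_pos hx) hv]
  · exact iff_of_false (L.arcHeightSq_of_notMem hx ▸ hv.not_gt)
      (L.kernelSum_lt_of_notMem hx hv).not_gt

theorem arcHeightSq_lt_iff (hv : 0 < v) :
    L.arcHeightSq x < v ↔ L.kernelSum x v < 1 + L.shear := by
  by_cases hx : x ∈ L.arcDomain
  · rw [← L.kernelSum_arcHeightSq hx,
      (L.strictAntiOn_kernelSum x).lt_iff_gt hv (L.arcHeightSq_pos hx)]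
  · simp [L.arcHeightSq_of_notMem hx, hv, L.kernelSum_lt_of_notMem hx hv]

theorem arcHeightSq_eq_iff (hv : 0 < v) :
    L.arcHeightSq x = v ↔ L.kernelSum x v = 1 + L.shear := by
  rw [eq_iff_le_not_lt, eq_iff_le_not_lt, L.arcHeightSq_lt_iff hv, ← not_lt, ← not_lt,
    L.lt_arcHeightSq_iff hv]

theorem continuous_arcHeightSq : Continuous L.arcHeightSq := by
  refine continuous_iff_continuousAt.2 fun x =>
    tendsto_order.2 ⟨fun a ha => ?_, fun a ha => ?_⟩
  · rcases lt_or_ge a 0 with ha0 | ha0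
    · exact .of_forall fun y => ha0.trans_le (L.arcHeightSq_nonneg y)
    · obtain ⟨v, hav, hv⟩ := exists_between ha
      have hv0 : 0 < v := ha0.trans_lt hav
      filter_upwards [(L.continuous_kernelSum_left hv0).continuousAt.eventually_const_lt
        ((L.lt_arcHeightSq_iff hv0).1 hv)] with y hy
      exact hav.trans ((L.lt_arcHeightSq_iff hv0).2 hy)
  · have ha0 : 0 < a := (L.arcHeightSq_nonneg x).trans_lt ha
    filter_upwards [(L.continuous_kernelSum_left ha0).continuousAt.eventually_lt_const
      ((L.arcHeightSq_lt_iff ha0).1 ha)] with y hy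
    exact (L.arcHeightSq_lt_iff ha0).2 hy

theorem isOpen_arcDomain : IsOpen L.arcDomain := by
  have : L.arcDomain = {x | 0 < L.arcHeightSq x} := ext fun x => L.mem_arcDomain_iff
  exact this ▸ isOpen_lt continuous_const L.continuous_arcHeightSq

theorem pos_mem_arcDomain (j : Fin N) : L.pos j ∈ L.arcDomain := by
  have hlevel : 0 < 2 * (1 + L.shear) := by linarith [L.shear_pos]
  have hv : 0 < L.mass j / (2 * (1 + L.shear)) := div_pos (L.mass_pos j) hlevel
  rw [mem_arcDomain_iff]
  refine hv.trans ((L.lt_arcHeightSq_iff hv).2 ?_)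
  calc 1 + L.shear < 2 * (1 + L.shear) := by linarith
    _ = L.mass j / ((L.pos j - L.pos j) ^ 2 + L.mass j / (2 * (1 + L.shear))) := by
      rw [sub_self, zero_pow two_ne_zero, zero_add, div_div_cancel₀ (L.mass_pos j).ne']
    _ ≤ _ := L.mass_div_le_kernelSum hv.le j

theorem sq_add_arcHeightSq_pos (x : ℝ) (j : Fin N) :
    0 < (x - L.pos j) ^ 2 + L.arcHeightSq x := by
  rcases eq_or_ne x (L.pos j) with rfl | hne
  · exact add_pos_of_nonneg_of_pos (sq_nonneg _) (L.arcHeightSq_pos (L.pos_mem_arcDomain j))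
  · exact add_pos_of_pos_of_nonneg (sq_pos_of_ne_zero (sub_ne_zero.2 hne)) (L.arcHeightSq_nonneg x)

theorem arcPoint_ne_pos (x : ℝ) (j : Fin N) : L.arcPoint x ≠ L.pos j := by
  rw [← sub_ne_zero, ← Complex.normSq_pos, normSq_sub_pos, im_arcPoint_sq]
  exact L.sq_add_arcHeightSq_pos x j

theorem continuous_arcPoint : Continuous L.arcPoint :=
  Complex.equivRealProdCLM.symm.continuous.comp
    (continuous_id.prodMk L.continuous_arcHeightSq.sqrt)

theorem continuous_arcDisp : Continuous L.arcDisp := by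
  have hcomp : Continuous fun x => L.lensMap (L.arcPoint x) :=
    continuous_iff_continuousAt.2 fun x =>
      (L.hasDerivAt_lensMap (L.arcPoint_ne_pos x)).continuousAt.comp
        L.continuous_arcPoint.continuousAt
  exact (Complex.continuous_re.comp hcomp).sub continuous_id

theorem lensMap_eq_conj_add_iff (hz : 0 < z.im) (t : ℝ) :
    L.lensMap z = conj z + t ↔ L.arcPoint z.re = z ∧ L.arcDisp z.re = t := by
  have him : (L.lensMap z).im = -z.im ↔ L.arcPoint z.re = z := by
    rw [im_lensMap, neg_eq_neg_one_mul, mul_comm, mul_left_inj' hz.ne', Complex.ext_iff,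
      and_iff_right (by rfl : (L.arcPoint z.re).re = z.re),
      ← sq_eq_sq₀ (L.im_arcPoint_nonneg _) hz.le, im_arcPoint_sq,
      L.arcHeightSq_eq_iff (by positivity)]
    constructor <;> intro h <;> linarith
  rw [Complex.ext_iff, Complex.add_re, Complex.add_im, Complex.ofReal_re, Complex.ofReal_im,
    add_zero, Complex.conj_re, Complex.conj_im, him, and_comm]
  refine and_congr_right fun h => ?_
  rw [arcDisp, h, sub_eq_iff_eq_add']

theorem lensMap_eq_conj_iff (hz : 0 < z.im) :
    L.lensMap z = conj z ↔ L.arcPoint z.re = z ∧ L.arcDisp z.re = 0 := by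
  simpa using L.lensMap_eq_conj_add_iff hz 0

theorem arcHeightSq_sub_mul (hx : x ∈ L.arcDomain) (hy : y ∈ L.arcDomain) :
    (L.arcHeightSq y - L.arcHeightSq x) * ∑ j, L.mass j /
        (((x - L.pos j) ^ 2 + L.arcHeightSq x) * ((y - L.pos j) ^ 2 + L.arcHeightSq y)) =
      -(∑ j, L.mass j * (x + y - 2 * L.pos j) /
        (((x - L.pos j) ^ 2 + L.arcHeightSq x) * ((y - L.pos j) ^ 2 + L.arcHeightSq y))) *
          (y - x) := by
  have hdiff : L.kernelSum x (L.arcHeightSq x) - L.kernelSum y (L.arcHeightSq y) = 0 := by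
    rw [L.kernelSum_arcHeightSq hx, L.kernelSum_arcHeightSq hy, sub_self]
  rw [← sub_eq_zero, ← hdiff, kernelSum, kernelSum, neg_mul, sub_neg_eq_add, Finset.mul_sum,
    Finset.sum_mul, ← Finset.sum_add_distrib, ← Finset.sum_sub_distrib]
  refine Finset.sum_congr rfl fun j _ => ?_
  have := (L.sq_add_arcHeightSq_pos x j).ne'
  have := (L.sq_add_arcHeightSq_pos y j).ne'
  field_simp
  ring

theorem differentiableAt_arcHeightSq (hx : x ∈ L.arcDomain) :
    DifferentiableAt ℝ L.arcHeightSq x := by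
  have hV := L.continuous_arcHeightSq
  have hden (y : ℝ) (j : Fin N) : 0 <
      ((x - L.pos j) ^ 2 + L.arcHeightSq x) * ((y - L.pos j) ^ 2 + L.arcHeightSq y) :=
    mul_pos (L.sq_add_arcHeightSq_pos x j) (L.sq_add_arcHeightSq_pos y j)
  have hsum (y : ℝ) : 0 < ∑ j, L.mass j /
      (((x - L.pos j) ^ 2 + L.arcHeightSq x) * ((y - L.pos j) ^ 2 + L.arcHeightSq y)) :=
    Finset.sum_pos (fun j _ => div_pos (L.mass_pos j) (hden y j)) Finset.univ_nonempty
  have hcont : Continuous fun y => -(∑ j, L.mass j * (x + y - 2 * L.pos j) /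
      (((x - L.pos j) ^ 2 + L.arcHeightSq x) * ((y - L.pos j) ^ 2 + L.arcHeightSq y))) /
      ∑ j, L.mass j /
        (((x - L.pos j) ^ 2 + L.arcHeightSq x) * ((y - L.pos j) ^ 2 + L.arcHeightSq y)) :=
    .div (.neg (continuous_finsetSum _ fun j _ =>
        .div (by fun_prop) (by fun_prop) fun y => (hden y j).ne'))
      (continuous_finsetSum _ fun j _ =>
        .div (by fun_prop) (by fun_prop) fun y => (hden y j).ne')
      fun y => (hsum y).ne'
  refine (hasDerivAt_iff_tendsto_slope.2 (((hcont.tendsto x).mono_left nhdsWithin_le_nhds).congr'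
    ?_)).differentiableAt
  filter_upwards [self_mem_nhdsWithin,
    mem_nhdsWithin_of_mem_nhds (L.isOpen_arcDomain.mem_nhds hx)] with y hne hy
  rw [slope_def_field, div_eq_div_iff (hsum y).ne' (sub_ne_zero.2 hne), L.arcHeightSq_sub_mul hx hy]

theorem exists_hasDerivAt_arcPoint (hx : x ∈ L.arcDomain) :
    ∃ η : ℝ, HasDerivAt L.arcPoint ⟨1, η⟩ x := by
  have him := ((L.differentiableAt_arcHeightSq hx).sqrt (L.arcHeightSq_pos hx).ne').hasDerivAt
  exact ⟨_, Complex.equivRealProdCLM.symm.toContinuousLinearMap.hasFDerivAt.comp_hasDerivAt x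
    ((hasDerivAt_id x).prodMk him)⟩

theorem differentiableOn_arcDisp : DifferentiableOn ℝ L.arcDisp L.arcDomain := by
  intro x hx
  obtain ⟨η, hη⟩ := L.exists_hasDerivAt_arcPoint hx
  have hcomp := (L.hasDerivAt_lensMap (L.arcPoint_ne_pos x)).comp x hη
  exact (((Complex.reCLM.differentiableAt.comp x hcomp.differentiableAt).sub
    differentiableAt_id)).differentiableWithinAt

theorem exists_deriv_lensMap_mul_arcPoint (hx : x ∈ L.arcDomain) :
    ∃ η : ℝ, deriv L.lensMap (L.arcPoint x) * ⟨1, η⟩ = ⟨1 + deriv L.arcDisp x, -η⟩ := by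
  obtain ⟨η, hη⟩ := L.exists_hasDerivAt_arcPoint hx
  have hO := L.isOpen_arcDomain.mem_nhds hx
  have hleft := (L.hasDerivAt_lensMap (L.arcPoint_ne_pos x)).differentiableAt.hasDerivAt.comp x hη
  have hright := (Complex.conjCLE.toContinuousLinearMap.hasFDerivAt.comp_hasDerivAt x hη).add
    ((L.differentiableOn_arcDisp.differentiableAt hO).hasDerivAt.ofReal_comp)
  have heq := (hright.congr_of_eventuallyEq (f₁ := L.lensMap ∘ L.arcPoint)
    (.of_forall L.lensMap_arcPoint)).unique hleft
  exact ⟨η, heq.symm.trans (by simp [Complex.ext_iff])⟩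

theorem neg_one_lt_re_deriv_lensMap_arcPoint (hx : x ∈ L.arcDomain) :
    -1 < (deriv L.lensMap (L.arcPoint x)).re := by
  have hgap (j : Fin N) :
      ((L.mass j : ℂ) / (L.arcPoint x - L.pos j) ^ 2).re <
        L.mass j / ((x - L.pos j) ^ 2 + L.arcHeightSq x) := by
    have hre : ((L.arcPoint x - L.pos j) ^ 2).re = (x - L.pos j) ^ 2 - L.arcHeightSq x := by
      rw [← im_arcPoint_sq, sq, Complex.mul_re]
      simp [arcPoint, sq]
    have hden := L.sq_add_arcHeightSq_pos x j
    rw [Complex.div_re, Complex.ofReal_re, Complex.ofReal_im, zero_mul, zero_div, add_zero,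
      map_pow, normSq_sub_pos, im_arcPoint_sq, hre,
      div_lt_div_iff₀ (by exact pow_pos hden 2) hden]
    change _ * ((x - L.pos j) ^ 2 + L.arcHeightSq x) < _ * ((x - L.pos j) ^ 2 + L.arcHeightSq x) ^ 2
    nlinarith [mul_pos (mul_pos (L.mass_pos j) hden) (L.arcHeightSq_pos hx)]
  have hsum := Finset.sum_lt_sum_of_nonempty Finset.univ_nonempty fun j _ => hgap j
  have hlevel : ∑ j, L.mass j / ((x - L.pos j) ^ 2 + L.arcHeightSq x) = 1 + L.shear :=
    L.kernelSum_arcHeightSq hx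
  rw [(L.hasDerivAt_lensMap (L.arcPoint_ne_pos x)).deriv, Complex.sub_re, Complex.ofReal_re,
    Complex.re_sum]
  linarith

theorem norm_deriv_lensMap_arcPoint_lt_one (hx : x ∈ L.arcDomain) (hneg : deriv L.arcDisp x < 0) :
    ‖deriv L.lensMap (L.arcPoint x)‖ < 1 := by
  obtain ⟨η, hη⟩ := L.exists_deriv_lensMap_mul_arcPoint hx
  have hre := L.neg_one_lt_re_deriv_lensMap_arcPoint hx
  generalize deriv L.lensMap (L.arcPoint x) = d at *
  generalize deriv L.arcDisp x = δ at *
  obtain ⟨hδ, hi⟩ := Complex.ext_iff.1 hη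
  simp only [Complex.mul_re, Complex.mul_im, mul_one] at hδ hi
  have hprod : (1 + d.re) * δ = ‖d‖ ^ 2 - 1 := by
    rw [← Complex.normSq_eq_norm_sq, Complex.normSq_apply]
    linear_combination -(1 + d.re) * hδ - d.im * hi
  nlinarith [norm_nonneg d]

end NeZero

theorem tendsto_realDisp_sub (L : CollinearLens N) :
    Tendsto (fun x => L.realDisp x - (-(1 - L.shear) * x)) (cobounded ℝ) (𝓝 L.shift) := by
  have := (tendsto_sum_div_sub_pow_cobounded L.mass L.pos one_ne_zero).const_add L.shift
  simp only [pow_one, add_zero] at this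
  exact this.congr fun x => by rw [realDisp]; ring

theorem eventually_notMem_arcDomain : ∀ᶠ x in cobounded ℝ, x ∉ L.arcDomain := by
  have hlevel : 0 < 1 + L.shear := by linarith [L.shear_pos]
  have hne : ∀ᶠ x in cobounded ℝ, ∀ j, x ≠ L.pos j :=
    eventually_all.2 fun j => eventually_ne_cobounded _
  filter_upwards [hne, (tendsto_sum_div_sub_pow_cobounded L.mass L.pos
    two_ne_zero).eventually_lt_const hlevel] with x hne hlt ⟨v, hv, heq⟩
  refine hlt.not_ge (heq.symm.trans_le (Finset.sum_le_sum fun j _ => ?_))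
  have := sq_pos_of_ne_zero (sub_ne_zero.2 (hne j))
  exact div_le_div_of_nonneg_left (L.mass_pos j).le this (by linarith)

theorem eventually_realDisp_pos_atBot (hshear : L.shear < 1) :
    ∀ᶠ x in atBot, 0 < L.realDisp x := by
  have hlim := L.tendsto_realDisp_sub.mono_left IsOrderBornology.atBot_le_cobounded
  have := (tendsto_id.const_mul_atBot_of_neg (by linarith : -(1 - L.shear) < 0)).atTop_add hlim
  filter_upwards [this.eventually_gt_atTop 0] with x hx
  simpa using hx

theorem eventually_realDisp_neg_atTop (hshear : L.shear < 1) :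
    ∀ᶠ x in atTop, L.realDisp x < 0 := by
  have hlim := L.tendsto_realDisp_sub.mono_left IsOrderBornology.atTop_le_cobounded
  have := (tendsto_id.const_mul_atTop_of_neg (by linarith : -(1 - L.shear) < 0)).atBot_add hlim
  filter_upwards [this.eventually_lt_atBot 0] with x hx
  simpa using hx

theorem eventually_arcDisp_pos_atBot (hshear : L.shear < 1) :
    ∀ᶠ x in atBot, 0 < L.arcDisp x := by
  filter_upwards [L.eventually_realDisp_pos_atBot hshear,
    L.eventually_notMem_arcDomain.filter_mono IsOrderBornology.atBot_le_cobounded] with x hpos hx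
  rwa [L.arcDisp_of_notMem hx]

theorem eventually_arcDisp_neg_atTop (hshear : L.shear < 1) :
    ∀ᶠ x in atTop, L.arcDisp x < 0 := by
  filter_upwards [L.eventually_realDisp_neg_atTop hshear,
    L.eventually_notMem_arcDomain.filter_mono IsOrderBornology.atTop_le_cobounded] with x hneg hx
  rwa [L.arcDisp_of_notMem hx]

end CollinearLens

namespace CollinearLens

variable {N : ℕ} (L : CollinearLens N) {x y : ℝ}

/-- The number of masses to the left of `x`. -/
noncomputable def nodeIndex (x : ℝ) : ℕ := {j | L.pos j < x}.ncard

/-- The real solutions of the lens equation. -/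
def realZeros : Set ℝ := {x | (∀ j, x ≠ L.pos j) ∧ L.realDisp x = 0}

/-- The solutions of the lens equation in the upper half-plane. -/
def upperSolutions : Set ℂ := {z | 0 < z.im ∧ L.lensMap z = conj z}

/-- All solutions of the lens equation. -/
def solutions : Set ℂ := {z | (∀ j, z ≠ L.pos j) ∧ L.lensMap z = conj z}

theorem pos_lt_iff_lt_nodeIndex {j : Fin N} : L.pos j < x ↔ (j : ℕ) < L.nodeIndex x := by
  constructor
  · intro h
    have hsub : Iic j ⊆ {i | L.pos i < x} := fun i hi => (L.pos_strictMono.monotone hi).trans_lt h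
    calc (j : ℕ) < (Iic j).ncard := by simp [ncard_eq_toFinset_card']
      _ ≤ L.nodeIndex x := ncard_le_ncard hsub
  · intro h
    by_contra! hle
    have hsub : {i | L.pos i < x} ⊆ Iio j := fun i hi =>
      L.pos_strictMono.lt_iff_lt.1 (lt_of_lt_of_le hi hle)
    refine h.not_ge ?_
    calc L.nodeIndex x ≤ (Iio j).ncard := ncard_le_ncard hsub
      _ = j := by simp [ncard_eq_toFinset_card']

theorem nodeIndex_le (x : ℝ) : L.nodeIndex x ≤ N :=
  (ncard_le_card _).trans_eq (by simp)

theorem nodeIndex_eq {k : ℕ} (hk : k ≤ N) (h : ∀ j : Fin N, L.pos j < x ↔ (j : ℕ) < k) :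
    L.nodeIndex x = k := by
  simp only [nodeIndex, h]
  rw [ncard_eq_toFinset_card', toFinset_ofPred, Fin.card_filter_val_lt, min_eq_right hk]

theorem realDisp_lt_realDisp (hshear : L.shear < 1) (hxy : x < y)
    (h : ∀ j, 0 < (x - L.pos j) * (y - L.pos j)) : L.realDisp y < L.realDisp x := by
  have hsum : ∑ j, L.mass j / (y - L.pos j) ≤ ∑ j, L.mass j / (x - L.pos j) := by
    refine Finset.sum_le_sum fun j _ => sub_nonneg.1 ?_
    rw [div_sub_div _ _ (left_ne_zero_of_mul (h j).ne') (right_ne_zero_of_mul (h j).ne')]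
    exact div_nonneg (by nlinarith [L.mass_pos j]) (h j).le
  have := mul_lt_mul_of_pos_left hxy (sub_pos.2 hshear)
  simp only [realDisp]
  linarith

theorem sub_pos_mul_sub_pos (hx : ∀ j, x ≠ L.pos j) (hy : ∀ j, y ≠ L.pos j)
    (hidx : L.nodeIndex x = L.nodeIndex y) (j : Fin N) : 0 < (x - L.pos j) * (y - L.pos j) := by
  have hiff : L.pos j < x ↔ L.pos j < y := by
    rw [pos_lt_iff_lt_nodeIndex, pos_lt_iff_lt_nodeIndex, hidx]
  rcases lt_or_gt_of_ne (hx j) with h | h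
  · have hyj : y < L.pos j := (not_lt.1 (mt hiff.2 h.not_gt)).lt_of_ne (hy j)
    exact mul_pos_of_neg_of_neg (sub_neg.2 h) (sub_neg.2 hyj)
  · exact mul_pos (sub_pos.2 h) (sub_pos.2 (hiff.1 h))

theorem injOn_nodeIndex_realZeros (hshear : L.shear < 1) : InjOn L.nodeIndex L.realZeros := by
  intro x hx y hy hidx
  rcases lt_trichotomy x y with h | h | h
  · have := L.realDisp_lt_realDisp hshear h (L.sub_pos_mul_sub_pos hx.1 hy.1 hidx)
    exact absurd this (by rw [hx.2, hy.2]; exact lt_irrefl 0)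
  · exact h
  · have := L.realDisp_lt_realDisp hshear h (L.sub_pos_mul_sub_pos hy.1 hx.1 hidx.symm)
    exact absurd this (by rw [hx.2, hy.2]; exact lt_irrefl 0)

theorem continuousAt_realDisp (hx : ∀ j, x ≠ L.pos j) : ContinuousAt L.realDisp x := by
  unfold realDisp
  refine ContinuousAt.add (by fun_prop) (tendsto_finsetSum _ fun j _ => ?_)
  exact ContinuousAt.div (by fun_prop) (by fun_prop) (sub_ne_zero.2 (hx j))

theorem eventually_sub_pos_mul_realDisp_pos (j : Fin N) :
    ∀ᶠ x in 𝓝[≠] L.pos j, 0 < (x - L.pos j) * L.realDisp x := by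
  have hcont : ContinuousAt (fun x => (x - L.pos j) * (-(1 - L.shear) * x + L.shift +
      ∑ i ∈ Finset.univ.erase j, L.mass i / (x - L.pos i)) + L.mass j) (L.pos j) := by
    refine .add (.mul (by fun_prop) (.add (by fun_prop) (tendsto_finsetSum _ fun i hi => ?_)))
      (by fun_prop)
    exact ContinuousAt.div (by fun_prop) (by fun_prop)
      (sub_ne_zero.2 (L.pos_strictMono.injective.ne (Finset.ne_of_mem_erase hi).symm))
  have hev := hcont.eventually_const_lt (u := 0) (by simpa using L.mass_pos j)
  filter_upwards [hev.filter_mono nhdsWithin_le_nhds, self_mem_nhdsWithin] with x hx hne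
  rw [realDisp, ← Finset.add_sum_erase _ _ (Finset.mem_univ j)]
  refine hx.trans_eq ?_
  linear_combination -mul_div_cancel₀ (L.mass j) (sub_ne_zero.2 hne)

theorem eventually_nodeIndex_nhdsGT (j : Fin N) :
    ∀ᶠ x in 𝓝[>] L.pos j, (∀ i, x ≠ L.pos i) ∧ L.nodeIndex x = j + 1 := by
  have hright : ∀ᶠ x in 𝓝[>] L.pos j, ∀ i, j < i → x < L.pos i :=
    eventually_all.2 fun i => eventually_imp_distrib_left.2 fun hi =>
      (eventually_lt_nhds (L.pos_strictMono hi)).filter_mono nhdsWithin_le_nhds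
  filter_upwards [hright, self_mem_nhdsWithin] with x hx hjx
  have hleft (i : Fin N) (hi : i ≤ j) : L.pos i < x :=
    (L.pos_strictMono.monotone hi).trans_lt hjx
  refine ⟨fun i => ?_, L.nodeIndex_eq j.2 fun i => ?_⟩
  · exact (le_or_gt i j).elim (fun hi => (hleft i hi).ne') fun hi => (hx i hi).ne
  · rw [Nat.lt_succ_iff, ← Fin.le_def]
    exact ⟨fun h => not_lt.1 fun hi => h.not_gt (hx i hi), hleft i⟩

theorem eventually_nodeIndex_nhdsLT (j : Fin N) :
    ∀ᶠ x in 𝓝[<] L.pos j, (∀ i, x ≠ L.pos i) ∧ L.nodeIndex x = j := by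
  have hleft : ∀ᶠ x in 𝓝[<] L.pos j, ∀ i, i < j → L.pos i < x :=
    eventually_all.2 fun i => eventually_imp_distrib_left.2 fun hi =>
      (eventually_gt_nhds (L.pos_strictMono hi)).filter_mono nhdsWithin_le_nhds
  filter_upwards [hleft, self_mem_nhdsWithin] with x hx hxj
  have hright (i : Fin N) (hi : j ≤ i) : x < L.pos i :=
    lt_of_lt_of_le hxj (L.pos_strictMono.monotone hi)
  refine ⟨fun i => ?_, L.nodeIndex_eq j.2.le fun i => ?_⟩
  · exact (lt_or_ge i j).elim (fun hi => (hx i hi).ne') fun hi => (hright i hi).ne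
  · rw [← Fin.lt_def]
    exact ⟨fun h => not_le.1 fun hi => h.not_gt (hright i hi), hx i⟩

theorem exists_nodeIndex_eq_succ_realDisp_pos (j : Fin N) :
    ∃ x, (∀ i, x ≠ L.pos i) ∧ L.nodeIndex x = j + 1 ∧ 0 < L.realDisp x := by
  have hsign := (L.eventually_sub_pos_mul_realDisp_pos j).filter_mono (nhdsGT_le_nhdsNE _)
  obtain ⟨x, ⟨hpos, hx, hidx⟩, hgt⟩ :=
    (hsign.and (L.eventually_nodeIndex_nhdsGT j)).and self_mem_nhdsWithin |>.exists
  exact ⟨x, hx, hidx, pos_of_mul_pos_right hpos (sub_pos.2 hgt).le⟩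

theorem exists_nodeIndex_eq_realDisp_neg (j : Fin N) :
    ∃ x, (∀ i, x ≠ L.pos i) ∧ L.nodeIndex x = j ∧ L.realDisp x < 0 := by
  have hsign := (L.eventually_sub_pos_mul_realDisp_pos j).filter_mono (nhdsLT_le_nhdsNE _)
  obtain ⟨x, ⟨hpos, hx, hidx⟩, hlt⟩ :=
    (hsign.and (L.eventually_nodeIndex_nhdsLT j)).and self_mem_nhdsWithin |>.exists
  exact ⟨x, hx, hidx, neg_of_mul_pos_right hpos (sub_neg.2 hlt).le⟩

theorem exists_realDisp_pos (hshear : L.shear < 1) {k : ℕ} (hk : k ≤ N) :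
    ∃ x, (∀ j, x ≠ L.pos j) ∧ L.nodeIndex x = k ∧ 0 < L.realDisp x := by
  rcases k with _ | k
  · have hleft : ∀ᶠ x in atBot, ∀ j, x < L.pos j :=
      eventually_all.2 fun j => eventually_lt_atBot _
    obtain ⟨x, hpos, hx⟩ := ((L.eventually_realDisp_pos_atBot hshear).and hleft).exists
    exact ⟨x, fun j => (hx j).ne,
      L.nodeIndex_eq hk fun j => by simp [(hx j).le], hpos⟩
  · exact L.exists_nodeIndex_eq_succ_realDisp_pos ⟨k, hk⟩

theorem exists_realDisp_neg (hshear : L.shear < 1) {k : ℕ} (hk : k ≤ N) :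
    ∃ x, (∀ j, x ≠ L.pos j) ∧ L.nodeIndex x = k ∧ L.realDisp x < 0 := by
  rcases hk.eq_or_lt with rfl | hk
  · have hright : ∀ᶠ x in atTop, ∀ j, L.pos j < x :=
      eventually_all.2 fun j => eventually_gt_atTop _
    obtain ⟨x, hneg, hx⟩ := ((L.eventually_realDisp_neg_atTop hshear).and hright).exists
    exact ⟨x, fun j => (hx j).ne', L.nodeIndex_eq le_rfl fun j => by simp [hx j], hneg⟩
  · exact L.exists_nodeIndex_eq_realDisp_neg ⟨k, hk⟩

theorem exists_mem_realZeros_of_nodeIndex_eq {a b : ℝ} {k : ℕ} (ha : ∀ j, a ≠ L.pos j)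
    (hb : ∀ j, b ≠ L.pos j) (hak : L.nodeIndex a = k) (hbk : L.nodeIndex b = k)
    (hpos : 0 < L.realDisp a) (hneg : L.realDisp b < 0) :
    ∃ x ∈ L.realZeros, L.nodeIndex x = k := by
  have hsame (x : ℝ) (hx : x ∈ uIcc a b) (j : Fin N) :
      x ≠ L.pos j ∧ (L.pos j < x ↔ (j : ℕ) < k) := by
    have ha' := L.pos_lt_iff_lt_nodeIndex (x := a) (j := j)
    have hb' := L.pos_lt_iff_lt_nodeIndex (x := b) (j := j)
    rw [hak] at ha'
    rw [hbk] at hb'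
    rcases lt_or_ge (j : ℕ) k with hj | hj
    · have := (lt_min (ha'.2 hj) (hb'.2 hj)).trans_le hx.1
      exact ⟨this.ne', iff_of_true this hj⟩
    · have := hx.2.trans_lt (max_lt
        ((not_lt.1 (mt ha'.1 hj.not_gt)).lt_of_ne (ha j))
        ((not_lt.1 (mt hb'.1 hj.not_gt)).lt_of_ne (hb j)))
      exact ⟨this.ne, iff_of_false this.not_gt hj.not_gt⟩
  have hcont : ContinuousOn L.realDisp (uIcc a b) := fun x hx =>
    (L.continuousAt_realDisp fun j => (hsame x hx j).1).continuousWithinAt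
  obtain ⟨x, hx, hzero⟩ := intermediate_value_uIcc hcont (mem_uIcc.2 (.inr ⟨hneg.le, hpos.le⟩))
  exact ⟨x, ⟨fun j => (hsame x hx j).1, hzero⟩,
    L.nodeIndex_eq (hak ▸ L.nodeIndex_le a) fun j => (hsame x hx j).2⟩

theorem exists_mem_realZeros_nodeIndex (hshear : L.shear < 1) {k : ℕ} (hk : k ≤ N) :
    ∃ x ∈ L.realZeros, L.nodeIndex x = k := by
  obtain ⟨a, ha, hak, hpos⟩ := L.exists_realDisp_pos hshear hk
  obtain ⟨b, hb, hbk, hneg⟩ := L.exists_realDisp_neg hshear hk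
  exact L.exists_mem_realZeros_of_nodeIndex_eq ha hb hak hbk hpos hneg

theorem exists_mem_realZeros_Ioo {L : CollinearLens (N + 1)} (j : Fin N) :
    ∃ x ∈ L.realZeros, L.pos j.castSucc < x ∧ x < L.pos j.succ := by
  obtain ⟨a, ha, hak, hpos⟩ := L.exists_nodeIndex_eq_succ_realDisp_pos j.castSucc
  obtain ⟨b, hb, hbk, hneg⟩ := L.exists_nodeIndex_eq_realDisp_neg j.succ
  obtain ⟨x, hx, hxk⟩ := L.exists_mem_realZeros_of_nodeIndex_eq ha hb hak hbk hpos hneg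
  refine ⟨x, hx, L.pos_lt_iff_lt_nodeIndex.2 (by simp [hxk]), lt_of_le_of_ne ?_ (hx.1 _)⟩
  exact not_lt.1 fun h => by simpa [hxk] using L.pos_lt_iff_lt_nodeIndex.1 h

theorem encard_realZeros (hshear : L.shear < 1) : L.realZeros.encard = (N + 1 : ℕ) := by
  have himage : L.nodeIndex '' L.realZeros = (Finset.range (N + 1) : Set ℕ) := by
    ext k
    rw [Finset.mem_coe, Finset.mem_range, Nat.lt_succ_iff]
    constructor
    · rintro ⟨x, -, rfl⟩
      exact L.nodeIndex_le x
    · exact L.exists_mem_realZeros_nodeIndex hshear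
  rw [← (L.injOn_nodeIndex_realZeros hshear).encard_image, himage, encard_coe_eq_coe_finsetCard,
    Finset.card_range]

theorem notMem_arcDomain_of_sq_le (hx : x ∉ L.arcDomain)
    (h : ∀ j, (x - L.pos j) ^ 2 ≤ (y - L.pos j) ^ 2) : y ∉ L.arcDomain := by
  rintro ⟨v, hv, heq⟩
  refine (L.kernelSum_lt_of_notMem hx hv).not_ge (heq ▸ Finset.sum_le_sum fun j _ => ?_)
  exact div_le_div_of_nonneg_left (L.mass_pos j).le (by positivity) (by linarith [h j])

theorem arcDisp_nonneg_of_le (hshear : L.shear < 1) (hx : x ∉ L.arcDomain)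
    (hzero : L.realDisp x = 0) (hleft : ∀ j, x < L.pos j) (hyx : y ≤ x) : 0 ≤ L.arcDisp y := by
  have hy : y ∉ L.arcDomain :=
    L.notMem_arcDomain_of_sq_le hx fun j => by nlinarith [hleft j]
  rw [L.arcDisp_of_notMem hy, ← hzero]
  rcases hyx.eq_or_lt with rfl | hlt
  · exact le_rfl
  · exact (L.realDisp_lt_realDisp hshear hlt fun j =>
      mul_pos_of_neg_of_neg (by linarith [hleft j]) (by linarith [hleft j])).le

theorem arcDisp_nonpos_of_ge (hshear : L.shear < 1) (hx : x ∉ L.arcDomain)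
    (hzero : L.realDisp x = 0) (hright : ∀ j, L.pos j < x) (hxy : x ≤ y) : L.arcDisp y ≤ 0 := by
  have hy : y ∉ L.arcDomain :=
    L.notMem_arcDomain_of_sq_le hx fun j => by nlinarith [hright j]
  rw [L.arcDisp_of_notMem hy, ← hzero]
  rcases hxy.eq_or_lt with rfl | hlt
  · exact le_rfl
  · exact (L.realDisp_lt_realDisp hshear hlt fun j =>
      mul_pos (by linarith [hright j]) (by linarith [hright j])).le

theorem injective_arcPoint : Function.Injective L.arcPoint := fun _ _ h => congrArg Complex.re h

theorem solutions_eq_union :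
    L.solutions =
      (L.upperSolutions ∪ conj '' L.upperSolutions) ∪ Complex.ofReal '' L.realZeros := by
  ext z
  constructor
  · rintro ⟨hne, heq⟩
    rcases lt_trichotomy z.im 0 with him | him | him
    · refine .inl (.inr ⟨conj z, ⟨by simpa using him, ?_⟩, Complex.conj_conj z⟩)
      rw [lensMap_conj, heq]
    · lift z to ℝ using him
      refine .inr ⟨z, ⟨fun j hj => hne j (congrArg _ hj), ?_⟩, rfl⟩
      simpa [lensMap_ofReal] using heq
    · exact .inl (.inl ⟨him, heq⟩)
  · rintro ((⟨him, heq⟩ | ⟨u, ⟨him, heq⟩, rfl⟩) | ⟨x, ⟨hne, hzero⟩, rfl⟩)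
    · exact ⟨L.ne_pos_of_im_ne_zero him.ne', heq⟩
    · exact ⟨L.ne_pos_of_im_ne_zero (by simpa using him.ne'), by rw [lensMap_conj, heq]⟩
    · exact ⟨fun j hj => hne j (Complex.ofReal_injective hj), by simp [lensMap_ofReal, hzero]⟩

theorem encard_solutions (hshear : L.shear < 1) :
    L.solutions.encard = 2 * L.upperSolutions.encard + (N + 1 : ℕ) := by
  have hconj : Disjoint L.upperSolutions (conj '' L.upperSolutions) := by
    rw [disjoint_left]
    rintro _ ⟨hpos, -⟩ ⟨u, ⟨hu, -⟩, rfl⟩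
    rw [Complex.conj_im] at hpos
    linarith
  have hreal : Disjoint (L.upperSolutions ∪ conj '' L.upperSolutions)
      (Complex.ofReal '' L.realZeros) := by
    rw [disjoint_left]
    rintro _ (⟨him, -⟩ | ⟨u, ⟨hu, -⟩, hux⟩) ⟨x, -, rfl⟩
    · simp at him
    · have := congrArg Complex.im hux
      simp only [Complex.conj_im, Complex.ofReal_im] at this
      linarith
  rw [solutions_eq_union, encard_union_eq hreal, encard_union_eq hconj,
    (starRingEnd ℂ).injective.encard_image, Complex.ofReal_injective.encard_image,
    L.encard_realZeros hshear, two_mul]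

/-- The translation `t = -c / (1 - γ)` absorbs the shift, and the rotation by `I` changes the sign
of the shear. -/
theorem lensSolutions_eq_image (hshear : L.shear < 1) :
    lensSolutions N L.shear L.mass
        (fun j => Complex.I * (L.pos j + (-L.shift / (1 - L.shear) : ℝ))) =
      (fun v : ℂ => Complex.I * (v + (-L.shift / (1 - L.shear) : ℝ))) '' L.solutions := by
  set t : ℝ := -L.shift / (1 - L.shear) with ht
  have hshift : (L.shift : ℂ) = -(1 - L.shear) * t := by
    have : 1 - L.shear ≠ 0 := (sub_pos.2 hshear).ne'
    rw [ht]
    norm_cast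
    field_simp
  have hinj : Function.Injective fun v : ℂ => Complex.I * (v + t) :=
    (mul_right_injective₀ Complex.I_ne_zero).comp (add_left_injective _)
  ext u
  obtain ⟨v, rfl⟩ : ∃ v : ℂ, Complex.I * (v + t) = u :=
    ⟨-Complex.I * u - t, by linear_combination (-u) * Complex.I_mul_I⟩
  rw [hinj.mem_set_image]
  refine and_congr (forall_congr' fun j => hinj.ne_iff) ?_
  have hfrac (j : Fin N) : (L.mass j : ℂ) / (Complex.I * (v + t) - Complex.I * (L.pos j + t)) =
      -Complex.I * ((L.mass j : ℂ) / (v - L.pos j)) := by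
    rw [← mul_sub, add_sub_add_right_eq_sub, div_mul_eq_div_div, div_eq_mul_inv _ Complex.I,
      Complex.inv_I]
    ring
  simp only [hfrac, ← Finset.mul_sum, lensMap, hshift, map_mul, map_add, Complex.conj_I,
    Complex.conj_ofReal]
  constructor <;> intro h
  · exact mul_left_cancel₀ Complex.I_ne_zero (by linear_combination h)
  · linear_combination Complex.I * h

section NeZero

variable [NeZero N]

theorem upperSolutions_eq_image :
    L.upperSolutions = L.arcPoint '' {x ∈ L.arcDomain | L.arcDisp x = 0} := by
  ext z
  constructor
  · rintro ⟨him, heq⟩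
    obtain ⟨hz, hzero⟩ := (L.lensMap_eq_conj_iff him).1 heq
    refine ⟨z.re, ⟨L.mem_arcDomain_iff.2 ?_, hzero⟩, hz⟩
    rw [← im_arcPoint_sq, hz]
    positivity
  · rintro ⟨x, ⟨hx, hzero⟩, rfl⟩
    have him := L.im_arcPoint_pos hx
    exact ⟨him, (L.lensMap_eq_conj_iff him).2 ⟨rfl, hzero⟩⟩

theorem card_deriv_arcDisp_neg_le (s : ℝ) (T : Finset ℝ)
    (hT : ∀ t ∈ T, t ∈ L.arcDomain ∧ L.arcDisp t = s ∧ deriv L.arcDisp t < 0) :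
    T.card ≤ N - 1 := by
  classical
  rw [← Finset.card_image_of_injective T L.injective_arcPoint]
  set L' : CollinearLens N := {L with shift := L.shift - s}
  refine L'.card_attracting_le _ fun a ha => ?_
  obtain ⟨t, ht, rfl⟩ := Finset.mem_image.1 ha
  obtain ⟨hO, hs, hneg⟩ := hT t ht
  have hmem : L.arcPoint t ∈ L'.upperSolutions := by
    rw [upperSolutions_eq_image]
    exact ⟨t, ⟨hO, by rw [arcDisp_sub_shift, hs, sub_self]⟩, rfl⟩
  have hderiv : deriv L'.lensMap (L.arcPoint t) = deriv L.lensMap (L.arcPoint t) :=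
    (L'.hasDerivAt_lensMap (L.arcPoint_ne_pos t)).deriv.trans
      (L.hasDerivAt_lensMap (L.arcPoint_ne_pos t)).deriv.symm
  exact ⟨hmem.1, hmem.2, hderiv ▸ L.norm_deriv_lensMap_arcPoint_lt_one hO hneg⟩

variable (hshear : L.shear < 1)
  (hgap : ∀ x ∉ L.arcDomain, L.realDisp x = 0 → (∀ j, x < L.pos j) ∨ ∀ j, L.pos j < x)
include hshear hgap

theorem encard_arcDisp_zeros_notMem_le :
    {x | x ∉ L.arcDomain ∧ L.arcDisp x = 0}.encard ≤ 2 := by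
  have hsub : {x | x ∉ L.arcDomain ∧ L.arcDisp x = 0} ⊆ L.realZeros := fun x hx =>
    ⟨fun j hj => hx.1 (hj ▸ L.pos_mem_arcDomain j), L.arcDisp_of_notMem hx.1 ▸ hx.2⟩
  have himage : L.nodeIndex '' {x | x ∉ L.arcDomain ∧ L.arcDisp x = 0} ⊆ {0, N} := by
    rintro _ ⟨x, hx, rfl⟩
    rcases hgap x hx.1 (hsub hx).2 with h | h
    · exact .inl (L.nodeIndex_eq N.zero_le fun j => by simp [(h j).le])
    · exact .inr (L.nodeIndex_eq le_rfl fun j => by simp [h j])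
  rw [← ((L.injOn_nodeIndex_realZeros hshear).mono hsub).encard_image]
  exact (encard_le_encard himage).trans (encard_insert_le _ _ |>.trans (by norm_num))

theorem encard_upperSolutions_le : L.upperSolutions.encard ≤ (2 * N - 1 : ℕ) := by
  classical
  have hfin : {x ∈ L.arcDomain | L.arcDisp x = 0}.Finite := by
    refine Finite.of_finite_image ?_ L.injective_arcPoint.injOn
    rw [← upperSolutions_eq_image]
    exact L.finite_nonreal_solutions.subset fun z hz => ⟨hz.1.ne', hz.2⟩
  have hgap_card := L.encard_arcDisp_zeros_notMem_le hshear hgap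
  have hgap_fin : {x | x ∉ L.arcDomain ∧ L.arcDisp x = 0}.Finite :=
    finite_of_encard_le_coe hgap_card
  have hZ (x : ℝ) : x ∈ hfin.toFinset ∪ hgap_fin.toFinset ↔ L.arcDisp x = 0 := by
    simp only [Finset.mem_union, Finite.mem_toFinset, mem_ofPred_eq]
    tauto
  have hcount := card_zeros_mem_add_one_le L.continuous_arcDisp
    (L.eventually_arcDisp_pos_atBot hshear) (L.eventually_arcDisp_neg_atTop hshear)
    L.isOpen_arcDomain L.differentiableOn_arcDisp L.card_deriv_arcDisp_neg_le _ hZ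
  have hin : {x ∈ hfin.toFinset ∪ hgap_fin.toFinset | x ∈ L.arcDomain} = hfin.toFinset := by
    ext x
    simp only [Finset.mem_filter, hZ, Finite.mem_toFinset, mem_ofPred_eq, and_comm]
  have hout : {x ∈ hfin.toFinset ∪ hgap_fin.toFinset | x ∉ L.arcDomain} = hgap_fin.toFinset := by
    ext x
    simp only [Finset.mem_filter, hZ, Finite.mem_toFinset, mem_ofPred_eq, and_comm]
  rw [hin, hout] at hcount
  rw [hgap_fin.encard_eq_coe_toFinset_card] at hgap_card
  rw [upperSolutions_eq_image, L.injective_arcPoint.encard_image,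
    hfin.encard_eq_coe_toFinset_card]
  have : hgap_fin.toFinset.card ≤ 2 := by exact_mod_cast hgap_card
  have := NeZero.pos N
  exact_mod_cast (by omega : hfin.toFinset.card ≤ 2 * N - 1)

variable {xs : ℕ → ℝ} (hxs : StrictMonoOn xs (Iic (2 * N - 1)))
  (hsign : ∀ k ≤ 2 * N - 1, (-1) ^ k * L.arcDisp (xs k) < 0)
include hxs hsign

theorem le_encard_upperSolutions : (2 * N - 1 : ℕ) ≤ L.upperSolutions.encard := by
  have halt (k : ℕ) (hk : k < 2 * N - 1) : L.arcDisp (xs k) * L.arcDisp (xs (k + 1)) < 0 := by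
    have h := mul_pos_of_neg_of_neg (hsign k hk.le) (hsign (k + 1) hk)
    rwa [mul_mul_mul_comm, ← pow_add, Odd.neg_one_pow ⟨k, by ring⟩, neg_one_mul, neg_pos] at h
  obtain ⟨T, hcard, hT⟩ := exists_finset_zeros_of_alternating L.continuous_arcDisp hxs halt
  have hfirst : L.arcDisp (xs 0) < 0 := by simpa using hsign 0 (Nat.zero_le _)
  have hlast : 0 < L.arcDisp (xs (2 * N - 1)) := by
    have hodd : Odd (2 * N - 1) := Nat.Even.sub_odd (by have := NeZero.pos N; omega) (by simp)
      odd_one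
    simpa [hodd.neg_one_pow] using hsign _ le_rfl
  have hsub : (T : Set ℝ) ⊆ {x ∈ L.arcDomain | L.arcDisp x = 0} := by
    refine fun t ht => ⟨by_contra fun hmem => ?_, (hT t ht).1⟩
    have hzero : L.realDisp t = 0 := L.arcDisp_of_notMem hmem ▸ (hT t ht).1
    rcases hgap t hmem hzero with hleft | hright
    · exact hfirst.not_ge (L.arcDisp_nonneg_of_le hshear hmem hzero hleft (hT t ht).2.1)
    · exact hlast.not_ge (L.arcDisp_nonpos_of_ge hshear hmem hzero hright (hT t ht).2.2)
  rw [upperSolutions_eq_image, L.injective_arcPoint.encard_image, ← hcard,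
    ← encard_coe_eq_coe_finsetCard]
  exact encard_le_encard hsub

theorem exists_lensSolutions_ncard_eq :
    ∃ (ε : Fin N → ℝ) (z : Fin N → ℂ), (∀ j, 0 < ε j) ∧ Function.Injective z ∧
      (lensSolutions N L.shear ε z).Finite ∧
      (lensSolutions N L.shear ε z).ncard = 5 * N - 1 := by
  have hinj : Function.Injective
      fun v : ℂ => Complex.I * (v + (-L.shift / (1 - L.shear) : ℝ)) :=
    (mul_right_injective₀ Complex.I_ne_zero).comp (add_left_injective _)
  have hupper := (L.encard_upperSolutions_le hshear hgap).antisymm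
    (L.le_encard_upperSolutions hshear hgap hxs hsign)
  have hcard : L.solutions.encard = (5 * N - 1 : ℕ) := by
    rw [L.encard_solutions hshear, hupper]
    have := NeZero.pos N
    exact_mod_cast (by omega : 2 * (2 * N - 1) + (N + 1) = 5 * N - 1)
  have hlens := congrArg encard (L.lensSolutions_eq_image hshear)
  rw [hinj.encard_image, hcard] at hlens
  refine ⟨L.mass, fun j => Complex.I * (L.pos j + (-L.shift / (1 - L.shear) : ℝ)), L.mass_pos,
    hinj.comp (Complex.ofReal_injective.comp L.pos_strictMono.injective), ?_⟩
  exact ⟨finite_of_encard_eq_coe hlens, by rw [ncard, hlens, ENat.toNat_natCast]⟩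

end NeZero

end CollinearLens

section PartialFractions

theorem coeff_nodal_univ {K ι : Type*} [Field K] [Fintype ι] (w : ι → K) :
    (Lagrange.nodal Finset.univ w).coeff (Fintype.card ι) = 1 := by
  simpa using (Lagrange.nodal_monic (s := Finset.univ) (v := w)).coeff_natDegree

variable {K ι : Type*} [Field K] [Fintype ι] [DecidableEq ι]

theorem natDegree_partialFractionNumer_le (ε w : ι → K) :
    (partialFractionNumer ε w).natDegree ≤ Fintype.card ι - 1 :=
  natDegree_sum_le_of_forall_le _ _ fun j _ =>
    (natDegree_C_mul_le _ _).trans_eq (by simp [Finset.card_erase_of_mem])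

theorem coeff_partialFractionNumer (ε w : ι → K) :
    (partialFractionNumer ε w).coeff (Fintype.card ι - 1) = ∑ j, ε j := by
  rw [partialFractionNumer, finsetSum_coeff]
  refine Finset.sum_congr rfl fun j _ => ?_
  have hdeg : (Lagrange.nodal (Finset.univ.erase j) w).natDegree = Fintype.card ι - 1 := by
    simp [Finset.card_erase_of_mem]
  rw [coeff_C_mul, ← hdeg, Lagrange.nodal_monic.coeff_natDegree, mul_one]

theorem eval_derivative_partialFractionNumer (ε w : ι → K) {z : K} (hz : ∀ j, z ≠ w j) :
    (derivative (partialFractionNumer ε w)).eval z =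
      (∑ j, ε j / (z - w j)) * (derivative (Lagrange.nodal Finset.univ w)).eval z -
        (∑ j, ε j / (z - w j) ^ 2) * (Lagrange.nodal Finset.univ w).eval z := by
  rw [partialFractionNumer, derivative_sum, eval_finsetSum, Finset.sum_mul, Finset.sum_mul,
    ← Finset.sum_sub_distrib]
  refine Finset.sum_congr rfl fun j _ => ?_
  have hne := sub_ne_zero.2 (hz j)
  rw [Lagrange.nodal_eq_mul_nodal_erase (Finset.mem_univ j)]
  simp only [derivative_mul, derivative_C, derivative_sub, derivative_X, eval_add, eval_mul,
    eval_sub, eval_X, eval_C, eval_zero, eval_one]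
  field_simp
  ring

theorem degree_nodal_add_mul_partialFractionNumer_lt {n : ℕ} {ρ ξ : Fin (n + 1) → K}
    (hsum : ∑ k, ρ k ≠ 0) (ε w : Fin n → K) (c : K) :
    degree (Lagrange.nodal Finset.univ ξ +
      (C (-(∑ k, ρ k)⁻¹) * X + C c) * partialFractionNumer ρ ξ +
      C (∑ k, ρ k) * partialFractionNumer ε w) < (n + 1 : ℕ) := by
  have hξ : (Lagrange.nodal Finset.univ ξ).natDegree = n + 1 := by simp
  have hdeg := natDegree_partialFractionNumer_le ρ ξ
  have hcoeff := coeff_partialFractionNumer ρ ξ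
  have hcard := coeff_nodal_univ ξ
  have hdeg' := natDegree_partialFractionNumer_le ε w
  rw [Fintype.card_fin] at hdeg hcoeff hcard hdeg'
  rw [Nat.add_sub_cancel] at hdeg hcoeff
  rw [degree_lt_iff_coeff_zero]
  intro m hm
  obtain ⟨l, rfl⟩ : ∃ l, m = l + 1 := ⟨m - 1, by omega⟩
  rw [add_mul, mul_assoc, coeff_add, coeff_add, coeff_add, coeff_C_mul, coeff_X_mul, coeff_C_mul,
    coeff_C_mul, coeff_eq_zero_of_natDegree_lt (p := partialFractionNumer ε w) (by omega),
    coeff_eq_zero_of_natDegree_lt (p := partialFractionNumer ρ ξ) (n := l + 1) (by omega)]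
  rcases (show n ≤ l by omega).lt_or_eq with h | rfl
  · rw [coeff_eq_zero_of_natDegree_lt (by omega), coeff_eq_zero_of_natDegree_lt (by omega)]
    ring
  · rw [hcoeff]
    linear_combination hcard - inv_mul_cancel₀ hsum

section Reciprocal

variable {n : ℕ} {ρ ξ : Fin (n + 1) → K} {w : Fin n → K} (hw : Function.Injective w)
  (hne : ∀ j k, w j ≠ ξ k) (hzero : ∀ j, ∑ k, ρ k / (w j - ξ k) = 0)

include hw hne hzero

theorem partialFractionNumer_eq_C_mul_nodal :
    partialFractionNumer ρ ξ = C (∑ k, ρ k) * Lagrange.nodal Finset.univ w := by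
  have hdeg := natDegree_partialFractionNumer_le ρ ξ
  have hcoeff := coeff_partialFractionNumer ρ ξ
  have hcard := coeff_nodal_univ w
  have hnodal : (Lagrange.nodal Finset.univ w).natDegree = n := by simp
  rw [Fintype.card_fin, Nat.add_sub_cancel] at hdeg hcoeff
  rw [Fintype.card_fin] at hcard
  rw [← sub_eq_zero]
  refine eq_zero_of_degree_lt_of_eval_index_eq_zero Finset.univ hw.injOn ?_ fun j _ => ?_
  · rw [Finset.card_fin, degree_lt_iff_coeff_zero]
    intro m hm
    rcases hm.lt_or_eq with h | rfl
    · rw [coeff_sub, coeff_eq_zero_of_natDegree_lt (by omega), coeff_C_mul,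
        coeff_eq_zero_of_natDegree_lt (by omega), mul_zero, sub_zero]
    · rw [coeff_sub, hcoeff, coeff_C_mul, hcard, mul_one, sub_self]
  · rw [eval_sub, eval_partialFractionNumer _ _ (hne j), hzero, eval_mul,
      Lagrange.eval_nodal_at_node (Finset.mem_univ j), zero_mul, mul_zero, sub_zero]

theorem sum_mul_prod_sub_eq (j : Fin n) :
    (∑ k, ρ k) * ∏ i ∈ Finset.univ.erase j, (w j - w i) =
      -(∑ k, ρ k / (w j - ξ k) ^ 2) * (Lagrange.nodal Finset.univ ξ).eval (w j) := by
  have h := eval_derivative_partialFractionNumer ρ ξ (hne j)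
  rw [partialFractionNumer_eq_C_mul_nodal hw hne hzero, derivative_C_mul, eval_mul, eval_C,
    Lagrange.eval_nodal_derivative_eval_node_eq (Finset.mem_univ j), Lagrange.eval_nodal,
    hzero] at h
  rw [h]
  ring

variable (hsum : ∑ k, ρ k ≠ 0) (hsq : ∀ j, ∑ k, ρ k / (w j - ξ k) ^ 2 ≠ 0)

include hsum hsq

theorem nodal_add_mul_partialFractionNumer_eq_zero {ε : Fin n → K} {c : K}
    (hε : ∀ j, ε j = (∑ k, ρ k / (w j - ξ k) ^ 2)⁻¹)
    (hc : c = (∑ k, ρ k)⁻¹ * ξ 0 - ∑ j, ε j / (ξ 0 - w j)) :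
    Lagrange.nodal Finset.univ ξ +
      (C (-(∑ k, ρ k)⁻¹) * X + C c) * partialFractionNumer ρ ξ +
      C (∑ k, ρ k) * partialFractionNumer ε w = 0 := by
  have hfactor := partialFractionNumer_eq_C_mul_nodal hw hne hzero
  refine eq_zero_of_degree_lt_of_eval_index_eq_zero
    (v := (Fin.cons (ξ 0) w : Fin (n + 1) → K)) Finset.univ
    (Fin.cons_injective_iff.2 ⟨?_, hw⟩).injOn ?_ ?_
  · rintro ⟨j, hj⟩
    exact hne j 0 hj
  · rw [Finset.card_fin]
    exact degree_nodal_add_mul_partialFractionNumer_lt hsum ε w c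
  · refine fun i _ => Fin.cases ?_ (fun j => ?_) i
    · rw [Fin.cons_zero, eval_add, eval_add, eval_mul, hfactor, eval_mul, eval_mul,
        eval_partialFractionNumer ε w fun j => (hne j 0).symm,
        Lagrange.eval_nodal_at_node (Finset.mem_univ 0)]
      simp only [eval_add, eval_mul, eval_C, eval_X, hc]
      ring
    · rw [Fin.cons_succ, eval_add, eval_add, eval_mul, hfactor, eval_mul, eval_mul,
        eval_partialFractionNumer_node, Lagrange.eval_nodal_at_node (Finset.mem_univ j)]
      simp only [eval_C]
      linear_combination ε j * sum_mul_prod_sub_eq hw hne hzero j -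
        (Lagrange.nodal Finset.univ ξ).eval (w j) *
          (hε j ▸ inv_mul_cancel₀ (hsq j) : ε j * ∑ k, ρ k / (w j - ξ k) ^ 2 = 1)

theorem sum_div_mul_eq_neg_one {ε : Fin n → K} {c : K}
    (hε : ∀ j, ε j = (∑ k, ρ k / (w j - ξ k) ^ 2)⁻¹)
    (hc : c = (∑ k, ρ k)⁻¹ * ξ 0 - ∑ j, ε j / (ξ 0 - w j))
    {z : K} (hzw : ∀ j, z ≠ w j) (hzξ : ∀ k, z ≠ ξ k) :
    (∑ k, ρ k / (z - ξ k)) * (-(∑ k, ρ k)⁻¹ * z + c + ∑ j, ε j / (z - w j)) = -1 := by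
  have hid := congrArg (eval z)
    (nodal_add_mul_partialFractionNumer_eq_zero hw hne hzero hsum hsq hε hc)
  have hfactor := congrArg (eval z) (partialFractionNumer_eq_C_mul_nodal hw hne hzero)
  have hnum := eval_partialFractionNumer ρ ξ hzξ
  simp only [eval_add, eval_mul, eval_C, eval_X, eval_zero,
    eval_partialFractionNumer ε w hzw] at hid hfactor
  apply mul_right_cancel₀ (Lagrange.eval_nodal_not_at_node (s := Finset.univ) fun k _ => hzξ k)
  linear_combination hid - (-(∑ k, ρ k)⁻¹ * z + c + ∑ j, ε j / (z - w j)) * hnum +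
    (∑ j, ε j / (z - w j)) * hfactor

end Reciprocal

end PartialFractions

/-- The Cauchy transform (field) of charges `ρ k` at the points `ξ k` of the real line. -/
noncomputable def cauchyTransform {ι : Type*} [Fintype ι] (ρ ξ : ι → ℝ) (z : ℂ) : ℂ :=
  ∑ k, (ρ k : ℂ) / (z - ξ k)

theorem re_cauchyTransform {ι : Type*} [Fintype ι] (ρ ξ : ι → ℝ) (z : ℂ) :
    (cauchyTransform ρ ξ z).re =
      ∑ k, ρ k * (z.re - ξ k) / ((z.re - ξ k) ^ 2 + z.im ^ 2) := by
  rw [cauchyTransform, Complex.re_sum]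
  refine Finset.sum_congr rfl fun k _ => ?_
  simp [Complex.div_re, Complex.normSq_apply, sq]

theorem im_cauchyTransform {ι : Type*} [Fintype ι] (ρ ξ : ι → ℝ) (z : ℂ) :
    (cauchyTransform ρ ξ z).im = -(z.im * ∑ k, ρ k / ((z.re - ξ k) ^ 2 + z.im ^ 2)) := by
  rw [cauchyTransform, Complex.im_sum, Finset.mul_sum, ← Finset.sum_neg_distrib]
  refine Finset.sum_congr rfl fun k _ => ?_
  simp only [Complex.div_im, Complex.normSq_apply, Complex.sub_re, Complex.sub_im,
    Complex.ofReal_re, Complex.ofReal_im]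
  ring

theorem tendsto_mul_cauchyTransform {ι : Type*} [Fintype ι] (ρ : ι → ℝ) {ξ : ι → ℝ}
    (hξ : Function.Injective ξ) (k : ι) :
    Tendsto (fun y : ℝ => y * cauchyTransform ρ ξ (ξ k + y * Complex.I)) (𝓝[>] 0)
      (𝓝 (-ρ k * Complex.I)) := by
  classical
  have hterm (i : ι) : Tendsto (fun y : ℝ => y * ((ρ i : ℂ) / (ξ k + y * Complex.I - ξ i)))
      (𝓝[>] 0) (𝓝 (if i = k then -ρ k * Complex.I else 0)) := by
    split_ifs with h
    · refine tendsto_const_nhds.congr' ?_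
      filter_upwards [self_mem_nhdsWithin] with y hy
      have hy0 : (y : ℂ) ≠ 0 := mod_cast hy.ne'
      rw [h, add_sub_cancel_left]
      field_simp
      simp
    · have hcont : ContinuousAt
          (fun y : ℝ => y * ((ρ i : ℂ) / (ξ k + y * Complex.I - ξ i))) 0 := by
        refine .mul (by fun_prop) (.div (by fun_prop) (by fun_prop) ?_)
        simpa [sub_eq_zero] using hξ.ne (Ne.symm h)
      simpa using hcont.tendsto.mono_left nhdsWithin_le_nhds
  simpa [cauchyTransform, Finset.mul_sum] using tendsto_finsetSum Finset.univ fun i _ => hterm i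

namespace CollinearLens

variable {N : ℕ}

/-- The displacement `L.lensMap z - z` is the negative reciprocal of `cauchyTransform ρ ξ z`. Thus
the `ξ k` are the real solutions of the lens equation, and the lens is prescribed by them. -/
def IsReciprocal (L : CollinearLens N) (ρ ξ : Fin (N + 1) → ℝ) : Prop :=
  ∀ z : ℂ, (∀ j, z ≠ L.pos j) → (∀ k, z ≠ ξ k) →
    cauchyTransform ρ ξ z * (L.lensMap z - z) = -1

theorem exists_isReciprocal {γ : ℝ} (hγ0 : 0 < γ) {ρ ξ : Fin (N + 1) → ℝ}
    (hξ : StrictMono ξ) (hρ : ∀ k, 0 < ρ k) (hsum : ∑ k, ρ k = (1 - γ)⁻¹) :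
    ∃ L : CollinearLens N, L.shear = γ ∧
      (∀ j : Fin N, ξ j.castSucc < L.pos j ∧ L.pos j < ξ j.succ) ∧ L.IsReciprocal ρ ξ := by
  let charges : CollinearLens (N + 1) := ⟨1, 0, ρ, ξ, one_pos, hρ, hξ⟩
  choose w hw hleft hright using fun j => charges.exists_mem_realZeros_Ioo j
  have hne (j : Fin N) (k : Fin (N + 1)) : w j ≠ ξ k := (hw j).1 k
  have hzero (j : Fin N) : ∑ k, ρ k / (w j - ξ k) = 0 := by
    simpa [realDisp, charges] using (hw j).2
  have hmono : StrictMono w := fun i j hij =>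
    ((hright i).trans_le (hξ.monotone (by simpa [Fin.le_def] using hij))).trans (hleft j)
  have hsq (j : Fin N) : 0 < ∑ k, ρ k / (w j - ξ k) ^ 2 :=
    Finset.sum_pos (fun k _ => div_pos (hρ k) (sq_pos_of_ne_zero (sub_ne_zero.2 (hne j k))))
      Finset.univ_nonempty
  have hpos : 0 < ∑ k, ρ k := Finset.sum_pos (fun k _ => hρ k) Finset.univ_nonempty
  let ε (j : Fin N) : ℝ := (∑ k, ρ k / (w j - ξ k) ^ 2)⁻¹
  let c : ℝ := (∑ k, ρ k)⁻¹ * ξ 0 - ∑ j, ε j / (ξ 0 - w j)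
  refine ⟨⟨γ, c, ε, w, hγ0, fun j => inv_pos.2 (hsq j), hmono⟩, rfl,
    fun j => ⟨hleft j, hright j⟩, fun z hzw hzξ => ?_⟩
  have hγ : (1 : ℂ) - γ = (∑ k, (ρ k : ℂ))⁻¹ := by
    rw [← Complex.ofReal_sum, hsum, ← Complex.ofReal_inv, inv_inv]
    push_cast
    rfl
  have h := sum_div_mul_eq_neg_one (K := ℂ) (ρ := fun k => ρ k) (ξ := fun k => ξ k)
    (w := fun j => w j) (ε := fun j => ε j) (c := c)
    (Complex.ofReal_injective.comp hmono.injective) (fun j k => mod_cast hne j k)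
    (fun j => mod_cast hzero j) (mod_cast hpos.ne') (fun j => mod_cast (hsq j).ne')
    (fun j => by simp [ε]) (by simp [c]) hzw hzξ
  rw [← h, ← hγ]
  simp only [cauchyTransform, lensMap]
  ring

namespace IsReciprocal

variable {L : CollinearLens N} {ρ ξ : Fin (N + 1) → ℝ} (hrec : L.IsReciprocal ρ ξ) {x : ℝ}

include hrec

theorem tendsto_im_lensMap_sub_div (hξ : Function.Injective ξ) {k : Fin (N + 1)}
    (hk : ρ k ≠ 0) :
    Tendsto (fun y : ℝ => ((L.lensMap (ξ k + y * Complex.I) - (ξ k + y * Complex.I)) / y).im)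
      (𝓝[>] 0) (𝓝 (-(ρ k)⁻¹)) := by
  have hdisp : ∀ᶠ y : ℝ in 𝓝[>] 0, -(y * cauchyTransform ρ ξ (ξ k + y * Complex.I))⁻¹ =
      (L.lensMap (ξ k + y * Complex.I) - (ξ k + y * Complex.I)) / y := by
    filter_upwards [self_mem_nhdsWithin] with y hy
    have hy0 : (y : ℂ) ≠ 0 := mod_cast hy.ne'
    have him : (ξ k + y * Complex.I : ℂ).im ≠ 0 := by simpa using hy.ne'
    have h := hrec _ (L.ne_pos_of_im_ne_zero him)
      fun i hzi => him (by simpa using congrArg Complex.im hzi)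
    have hΛ := left_ne_zero_of_mul (h.trans_ne (by norm_num))
    field_simp
    linear_combination -h
  have hlim := ((tendsto_mul_cauchyTransform ρ hξ k).inv₀ (by simpa using hk)).neg
  have hval : -(-ρ k * Complex.I : ℂ)⁻¹ = ((-(ρ k)⁻¹ : ℝ) : ℂ) * Complex.I := by
    rw [mul_inv, Complex.inv_I, inv_neg]
    push_cast
    ring
  have him := (Complex.continuous_im.tendsto _).comp (hlim.congr' hdisp)
  rwa [hval, Complex.im_ofReal_mul, Complex.I_im, mul_one] at him

theorem mem_arcDomain (hξ : Function.Injective ξ) {k : Fin (N + 1)} (hk0 : 0 < ρ k)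
    (hk : ρ k < 1 / 2) : ξ k ∈ L.arcDomain := by
  by_contra hout
  have hge : -2 ≤ -(ρ k)⁻¹ := by
    refine ge_of_tendsto (hrec.tendsto_im_lensMap_sub_div hξ hk0.ne') ?_
    filter_upwards [self_mem_nhdsWithin] with y hy
    have hy' : (0 : ℝ) < y := hy
    have := L.kernelSum_lt_of_notMem hout (pow_pos hy' 2)
    rw [Complex.div_ofReal_im, Complex.sub_im, im_lensMap, le_div_iff₀ hy']
    have hre : (ξ k + y * Complex.I : ℂ).re = ξ k := by simp
    have him : (ξ k + y * Complex.I : ℂ).im = y := by simp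
    rw [hre, him]
    nlinarith
  have := (inv_lt_inv₀ (by norm_num) hk0).2 hk
  norm_num at this
  linarith

variable [NeZero N]

theorem exists_eq_of_realDisp_eq_zero (hx : x ∉ L.arcDomain) (hzero : L.realDisp x = 0) :
    ∃ k, x = ξ k := by
  by_contra! hne
  have h := hrec x (fun j hj => hx (by
    rw [Complex.ofReal_injective hj]; exact L.pos_mem_arcDomain j)) fun k hk =>
      hne k (Complex.ofReal_injective hk)
  simp [lensMap_ofReal, hzero] at h

theorem sub_mul_normSq (hx : ∀ k, x ≠ ξ k) :
    (⟨L.arcDisp x, -2 * (L.arcPoint x).im⟩ : ℂ) *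
      Complex.normSq (cauchyTransform ρ ξ (L.arcPoint x)) =
        -conj (cauchyTransform ρ ξ (L.arcPoint x)) := by
  have h := hrec (L.arcPoint x) (L.arcPoint_ne_pos x) fun k hk => hx k (congrArg Complex.re hk)
  have hdisp : L.lensMap (L.arcPoint x) - L.arcPoint x =
      ⟨L.arcDisp x, -2 * (L.arcPoint x).im⟩ := by
    rw [lensMap_arcPoint]
    apply Complex.ext
    · simp
    · simp; ring
  rw [hdisp] at h
  rw [Complex.normSq_eq_conj_mul_self]
  linear_combination conj (cauchyTransform ρ ξ (L.arcPoint x)) * h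

theorem arcDisp_mul_neg (hx : ∀ k, x ≠ ξ k) {δ : ℝ}
    (hδ : 0 < δ * (cauchyTransform ρ ξ (L.arcPoint x)).re) : δ * L.arcDisp x < 0 := by
  have hre := congrArg Complex.re (hrec.sub_mul_normSq hx)
  rw [Complex.re_mul_ofReal, Complex.neg_re, Complex.conj_re] at hre
  refine neg_of_mul_neg_left ?_ (Complex.normSq_nonneg (cauchyTransform ρ ξ (L.arcPoint x)))
  linear_combination hδ + δ * hre

theorem two_mul_arcHeightSq_mul_sum_le_one (hρ : ∀ k, 0 < ρ k) (hx : ∀ k, x ≠ ξ k) :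
    2 * L.arcHeightSq x * ∑ k, ρ k / ((x - ξ k) ^ 2 + L.arcHeightSq x) ≤ 1 := by
  rcases (L.im_arcPoint_nonneg x).eq_or_lt with hY | hY
  · rw [← im_arcPoint_sq, ← hY]
    simp
  have him := congrArg Complex.im (hrec.sub_mul_normSq hx)
  rw [Complex.im_mul_ofReal, Complex.neg_im, Complex.conj_im, im_cauchyTransform,
    im_arcPoint_sq] at him
  have hnormSq := Complex.normSq_apply (cauchyTransform ρ ξ (L.arcPoint x))
  rw [im_cauchyTransform, im_arcPoint_sq] at hnormSq
  change -2 * _ * _ = - - -(_ * ∑ k, ρ k / ((x - ξ k) ^ 2 + L.arcHeightSq x)) at him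
  change _ = _ + -(_ * ∑ k, ρ k / ((x - ξ k) ^ 2 + L.arcHeightSq x)) *
    -(_ * ∑ k, ρ k / ((x - ξ k) ^ 2 + L.arcHeightSq x)) at hnormSq
  have hsum : 0 < ∑ k, ρ k / ((x - ξ k) ^ 2 + L.arcHeightSq x) :=
    Finset.sum_pos (fun k _ => div_pos (hρ k) (add_pos_of_pos_of_nonneg
      (sq_pos_of_ne_zero (sub_ne_zero.2 (hx k))) (L.arcHeightSq_nonneg x))) Finset.univ_nonempty
  set P := ∑ k, ρ k / ((x - ξ k) ^ 2 + L.arcHeightSq x)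
  have hP : P = 2 * Complex.normSq (cauchyTransform ρ ξ (L.arcPoint x)) :=
    mul_left_cancel₀ hY.ne' (by linear_combination him)
  refine le_of_mul_le_mul_right ?_ hsum
  calc 2 * L.arcHeightSq x * P * P = 2 * ((L.arcPoint x).im * P) ^ 2 := by
        rw [← im_arcPoint_sq]; ring
    _ ≤ 2 * Complex.normSq (cauchyTransform ρ ξ (L.arcPoint x)) := by
        rw [hnormSq]
        nlinarith [mul_self_nonneg (cauchyTransform ρ ξ (L.arcPoint x)).re]
    _ = 1 * P := by rw [hP, one_mul]

end IsReciprocal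

end CollinearLens

section Equilibrium

variable {m : ℕ}

/-- The monotone configurations of points of `[-1, 1]` including both end points. -/
def pinnedConfigurations (m : ℕ) : Set (Fin (m + 2) → ℝ) :=
  {ξ | Monotone ξ ∧ ξ 0 = -1 ∧ ξ (Fin.last (m + 1)) = 1}

/-- The exponential of the negative logarithmic energy of charges `q i` at the points `ξ i`. -/
noncomputable def chargeProduct {ι : Type*} [Fintype ι] [DecidableEq ι] (q ξ : ι → ℝ) : ℝ :=
  ∏ p ∈ Finset.univ.offDiag, |ξ p.1 - ξ p.2| ^ (q p.1 * q p.2)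

theorem isCompact_pinnedConfigurations : IsCompact (pinnedConfigurations m) := by
  refine (isCompact_Icc (a := fun _ => -1) (b := fun _ => 1)).of_isClosed_subset ?_ fun ξ hξ => ?_
  · exact isClosed_monotone.inter ((isClosed_eq (by fun_prop) continuous_const).inter
      (isClosed_eq (by fun_prop) continuous_const))
  · exact ⟨fun k => hξ.2.1 ▸ hξ.1 (Fin.zero_le k), fun k => hξ.2.2 ▸ hξ.1 (Fin.le_last k)⟩

theorem exists_strictMono_mem_pinnedConfigurations :
    ∃ ξ ∈ pinnedConfigurations m, StrictMono ξ := by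
  have hmono : StrictMono fun k : Fin (m + 2) => -1 + 2 * ((k : ℝ) / (m + 1)) := by
    intro i j hij
    have : (i : ℝ) < j := mod_cast hij
    dsimp only
    gcongr
  refine ⟨_, ⟨hmono.monotone, by simp, ?_⟩, hmono⟩
  have : (m : ℝ) + 1 ≠ 0 := by positivity
  simp [this]
  norm_num

section

variable {ι : Type*} [Fintype ι] [DecidableEq ι] {q ξ : ι → ℝ}

theorem continuous_chargeProduct (hq : ∀ i, 0 ≤ q i) : Continuous (chargeProduct q) :=
  continuous_finsetProd _ fun p _ =>
    Continuous.rpow_const (by fun_prop) fun _ => .inr (mul_nonneg (hq _) (hq _))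

theorem chargeProduct_pos_iff (hq : ∀ i, 0 < q i) :
    0 < chargeProduct q ξ ↔ Function.Injective ξ := by
  constructor
  · intro h i j hij
    by_contra hne
    refine h.ne' (Finset.prod_eq_zero (i := (i, j)) (by simpa using hne) ?_)
    rw [hij, sub_self, abs_zero, Real.zero_rpow (mul_pos (hq i) (hq j)).ne']
  · intro h
    refine Finset.prod_pos fun p hp => Real.rpow_pos_of_pos (abs_pos.2 (sub_ne_zero.2 ?_)) _
    exact h.ne (Finset.mem_offDiag.1 hp).2.2

theorem log_chargeProduct (hξ : Function.Injective ξ) :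
    Real.log (chargeProduct q ξ) = ∑ i, ∑ j, q i * q j * Real.log (ξ i - ξ j) := by
  have hpos (p : ι × ι) (hp : p ∈ Finset.univ.offDiag) : 0 < |ξ p.1 - ξ p.2| :=
    abs_pos.2 (sub_ne_zero.2 (hξ.ne (Finset.mem_offDiag.1 hp).2.2))
  rw [chargeProduct, Real.log_prod fun p hp => (Real.rpow_pos_of_pos (hpos p hp) _).ne',
    ← Finset.sum_product', Finset.univ_product_univ]
  rw [← Finset.sum_subset (Finset.subset_univ Finset.univ.offDiag)]
  · refine Finset.sum_congr rfl fun p hp => ?_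
    rw [Real.log_rpow (hpos p hp), Real.log_abs]
  · intro p _ hp
    have : p.1 = p.2 := by simpa using hp
    rw [this, sub_self, Real.log_zero, mul_zero]

theorem hasDerivAt_sum_log_update (q : ι → ℝ) (hξ : Function.Injective ξ) (k : ι) :
    HasDerivAt (fun t => ∑ i, ∑ j, q i * q j *
        Real.log (Function.update ξ k t i - Function.update ξ k t j))
      (2 * q k * ∑ j, q j / (ξ k - ξ j)) (ξ k) := by
  let e : ι → ℝ := Pi.single k 1
  have hcoord (i : ι) : HasDerivAt (fun t => Function.update ξ k t i) (e i) (ξ k) :=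
    hasDerivAt_pi.1 (hasDerivAt_update ξ k (ξ k)) i
  have hterm (i j : ι) : HasDerivAt (fun t => q i * q j *
      Real.log (Function.update ξ k t i - Function.update ξ k t j))
      (q i * q j * ((e i - e j) / (ξ i - ξ j))) (ξ k) := by
    rcases eq_or_ne i j with rfl | hij
    · simpa using hasDerivAt_const (ξ k) (0 : ℝ)
    · have hne : Function.update ξ k (ξ k) i - Function.update ξ k (ξ k) j ≠ 0 := by
        simpa [sub_eq_zero] using hξ.ne hij
      simpa using (((hcoord i).sub (hcoord j)).log hne).const_mul (q i * q j)
  refine (HasDerivAt.fun_sum fun i _ => HasDerivAt.fun_sum fun j _ => hterm i j).congr_deriv ?_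
  have hsplit (i j : ι) : q i * q j * ((e i - e j) / (ξ i - ξ j)) =
      e i * (q i * (q j / (ξ i - ξ j))) + e j * (q j * (q i / (ξ j - ξ i))) := by
    rw [← neg_sub (ξ i) (ξ j), div_neg]
    ring
  simp only [hsplit, Finset.sum_add_distrib]
  rw [Finset.sum_comm (f := fun i j => e j * _), ← two_mul]
  simp [e, Pi.single_apply, Finset.mul_sum, mul_assoc]

end

theorem eventually_strictMono_nhds {ι : Type*} [Finite ι] [Preorder ι] {ξ : ι → ℝ}
    (hξ : StrictMono ξ) : ∀ᶠ η in 𝓝 ξ, StrictMono η := by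
  have hpair (i j : ι) : ∀ᶠ η : ι → ℝ in 𝓝 ξ, i < j → η i < η j :=
    eventually_imp_distrib_left.2 fun hij =>
      (continuousAt_apply i ξ).eventually_lt (continuousAt_apply j ξ) (hξ hij)
  filter_upwards [eventually_all.2 fun i => eventually_all.2 (hpair i)] with η hη i j
  exact hη i j

/-- Maximise `chargeProduct` over `pinnedConfigurations`. -/
theorem exists_equilibrium {q : Fin (m + 2) → ℝ} (hq : ∀ k, 0 < q k) :
    ∃ ξ : Fin (m + 2) → ℝ, StrictMono ξ ∧ ξ 0 = -1 ∧ ξ (Fin.last (m + 1)) = 1 ∧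
      ∀ k, k ≠ 0 → k ≠ Fin.last (m + 1) → ∑ j, q j / (ξ k - ξ j) = 0 := by
  have hcont := continuous_chargeProduct fun k => (hq k).le
  obtain ⟨ξ₀, hmem₀, hmono₀⟩ := exists_strictMono_mem_pinnedConfigurations (m := m)
  obtain ⟨ξ, hmem, hmax⟩ := isCompact_pinnedConfigurations.exists_isMaxOn ⟨ξ₀, hmem₀⟩
    hcont.continuousOn
  have hpos : 0 < chargeProduct q ξ :=
    ((chargeProduct_pos_iff hq).2 hmono₀.injective).trans_le (hmax hmem₀)
  have hinj := (chargeProduct_pos_iff hq).1 hpos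
  have hmono := hmem.1.strictMono_of_injective hinj
  refine ⟨ξ, hmono, hmem.2.1, hmem.2.2, fun k hk0 hkl => ?_⟩
  have hupdate : ContinuousAt (Function.update ξ k) (ξ k) := by fun_prop
  have hlocal : IsLocalMax (fun t => ∑ i, ∑ j, q i * q j *
      Real.log (Function.update ξ k t i - Function.update ξ k t j)) (ξ k) := by
    have hnear : ∀ᶠ t in 𝓝 (ξ k), StrictMono (Function.update ξ k t) :=
      hupdate.eventually (by simpa using eventually_strictMono_nhds hmono)
    filter_upwards [hnear] with t ht
    have hmem_t : Function.update ξ k t ∈ pinnedConfigurations m :=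
      ⟨ht.monotone, by rw [Function.update_of_ne hk0.symm, hmem.2.1],
        by rw [Function.update_of_ne hkl.symm, hmem.2.2]⟩
    have hle : chargeProduct q (Function.update ξ k t) ≤ chargeProduct q ξ := hmax hmem_t
    have := Real.log_le_log ((chargeProduct_pos_iff hq).2 ht.injective) hle
    rw [log_chargeProduct ht.injective, log_chargeProduct hinj] at this
    simpa using this
  have hderiv := hlocal.hasDerivAt_eq_zero (hasDerivAt_sum_log_update q hinj k)
  exact (mul_eq_zero.1 hderiv).resolve_left (by simpa using (hq k).ne')

end Equilibrium

section ForceSign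

variable {ι : Type*} [Fintype ι] {ξ : ι → ℝ} {k : ι}

/-- At each height `√T` over `x` at which the charges `ρ` allow an arc point, the real part of their
Cauchy transform has the strict sign of `δ`. The bound on `T` is the one that
`CollinearLens.IsReciprocal.two_mul_arcHeightSq_mul_sum_le_one` provides. -/
def HasForceSign (ρ ξ : ι → ℝ) (x δ : ℝ) : Prop :=
  ∀ T ≥ 0, 2 * T * ∑ j, ρ j / ((x - ξ j) ^ 2 + T) ≤ 1 →
    0 < δ * ∑ j, ρ j * (x - ξ j) / ((x - ξ j) ^ 2 + T)

theorem mul_own_add_pos {q δ T τ R : ℝ} (hδ : δ ≠ 0) (hT : 0 ≤ T) (hTτ : T ≤ τ * |δ|)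
    (hR : |R| * (|δ| + τ) < q) : 0 < δ * (q * δ / (δ ^ 2 + T) + R) := by
  have hδ2 : 0 < |δ| ^ 2 := by positivity
  have hD : 0 < |δ| ^ 2 + T := by positivity
  have hlower : -(|δ| * |R|) ≤ δ * R := by rw [← abs_mul]; exact neg_abs_le _
  have hnum : 0 < q * |δ| ^ 2 + δ * R * (|δ| ^ 2 + T) := by
    calc 0 < (q - |R| * (|δ| + τ)) * |δ| ^ 2 := mul_pos (sub_pos.2 hR) hδ2
      _ = q * |δ| ^ 2 + -(|δ| * |R|) * (|δ| ^ 2 + τ * |δ|) := by ring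
      _ ≤ q * |δ| ^ 2 + -(|δ| * |R|) * (|δ| ^ 2 + T) := by
        nlinarith [mul_nonneg (mul_nonneg (abs_nonneg δ) (abs_nonneg R)) (sub_nonneg.2 hTτ)]
      _ ≤ q * |δ| ^ 2 + δ * R * (|δ| ^ 2 + T) := by gcongr
  have heq : δ * (q * δ / (δ ^ 2 + T) + R) =
      (q * |δ| ^ 2 + δ * R * (|δ| ^ 2 + T)) / (|δ| ^ 2 + T) := by
    rw [← sq_abs δ, add_div, mul_div_cancel_right₀ _ hD.ne', sq_abs]
    ring
  rw [heq]
  exact div_pos hnum hD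

theorem HasForceSign.of_le [DecidableEq ι] {ρ : ι → ℝ} {δ τ : ℝ} (hδ : δ ≠ 0)
    (hheight : ∀ T ≥ 0, 2 * T * ∑ j, ρ j / ((ξ k + δ - ξ j) ^ 2 + T) ≤ 1 → T ≤ τ * |δ|)
    (hrest : ∀ T ∈ Icc 0 (τ * |δ|), |∑ j ∈ Finset.univ.erase k,
      ρ j * (ξ k + δ - ξ j) / ((ξ k + δ - ξ j) ^ 2 + T)| * (|δ| + τ) < ρ k) :
    HasForceSign ρ ξ (ξ k + δ) δ := by
  intro T hT hle
  have hTτ := hheight T hT hle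
  rw [← Finset.add_sum_erase _ _ (Finset.mem_univ k), add_sub_cancel_left]
  exact mul_own_add_pos hδ hT hTτ (hrest T ⟨hT, hTτ⟩)

theorem eventually_abs_sum_erase_sub_lt [DecidableEq ι] {ρ : ℝ → ι → ℝ}
    (hρ : ∀ j, ContinuousAt (fun δ => ρ δ j) 0) (hξ : Function.Injective ξ) (k : ι) (C : ℝ)
    {e : ℝ} (he : 0 < e) :
    ∀ᶠ δ in 𝓝 0, ∀ T ∈ Icc 0 (C * |δ|), |∑ j ∈ Finset.univ.erase k,
      ρ δ j * (ξ k + δ - ξ j) / ((ξ k + δ - ξ j) ^ 2 + T) - ∑ j, ρ 0 j / (ξ k - ξ j)| < e := by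
  let rest (p : ℝ × ℝ) : ℝ := ∑ j ∈ Finset.univ.erase k,
    ρ p.1 j * (ξ k + p.1 - ξ j) / ((ξ k + p.1 - ξ j) ^ 2 + p.2)
  have hne {j : ι} (hj : j ∈ Finset.univ.erase k) : ξ k - ξ j ≠ 0 :=
    sub_ne_zero.2 (hξ.ne (Finset.ne_of_mem_erase hj).symm)
  have hcont : ContinuousAt rest (0, 0) := by
    refine tendsto_finsetSum _ fun j hj => ContinuousAt.div ?_ (by fun_prop) (by simpa using hne hj)
    exact ((hρ j).comp (f := Prod.fst) (x := ((0, 0) : ℝ × ℝ)) continuousAt_fst).mul (by fun_prop)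
  have hrest0 : rest (0, 0) = ∑ j, ρ 0 j / (ξ k - ξ j) := by
    rw [← Finset.sum_erase Finset.univ (a := k) (by simp)]
    refine Finset.sum_congr rfl fun j hj => ?_
    have := hne hj
    simp only [add_zero]
    field_simp
  obtain ⟨η, hη, hnear⟩ := Metric.continuousAt_iff.1 hcont e he
  have hδ : ∀ᶠ δ : ℝ in 𝓝 0, |δ| < η ∧ C * |δ| < η :=
    (ContinuousAt.eventually_lt (by fun_prop) (by fun_prop) (by simpa using hη)).and
      (ContinuousAt.eventually_lt (by fun_prop) (by fun_prop) (by simpa using hη))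
  filter_upwards [hδ] with δ hδ T hT
  have hdist : dist (δ, T) (0, 0) < η := by
    simpa [Prod.dist_eq, abs_of_nonneg hT.1] using ⟨hδ.1, hT.2.trans_lt hδ.2⟩
  simpa only [hrest0, Real.dist_eq] using hnear hdist

theorem mul_two_mul_sub_one_le_sq {ρ : ι → ℝ} (hρ : ∀ j, 0 ≤ ρ j) {x T : ℝ} (hx : x ≠ ξ k)
    (hT : 0 ≤ T) (hle : 2 * T * ∑ j, ρ j / ((x - ξ j) ^ 2 + T) ≤ 1) :
    T * (2 * ρ k - 1) ≤ (x - ξ k) ^ 2 := by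
  have : 0 < (x - ξ k) ^ 2 := sq_pos_of_ne_zero (sub_ne_zero.2 hx)
  have hown : ρ k / ((x - ξ k) ^ 2 + T) ≤ ∑ j, ρ j / ((x - ξ j) ^ 2 + T) :=
    Finset.single_le_sum (f := fun j => ρ j / ((x - ξ j) ^ 2 + T))
      (fun j _ => div_nonneg (hρ j) (by positivity)) (Finset.mem_univ k)
  have hle' : 2 * T * (ρ k / ((x - ξ k) ^ 2 + T)) ≤ 1 := le_trans (by gcongr) hle
  rw [← mul_div_assoc, div_le_one (by positivity)] at hle'
  linarith

theorem eventually_hasForceSign_of_half_lt {ρ : ℝ → ι → ℝ}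
    (hρ : ∀ j, ContinuousAt (fun δ => ρ δ j) 0) (hρ0 : ∀ᶠ δ in 𝓝 0, ∀ j, 0 ≤ ρ δ j)
    (hξ : Function.Injective ξ) (hk : 1 / 2 < ρ 0 k) :
    ∀ᶠ δ in 𝓝[≠] 0, HasForceSign (ρ δ) ξ (ξ k + δ) δ := by
  classical
  obtain ⟨κ, hκ, hκk⟩ : ∃ κ > 0, κ + 1 < 2 * ρ 0 k :=
    ⟨ρ 0 k - 1 / 2, by linarith, by linarith⟩
  let B := |∑ j, ρ 0 j / (ξ k - ξ j)| + 1
  have hrest := eventually_abs_sum_erase_sub_lt hρ hξ k 1 one_pos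
  have hκδ : ∀ᶠ δ in 𝓝 0, κ + 1 < 2 * ρ δ k :=
    continuousAt_const.eventually_lt (continuousAt_const.mul (hρ k)) hκk
  have hsmall : ∀ᶠ δ : ℝ in 𝓝 0, |δ| < κ ∧ B * (|δ| + |δ| / κ) < 1 / 2 :=
    (ContinuousAt.eventually_lt (by fun_prop) (by fun_prop) (by simpa using hκ)).and
      (ContinuousAt.eventually_lt (by fun_prop) (by fun_prop) (by simp))
  filter_upwards [self_mem_nhdsWithin, nhdsWithin_le_nhds hrest, nhdsWithin_le_nhds hκδ,
    nhdsWithin_le_nhds hsmall, nhdsWithin_le_nhds hρ0] with δ hδ hrest hκδ hsmall hρ0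
  refine .of_le (τ := |δ| / κ) hδ (fun T hT hle => ?_) fun T hT => ?_
  · have h := mul_two_mul_sub_one_le_sq hρ0 (k := k) (by simpa using hδ) hT hle
    rw [add_sub_cancel_left] at h
    rw [div_mul_eq_mul_div, le_div_iff₀ hκ, abs_mul_abs_self]
    nlinarith
  · have hT1 : T ∈ Icc 0 (1 * |δ|) :=
      ⟨hT.1, hT.2.trans (by gcongr; exact (div_le_one hκ).2 hsmall.1.le)⟩
    have hB := abs_sub_abs_le_abs_sub (∑ j ∈ Finset.univ.erase k,
      ρ δ j * (ξ k + δ - ξ j) / ((ξ k + δ - ξ j) ^ 2 + T)) (∑ j, ρ 0 j / (ξ k - ξ j))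
    calc _ ≤ B * (|δ| + |δ| / κ) := by
          gcongr
          linarith [hrest T hT1]
      _ < ρ δ k := by linarith [hsmall.2]

theorem exists_eventually_le_mul_abs {c B : ℝ} (hc : 0 < c) (hB : 0 < B) :
    ∃ C > 0, ∀ᶠ d in 𝓝 0, ∀ T ≥ 0,
      2 * T * ((1 / 2 - d ^ 2) / (d ^ 2 + T) + c / (B + T)) ≤ 1 → T ≤ C * |d| := by
  let K := 2 / c * (B + (1 + 2 * B) ^ 2 / (2 * c))
  have hK : 0 < K := by positivity
  have hsmall : ∀ᶠ d : ℝ in 𝓝 0, d ^ 2 < 1 ∧ 2 * d ^ 2 < c :=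
    (ContinuousAt.eventually_lt (by fun_prop) (by fun_prop) (by simp)).and
      (ContinuousAt.eventually_lt (by fun_prop) (by fun_prop) (by simpa using hc))
  refine ⟨√K, Real.sqrt_pos.2 hK, ?_⟩
  filter_upwards [hsmall] with d ⟨hd1, hdc⟩ T hT hle
  rcases hT.eq_or_lt with rfl | hT
  · positivity
  have hquad : c * T ^ 2 ≤ d ^ 2 * (B + (1 + 2 * B) * T) := by
    have hcombine : 2 * T * ((1 / 2 - d ^ 2) / (d ^ 2 + T) + c / (B + T)) =
        2 * T * ((1 / 2 - d ^ 2) * (B + T) + c * (d ^ 2 + T)) / ((d ^ 2 + T) * (B + T)) := by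
      field_simp
    rw [hcombine, div_le_one (by positivity)] at hle
    nlinarith [mul_nonneg (mul_nonneg hc.le hT.le) (sq_nonneg d),
      mul_nonneg (sub_nonneg.2 hdc.le) (sq_nonneg T)]
  have hyoung : d ^ 2 * ((1 + 2 * B) * T) ≤
      c / 2 * T ^ 2 + d ^ 2 * ((1 + 2 * B) ^ 2 / (2 * c)) := by
    have hd4 : (d ^ 2) ^ 2 ≤ d ^ 2 := pow_le_of_le_one (sq_nonneg d) hd1.le two_ne_zero
    calc d ^ 2 * ((1 + 2 * B) * T) ≤ (c ^ 2 * T ^ 2 + d ^ 2 * (1 + 2 * B) ^ 2) / (2 * c) := by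
          rw [le_div_iff₀ (by positivity)]
          nlinarith [sq_nonneg (c * T - d ^ 2 * (1 + 2 * B)),
            mul_le_mul_of_nonneg_right hd4 (sq_nonneg (1 + 2 * B))]
      _ = _ := by field_simp
  have hsq : T ^ 2 ≤ K * d ^ 2 := by
    have : K * d ^ 2 = 2 / c * (d ^ 2 * (B + (1 + 2 * B) ^ 2 / (2 * c))) := by ring
    rw [this, div_mul_eq_mul_div, le_div_iff₀ hc]
    linarith
  calc T ≤ √(K * d ^ 2) := Real.le_sqrt_of_sq_le hsq
    _ = √K * |d| := by rw [Real.sqrt_mul hK.le, Real.sqrt_sq_eq_abs]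

/-- The charge at `ξ k` falls short of `1 / 2` only to second order, so the arc over `ξ k` has
height `O(√δ)` at distance `δ`; there the force of the other charges, which vanishes in the limit,
cannot compete with that of `ξ k` itself. -/
theorem eventually_hasForceSign_of_eq_half_sub_sq {ρ : ℝ → ι → ℝ}
    (hρ : ∀ j, ContinuousAt (fun δ => ρ δ j) 0) (hρ0 : ∀ᶠ δ in 𝓝 0, ∀ j, 0 ≤ ρ δ j)
    (hξ : Function.Injective ξ) (hk : ∀ δ, ρ δ k = 1 / 2 - δ ^ 2) {i : ι} (hik : i ≠ k)
    (hi : 0 < ρ 0 i) (hequil : ∑ j, ρ 0 j / (ξ k - ξ j) = 0) :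
    ∀ᶠ δ in 𝓝[≠] 0, HasForceSign (ρ δ) ξ (ξ k + δ) δ := by
  classical
  obtain ⟨C, hC, hCT⟩ := exists_eventually_le_mul_abs (half_pos hi)
    (B := (ξ k - ξ i) ^ 2 + 1) (by positivity)
  have hrest := eventually_abs_sum_erase_sub_lt hρ hξ k C (e := 1 / (4 * (1 + C))) (by positivity)
  have hki : 0 < (ξ k + 0 - ξ i) ^ 2 := by
    simpa [sq_pos_iff, sub_eq_zero] using (hξ.ne hik).symm
  have hsmall : ∀ᶠ δ in 𝓝 0, |δ| < 1 / 2 ∧ ρ 0 i / 2 < ρ δ i ∧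
      (ξ k + δ - ξ i) ^ 2 ∈ Ioo 0 ((ξ k - ξ i) ^ 2 + 1) :=
    (ContinuousAt.eventually_lt (by fun_prop) (by fun_prop) (by simp)).and
      ((continuousAt_const.eventually_lt (hρ i) (by simpa using hi)).and
        (ContinuousAt.eventually_mem (by fun_prop) (Ioo_mem_nhds hki (by simp))))
  filter_upwards [self_mem_nhdsWithin, nhdsWithin_le_nhds hrest, nhdsWithin_le_nhds hCT,
    nhdsWithin_le_nhds hsmall, nhdsWithin_le_nhds hρ0] with δ hδ hrest hCT ⟨hδ2, hi2, hξi⟩ hρ0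
  refine .of_le (τ := C) hδ (fun T hT hle => ?_) fun T hT => ?_
  · refine hCT T hT (le_trans ?_ hle)
    have hpair : ρ δ k / ((ξ k + δ - ξ k) ^ 2 + T) + ρ δ i / ((ξ k + δ - ξ i) ^ 2 + T) ≤
        ∑ j, ρ δ j / ((ξ k + δ - ξ j) ^ 2 + T) := by
      rw [← Finset.sum_pair hik.symm (f := fun j => ρ δ j / ((ξ k + δ - ξ j) ^ 2 + T))]
      exact Finset.sum_le_univ_sum_of_nonneg fun j => div_nonneg (hρ0 j) (by positivity)
    rw [add_sub_cancel_left, hk] at hpair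
    have hother : ρ 0 i / 2 / ((ξ k - ξ i) ^ 2 + 1 + T) ≤ ρ δ i / ((ξ k + δ - ξ i) ^ 2 + T) :=
      div_le_div₀ (hρ0 i) hi2.le (add_pos_of_pos_of_nonneg hξi.1 hT) (by linarith [hξi.2])
    gcongr
    linarith
  · rw [hequil] at hrest
    have hδ4 : δ ^ 2 < 1 / 4 := by
      rw [← sq_abs]; nlinarith [abs_nonneg δ]
    calc _ ≤ 1 / (4 * (1 + C)) * (1 + C) := by
          gcongr
          · simpa using (hrest T hT).le
          · linarith
      _ = 1 / 4 := by field_simp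
      _ < ρ δ k := by rw [hk]; linarith

end ForceSign

section StrongShear

variable {M : ℕ} {a δ : ℝ}

/-- Charges of total `a`: slightly less than `1 / 2` each at the inner points, with the rest shared
equally by the two end points. -/
noncomputable def equilibriumCharge (M : ℕ) (a δ : ℝ) (k : Fin (M + 2)) : ℝ :=
  if k = 0 ∨ k = Fin.last (M + 1) then (a - M * (1 / 2 - δ ^ 2)) / 2 else 1 / 2 - δ ^ 2

theorem equilibriumCharge_of_inner {k : Fin (M + 2)} (h0 : k ≠ 0) (hl : k ≠ Fin.last (M + 1)) :
    equilibriumCharge M a δ k = 1 / 2 - δ ^ 2 :=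
  if_neg (not_or.2 ⟨h0, hl⟩)

theorem half_lt_equilibriumCharge (ha : 1 + (M : ℝ) / 2 < a) {k : Fin (M + 2)}
    (hk : k = 0 ∨ k = Fin.last (M + 1)) : 1 / 2 < equilibriumCharge M a δ k := by
  rw [equilibriumCharge, if_pos hk]
  nlinarith [mul_nonneg M.cast_nonneg (sq_nonneg δ) (α := ℝ)]

theorem equilibriumCharge_pos (ha : 1 + (M : ℝ) / 2 < a) (hδ : δ ^ 2 < 1 / 2) (k : Fin (M + 2)) :
    0 < equilibriumCharge M a δ k := by
  by_cases hk : k = 0 ∨ k = Fin.last (M + 1)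
  · linarith [half_lt_equilibriumCharge (δ := δ) ha hk]
  · rw [equilibriumCharge, if_neg hk]
    linarith

theorem equilibriumCharge_neg : equilibriumCharge M a (-δ) = equilibriumCharge M a δ := by
  funext k
  simp only [equilibriumCharge, neg_sq]

theorem sum_equilibriumCharge : ∑ k, equilibriumCharge M a δ k = a := by
  have hinner (i : Fin M) : equilibriumCharge M a δ i.castSucc.succ = 1 / 2 - δ ^ 2 :=
    equilibriumCharge_of_inner (Fin.succ_ne_zero _) (by simp [← Fin.succ_last, i.castSucc_ne_last])
  rw [Fin.sum_univ_succ, Fin.sum_univ_castSucc, Finset.sum_congr rfl fun i _ => hinner i]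
  simp [equilibriumCharge]
  ring

theorem continuous_equilibriumCharge (k : Fin (M + 2)) :
    Continuous fun δ => equilibriumCharge M a δ k := by
  unfold equilibriumCharge
  split_ifs <;> fun_prop

theorem eventually_hasForceSign_equilibriumCharge (ha : 1 + (M : ℝ) / 2 < a)
    {ξ : Fin (M + 2) → ℝ} (hξ : Function.Injective ξ)
    (hequil : ∀ k, k ≠ 0 → k ≠ Fin.last (M + 1) →
      ∑ j, equilibriumCharge M a 0 j / (ξ k - ξ j) = 0) :
    ∀ᶠ δ in 𝓝[≠] 0, ∀ k, HasForceSign (equilibriumCharge M a δ) ξ (ξ k + δ) δ := by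
  have hnonneg : ∀ᶠ δ : ℝ in 𝓝 0, ∀ k, 0 ≤ equilibriumCharge M a δ k := by
    have hsmall : ∀ᶠ δ : ℝ in 𝓝 0, δ ^ 2 < 1 / 2 :=
      ContinuousAt.eventually_lt (by fun_prop) (by fun_prop) (by simp)
    filter_upwards [hsmall] with δ hδ k
    exact (equilibriumCharge_pos ha hδ k).le
  have hcont (k : Fin (M + 2)) := (continuous_equilibriumCharge (a := a) k).continuousAt (x := 0)
  refine eventually_all.2 fun k => ?_
  by_cases hk : k = 0 ∨ k = Fin.last (M + 1)
  · exact eventually_hasForceSign_of_half_lt hcont hnonneg hξ (half_lt_equilibriumCharge ha hk)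
  · obtain ⟨h0, hl⟩ := not_or.1 hk
    exact eventually_hasForceSign_of_eq_half_sub_sq hcont hnonneg hξ
      (fun δ => equilibriumCharge_of_inner h0 hl) (Ne.symm h0)
      (equilibriumCharge_pos ha (by simp) 0) (hequil k h0 hl)

theorem exists_pos_hasForceSign_equilibriumCharge (ha : 1 + (M : ℝ) / 2 < a)
    {ξ : Fin (M + 2) → ℝ} (hξ : StrictMono ξ)
    (hequil : ∀ k, k ≠ 0 → k ≠ Fin.last (M + 1) →
      ∑ j, equilibriumCharge M a 0 j / (ξ k - ξ j) = 0) :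
    ∃ δ > 0, δ ^ 2 < 1 / 2 ∧ (∀ i j, i < j → 2 * δ < ξ j - ξ i) ∧
      (∀ k, HasForceSign (equilibriumCharge M a δ) ξ (ξ k + δ) δ) ∧
      ∀ k, HasForceSign (equilibriumCharge M a δ) ξ (ξ k + -δ) (-δ) := by
  have hsq : ∀ᶠ δ : ℝ in 𝓝 0, δ ^ 2 < 1 / 2 :=
    ContinuousAt.eventually_lt (by fun_prop) (by fun_prop) (by simp)
  have hsep : ∀ᶠ δ : ℝ in 𝓝 0, ∀ i j, i < j → 2 * δ < ξ j - ξ i :=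
    eventually_all.2 fun i => eventually_all.2 fun j => eventually_imp_distrib_left.2 fun hij =>
      ContinuousAt.eventually_lt (by fun_prop) (by fun_prop) (by simpa using hξ hij)
  have hright := eventually_hasForceSign_equilibriumCharge ha hξ.injective hequil
  have hleft : ∀ᶠ δ in 𝓝[>] 0, ∀ k,
      HasForceSign (equilibriumCharge M a δ) ξ (ξ k + -δ) (-δ) := by
    have hneg : Tendsto Neg.neg (𝓝[>] (0 : ℝ)) (𝓝[<] 0) := by
      simpa using tendsto_neg_nhdsGT_neg (a := (0 : ℝ))
    simpa only [equilibriumCharge_neg] using hneg.eventually (nhdsLT_le_nhdsNE _ hright)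
  exact (eventually_mem_nhdsWithin.and <| (hsq.filter_mono nhdsWithin_le_nhds).and <|
    (hsep.filter_mono nhdsWithin_le_nhds).and <|
    (hright.filter_mono (nhdsGT_le_nhdsNE _)).and hleft).exists

/-- The increasing sequence `ξ₀ + δ, ξ₁ - δ, ξ₁ + δ, ξ₂ - δ, …`. -/
noncomputable def flankingPoint (ξ : Fin (M + 2) → ℝ) (δ : ℝ) (n : ℕ) : ℝ :=
  ξ (Fin.ofNat (M + 2) ((n + 1) / 2)) + (-1) ^ n * δ

theorem strictMonoOn_flankingPoint {ξ : Fin (M + 2) → ℝ} (hδ : 0 < δ)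
    (hsep : ∀ i j, i < j → 2 * δ < ξ j - ξ i) :
    StrictMonoOn (flankingPoint ξ δ) (Iic (2 * (M + 1) - 1)) := by
  intro m _ n hn hmn
  rw [mem_Iic] at hn
  rcases (show (m + 1) / 2 ≤ (n + 1) / 2 by omega).lt_or_eq with h | h
  · have hlt : Fin.ofNat (M + 2) ((m + 1) / 2) < Fin.ofNat (M + 2) ((n + 1) / 2) := by
      rw [Fin.lt_def, Fin.val_ofNat, Fin.val_ofNat, Nat.mod_eq_of_lt (by omega),
        Nat.mod_eq_of_lt (by omega)]
      exact h
    have := hsep _ _ hlt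
    unfold flankingPoint
    rcases neg_one_pow_eq_or ℝ m with hm | hm <;> rcases neg_one_pow_eq_or ℝ n with hn | hn <;>
      rw [hm, hn] <;> linarith
  · have hm : Odd m := by rw [Nat.odd_iff]; omega
    have hn : Even n := by rw [Nat.even_iff]; omega
    rw [flankingPoint, flankingPoint, h, hm.neg_one_pow, hn.neg_one_pow]
    linarith

theorem flankingPoint_ne {ξ : Fin (M + 2) → ℝ} (hδ : 0 < δ)
    (hsep : ∀ i j, i < j → 2 * δ < ξ j - ξ i) (n : ℕ) (i : Fin (M + 2)) :
    flankingPoint ξ δ n ≠ ξ i := by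
  unfold flankingPoint
  rcases lt_trichotomy i (Fin.ofNat (M + 2) ((n + 1) / 2)) with h | rfl | h
  · have := hsep _ _ h
    rcases neg_one_pow_eq_or ℝ n with hn | hn <;> rw [hn] <;> linarith
  · simp [hδ.ne']
  · have := hsep _ _ h
    rcases neg_one_pow_eq_or ℝ n with hn | hn <;> rw [hn] <;> linarith

theorem CollinearLens.IsReciprocal.neg_one_pow_mul_arcDisp_flankingPoint_neg
    {L : CollinearLens (M + 1)} {ρ ξ : Fin (M + 2) → ℝ} (hrec : L.IsReciprocal ρ ξ)
    (hρ : ∀ k, 0 < ρ k) (hδ : 0 < δ) (hsep : ∀ i j, i < j → 2 * δ < ξ j - ξ i)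
    (hright : ∀ k, HasForceSign ρ ξ (ξ k + δ) δ) (hleft : ∀ k, HasForceSign ρ ξ (ξ k + -δ) (-δ))
    (n : ℕ) : (-1) ^ n * L.arcDisp (flankingPoint ξ δ n) < 0 := by
  have hne := flankingPoint_ne hδ hsep n
  have hsign : HasForceSign ρ ξ (flankingPoint ξ δ n) ((-1) ^ n * δ) := by
    unfold flankingPoint
    rcases neg_one_pow_eq_or ℝ n with hn | hn
    · simpa [hn] using hright _
    · simpa [hn] using hleft _
  have hforce := hsign _ (L.arcHeightSq_nonneg _) (hrec.two_mul_arcHeightSq_mul_sum_le_one hρ hne)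
  have hre := re_cauchyTransform ρ ξ (L.arcPoint (flankingPoint ξ δ n))
  rw [L.im_arcPoint_sq] at hre
  have := hrec.arcDisp_mul_neg hne (hre ▸ hforce)
  nlinarith

theorem exists_lensSolutions_ncard_eq_of_mul_lt_two {γ : ℝ} (hγ0 : 0 < γ) (hγ1 : γ < 1)
    (hstrong : ((M : ℝ) + 2) * (1 - γ) < 2) :
    ∃ (ε : Fin (M + 1) → ℝ) (z : Fin (M + 1) → ℂ), (∀ j, 0 < ε j) ∧ Function.Injective z ∧
      (lensSolutions (M + 1) γ ε z).Finite ∧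
      (lensSolutions (M + 1) γ ε z).ncard = 5 * (M + 1) - 1 := by
  have ha : 1 + (M : ℝ) / 2 < (1 - γ)⁻¹ := by
    rw [← one_div, lt_div_iff₀ (by linarith)]
    linarith
  obtain ⟨ξ, hξ, -, -, hequil⟩ := exists_equilibrium (equilibriumCharge_pos ha (δ := 0) (by simp))
  obtain ⟨δ, hδ, hsq, hsep, hright, hleft⟩ :=
    exists_pos_hasForceSign_equilibriumCharge ha hξ hequil
  have hρ := equilibriumCharge_pos ha hsq
  obtain ⟨L, rfl, hpos, hrec⟩ :=
    CollinearLens.exists_isReciprocal hγ0 hξ hρ sum_equilibriumCharge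
  refine L.exists_lensSolutions_ncard_eq hγ1 (fun x hx hzero => ?_)
    (strictMonoOn_flankingPoint hδ hsep)
    (fun n _ => hrec.neg_one_pow_mul_arcDisp_flankingPoint_neg hρ hδ hsep hright hleft n)
  obtain ⟨k, rfl⟩ := hrec.exists_eq_of_realDisp_eq_zero hx hzero
  by_cases h0 : k = 0
  · exact .inl fun j => (hξ.monotone (h0 ▸ Fin.zero_le _)).trans_lt (hpos j).1
  by_cases hl : k = Fin.last (M + 1)
  · exact .inr fun j => (hpos j).2.trans_le (hξ.monotone (hl ▸ Fin.le_last _))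
  · refine absurd (hrec.mem_arcDomain hξ.injective (hρ k) ?_) hx
    rw [equilibriumCharge_of_inner h0 hl]
    linarith [pow_pos hδ 2]

end StrongShear

section RootsOfUnity

variable {K : Type*} [Field K] {m N : ℕ} {ω ζ : K}

theorem sum_one_div_sub_pow_primitiveRoot (hω : IsPrimitiveRoot ω m) (hζ : ζ ^ m ≠ 1) :
    ∑ k ∈ Finset.range m, 1 / (ζ - ω ^ k) = m * ζ ^ (m - 1) / (ζ ^ m - 1) := by
  have h := (X_pow_sub_one_splits hω).eval_derivative_div_eval_of_ne_zero (x := ζ)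
    (by simpa [sub_eq_zero] using hζ)
  rw [← nthRoots, hω.nthRoots_eq (one_pow m), Multiset.map_map] at h
  simpa [derivative_X_pow, Finset.sum] using h.symm

theorem sub_pow_ne_zero_of_pow_ne_one (hω : ω ^ m = 1) (hζ : ζ ^ m ≠ 1) (k : ℕ) :
    ζ - ω ^ k ≠ 0 := by
  refine sub_ne_zero.2 fun h => hζ ?_
  rw [h, ← pow_mul, mul_comm, pow_mul, hω, one_pow]

theorem sum_sq_sub_one_div_sub_pow_primitiveRoot (hω : IsPrimitiveRoot ω m) (hm : 1 < m)
    (hζ : ζ ^ m ≠ 1) :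
    ∑ k ∈ Finset.range m, ((ω ^ k) ^ 2 - 1) / (ζ - ω ^ k) =
      (ζ ^ 2 - 1) * (m * ζ ^ (m - 1) / (ζ ^ m - 1)) - m * ζ := by
  have hterm (k : ℕ) :
      ((ω ^ k) ^ 2 - 1) / (ζ - ω ^ k) = (ζ ^ 2 - 1) * (1 / (ζ - ω ^ k)) - ζ - ω ^ k := by
    have := sub_pow_ne_zero_of_pow_ne_one hω.pow_eq_one hζ k
    field_simp
    ring
  simp_rw [hterm, Finset.sum_sub_distrib, ← Finset.mul_sum,
    sum_one_div_sub_pow_primitiveRoot hω hζ, hω.geom_sum_eq_zero hm]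
  simp

theorem sum_range_two_mul_eq_sum_add_reflect {M : Type*} [AddCommMonoid M] (g : ℕ → M)
    (hzero : g 0 = 0) (hhalf : g (N + 1) = 0) :
    ∑ k ∈ Finset.range (2 * (N + 1)), g k =
      ∑ k ∈ Finset.range N, (g (k + 1) + g (2 * (N + 1) - (k + 1))) := by
  rw [two_mul, Finset.sum_range_add, Finset.sum_range_succ', Finset.sum_range_succ', hzero,
    add_zero, add_zero, hhalf, add_zero, Finset.sum_add_distrib,
    ← Finset.sum_range_reflect fun k => g (N + 1 + (k + 1))]
  congr 1
  refine Finset.sum_congr rfl fun k hk => congrArg g ?_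
  have := Finset.mem_range.1 hk
  omega

theorem sub_inv_sq_div_joukowski_sub {η : K} (hη : η ≠ 0) (hζ : ζ ≠ 0) (hsub : ζ - η ≠ 0)
    (hsub' : ζ - η⁻¹ ≠ 0) :
    (η - η⁻¹) ^ 2 / (ζ + ζ⁻¹ - (η + η⁻¹)) =
      (η ^ 2 - 1) / (ζ - η) + (η⁻¹ ^ 2 - 1) / (ζ - η⁻¹) := by
  have hfactor : ζ + ζ⁻¹ - (η + η⁻¹) = (ζ - η) * (ζ - η⁻¹) / ζ := by
    field_simp
    ring
  rw [hfactor, div_add_div _ _ hsub hsub', div_div_eq_mul_div]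
  congr 1
  field_simp
  ring

theorem sum_sub_inv_sq_div_joukowski_sub (hω : IsPrimitiveRoot ω (2 * (N + 1))) (hζ0 : ζ ≠ 0)
    (hζ : ζ ^ (2 * (N + 1)) ≠ 1) :
    ∑ k ∈ Finset.range N,
        (ω ^ (k + 1) - (ω ^ (k + 1))⁻¹) ^ 2 / (ζ + ζ⁻¹ - (ω ^ (k + 1) + (ω ^ (k + 1))⁻¹)) =
      2 * (N + 1) * ((ζ - ζ⁻¹) / (ζ ^ (2 * (N + 1)) - 1) - ζ⁻¹) := by
  have hsub := sub_pow_ne_zero_of_pow_ne_one hω.pow_eq_one hζ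
  have hfold := sum_range_two_mul_eq_sum_add_reflect (N := N)
    (fun k => ((ω ^ k) ^ 2 - 1) / (ζ - ω ^ k)) (by simp)
    (by rw [← pow_mul, mul_comm (N + 1), hω.pow_eq_one, sub_self, zero_div])
  calc _ = _ := Finset.sum_congr rfl fun k hk => ?_
    _ = _ := hfold.symm
    _ = _ := sum_sq_sub_one_div_sub_pow_primitiveRoot hω (by omega) hζ
    _ = _ := ?_
  · have hinv : ω ^ (2 * (N + 1) - (k + 1)) = (ω ^ (k + 1))⁻¹ := by
      have := Finset.mem_range.1 hk
      refine eq_inv_of_mul_eq_one_left ?_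
      rw [← pow_add, Nat.sub_add_cancel (by omega), hω.pow_eq_one]
    have hreflect := hsub (2 * (N + 1) - (k + 1))
    rw [hinv] at hreflect ⊢
    exact sub_inv_sq_div_joukowski_sub (pow_ne_zero _ (hω.ne_zero (by omega))) hζ0 (hsub _)
      hreflect
  · have hden : ζ ^ (2 * (N + 1)) - 1 ≠ 0 := sub_ne_zero.2 hζ
    rw [eq_div_of_mul_eq hζ0 (pow_sub_one_mul (by omega) ζ)]
    push_cast
    generalize ζ ^ (2 * (N + 1)) = q at hden ⊢
    field_simp
    ring

end RootsOfUnity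

section GridAngle

variable {m k : ℕ}

/-- The `k`-th of the `m + 1` equally spaced angles from `0` to `π`. -/
noncomputable def gridAngle (m k : ℕ) : ℝ := k * Real.pi / m

theorem gridAngle_strictMono (hm : m ≠ 0) : StrictMono (gridAngle m) := by
  intro i j hij
  unfold gridAngle
  have := Real.pi_pos
  gcongr

theorem mul_gridAngle (hm : m ≠ 0) (k : ℕ) : m * gridAngle m k = k * Real.pi :=
  mul_div_cancel₀ _ (Nat.cast_ne_zero.2 hm)

theorem gridAngle_zero (m : ℕ) : gridAngle m 0 = 0 := by simp [gridAngle]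

theorem gridAngle_self (hm : m ≠ 0) : gridAngle m m = Real.pi :=
  mul_div_cancel_left₀ _ (Nat.cast_ne_zero.2 hm)

theorem gridAngle_pos (hm : m ≠ 0) (hk : 0 < k) : 0 < gridAngle m k :=
  gridAngle_zero m ▸ gridAngle_strictMono hm hk

theorem gridAngle_lt_pi (hk : k < m) : gridAngle m k < Real.pi :=
  gridAngle_self (by lia : m ≠ 0) ▸ gridAngle_strictMono (by lia) hk

theorem sin_gridAngle_pos (hk : 0 < k) (hkm : k < m) : 0 < Real.sin (gridAngle m k) :=
  Real.sin_pos_of_pos_of_lt_pi (gridAngle_pos (by lia) hk) (gridAngle_lt_pi hkm)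

theorem exp_pow_eq_exp_gridAngle (hm : m ≠ 0) (k : ℕ) :
    Complex.exp (2 * Real.pi * Complex.I / (2 * m : ℕ)) ^ k =
      Complex.exp (gridAngle m k * Complex.I) := by
  rw [← Complex.exp_nat_mul, gridAngle]
  push_cast
  have : (m : ℂ) ≠ 0 := Nat.cast_ne_zero.2 hm
  congr 1
  field_simp

end GridAngle

theorem ofReal_two_mul_cos (θ : ℝ) : ((2 * Real.cos θ : ℝ) : ℂ) =
    Complex.exp (θ * Complex.I) + (Complex.exp (θ * Complex.I))⁻¹ := by
  rw [← Complex.exp_neg, ← neg_mul, ← Complex.two_cos]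
  push_cast
  rfl

theorem exp_sub_inv (θ : ℝ) : Complex.exp (θ * Complex.I) - (Complex.exp (θ * Complex.I))⁻¹ =
    2 * Complex.I * Real.sin θ := by
  have hsin := Complex.two_sin (θ : ℂ)
  rw [neg_mul, Complex.exp_neg] at hsin
  push_cast
  linear_combination -Complex.I * hsin + (Complex.exp (θ * Complex.I) -
    (Complex.exp (θ * Complex.I))⁻¹) * Complex.I_sq

theorem ofReal_four_mul_sin_sq (θ : ℝ) : ((4 * Real.sin θ ^ 2 : ℝ) : ℂ) =
    -(Complex.exp (θ * Complex.I) - (Complex.exp (θ * Complex.I))⁻¹) ^ 2 := by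
  rw [exp_sub_inv, mul_pow, mul_pow, Complex.I_sq]
  push_cast
  ring

section WeakShear

variable {N : ℕ} {γ : ℝ}

/-- Masses at the Chebyshev nodes `2 * cos (k * π / (N + 1))`, `1 ≤ k ≤ N`, weighted so that
`lensMap (ζ + ζ⁻¹) = γ * ζ + γ⁻¹ * ζ⁻¹` up to a term of order `ζ ^ (1 - 2 * (N + 1))`. Indices are
reversed because the cosine is decreasing. -/
noncomputable def chebyshevLens (N : ℕ) (hγ0 : 0 < γ) (hγ1 : γ < 1) : CollinearLens N where
  shear := γ
  shift := 0
  mass j := 2 * (γ⁻¹ - γ) / (N + 1) * Real.sin (gridAngle (N + 1) (j.rev + 1)) ^ 2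
  pos j := 2 * Real.cos (gridAngle (N + 1) (j.rev + 1))
  shear_pos := hγ0
  mass_pos j := by
    have := sin_gridAngle_pos (m := N + 1) (Nat.succ_pos j.rev) (by lia)
    have : 0 < γ⁻¹ - γ := sub_pos.2 (hγ1.trans (one_lt_inv_iff₀.2 ⟨hγ0, hγ1⟩))
    positivity
  pos_strictMono i j hij := by
    have hrev : (j.rev : ℕ) + 1 < i.rev + 1 := Nat.succ_lt_succ (Fin.rev_lt_rev.2 hij)
    exact mul_lt_mul_of_pos_left (Real.cos_lt_cos_of_nonneg_of_le_pi
      (gridAngle_pos (by lia) (Nat.succ_pos _)).le (gridAngle_lt_pi (by lia)).le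
      (gridAngle_strictMono (by lia) hrev)) two_pos

namespace chebyshevLens

variable (hγ0 : 0 < γ) (hγ1 : γ < 1) {ζ : ℂ}

theorem sum_mass_div_joukowski_sub (hζ0 : ζ ≠ 0) (hζ : ζ ^ (2 * (N + 1)) ≠ 1) :
    ∑ j, ((chebyshevLens N hγ0 hγ1).mass j : ℂ) /
        (ζ + ζ⁻¹ - (chebyshevLens N hγ0 hγ1).pos j) =
      ((γ : ℂ)⁻¹ - γ) * (ζ⁻¹ - (ζ - ζ⁻¹) / (ζ ^ (2 * (N + 1)) - 1)) := by
  have hN : (N : ℂ) + 1 ≠ 0 := Nat.cast_add_one_ne_zero N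
  have hsum := sum_sub_inv_sq_div_joukowski_sub
    (Complex.isPrimitiveRoot_exp (2 * (N + 1)) (by lia)) hζ0 hζ
  simp_rw [exp_pow_eq_exp_gridAngle N.add_one_ne_zero] at hsum
  set g : ℕ → ℂ := fun k =>
    (4 * Real.sin (gridAngle (N + 1) (k + 1)) ^ 2 : ℝ) /
      (ζ + ζ⁻¹ - (2 * Real.cos (gridAngle (N + 1) (k + 1)) : ℝ)) with hg
  simp_rw [ofReal_two_mul_cos, ofReal_four_mul_sin_sq, neg_div] at hg
  calc _ = ∑ j : Fin N, ((γ : ℂ)⁻¹ - γ) / (2 * (N + 1)) * g (Fin.revPerm j) := by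
        refine Finset.sum_congr rfl fun j _ => ?_
        simp only [chebyshevLens, g, Fin.revPerm_apply]
        push_cast
        field_simp
        ring
    _ = ((γ : ℂ)⁻¹ - γ) / (2 * (N + 1)) * ∑ k ∈ Finset.range N, g k := by
        rw [← Finset.mul_sum, Equiv.sum_comp Fin.revPerm fun j : Fin N => g j,
          Fin.sum_univ_eq_sum_range]
    _ = _ := by
        rw [hg, Finset.sum_neg_distrib, hsum]
        field_simp
        ring

theorem lensMap_joukowski (hζ0 : ζ ≠ 0) (hζ : ζ ^ (2 * (N + 1)) ≠ 1) :
    (chebyshevLens N hγ0 hγ1).lensMap (ζ + ζ⁻¹) =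
      γ * ζ + (γ : ℂ)⁻¹ * ζ⁻¹ - ((γ : ℂ)⁻¹ - γ) * ((ζ - ζ⁻¹) / (ζ ^ (2 * (N + 1)) - 1)) := by
  rw [CollinearLens.lensMap, sum_mass_div_joukowski_sub hγ0 hγ1 hζ0 hζ]
  simp only [chebyshevLens, Complex.ofReal_zero]
  ring

theorem lensMap_joukowski_of_mul_normSq_eq_one (hnorm : γ * Complex.normSq ζ = 1)
    (hζ : ζ ^ (2 * (N + 1)) ≠ 1) :
    (chebyshevLens N hγ0 hγ1).lensMap (ζ + ζ⁻¹) =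
      conj (ζ + ζ⁻¹) - ((γ : ℂ)⁻¹ - γ) * ((ζ - ζ⁻¹) / (ζ ^ (2 * (N + 1)) - 1)) := by
  have hζ0 : ζ ≠ 0 := by
    rintro rfl
    simp at hnorm
  have hconj : (γ : ℂ)⁻¹ * ζ⁻¹ = conj ζ := by
    rw [← mul_inv, inv_eq_of_mul_eq_one_right]
    rw [mul_assoc, Complex.mul_conj]
    exact_mod_cast hnorm
  have hconj' : conj ζ⁻¹ = γ * ζ := by
    rw [map_inv₀, ← hconj, mul_inv, inv_inv, inv_inv]
  rw [lensMap_joukowski hγ0 hγ1 hζ0 hζ, hconj, map_add, hconj', add_comm (conj ζ)]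

end chebyshevLens

end WeakShear

section JoukowskiCircle

variable {m k : ℕ} {R θ : ℝ}

theorem circleMap_zero_add_inv (R θ : ℝ) : circleMap 0 R θ + (circleMap 0 R θ)⁻¹ =
    ⟨(R + R⁻¹) * Real.cos θ, (R - R⁻¹) * Real.sin θ⟩ := by
  apply Complex.ext <;>
    simp only [circleMap_zero_inv, Complex.add_re, Complex.add_im, circleMap_zero_re,
      circleMap_zero_im, Real.cos_neg, Real.sin_neg] <;>
    ring

theorem im_circleMap_zero_sub_inv (R θ : ℝ) :
    (circleMap 0 R θ - (circleMap 0 R θ)⁻¹).im = (R + R⁻¹) * Real.sin θ := by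
  simp only [circleMap_zero_inv, Complex.sub_im, circleMap_zero_im, Real.sin_neg]
  ring

theorem circleMap_zero_pow_gridAngle (hm : m ≠ 0) (R : ℝ) (k : ℕ) :
    circleMap 0 R (gridAngle m k) ^ m = ((-1) ^ k * R ^ m : ℝ) := by
  rw [circleMap_zero_pow, mul_gridAngle hm, Complex.ext_iff, circleMap_zero_re, circleMap_zero_im,
    Real.cos_nat_mul_pi, Real.sin_nat_mul_pi]
  exact ⟨(mul_comm _ _).trans (Complex.ofReal_re _).symm,
    (mul_zero _).trans (Complex.ofReal_im _).symm⟩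

theorem circleMap_zero_pow_ne_one (hm : m ≠ 0) (hR : 1 < R) (θ : ℝ) : circleMap 0 R θ ^ m ≠ 1 := by
  intro h
  have := congrArg norm h
  rw [norm_pow, norm_circleMap_zero, abs_of_pos (by linarith), norm_one] at this
  exact (one_lt_pow₀ hR hm).ne' this

theorem neg_one_pow_mul_im_circleMap_zero_sub_inv_div_pos (hR : 1 < R) (hk : 0 < k)
    (hkm : k < m) : 0 < (-1) ^ k * ((circleMap 0 R (gridAngle m k) -
      (circleMap 0 R (gridAngle m k))⁻¹) / (circleMap 0 R (gridAngle m k) ^ m - 1)).im := by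
  have hRm : 1 < R ^ m := one_lt_pow₀ hR (by lia)
  have hsin := sin_gridAngle_pos hk hkm
  have hreal : circleMap 0 R (gridAngle m k) ^ m - 1 = ((-1) ^ k * R ^ m - 1 : ℝ) := by
    rw [circleMap_zero_pow_gridAngle (by lia)]
    push_cast
    rfl
  rw [hreal, Complex.div_ofReal_im, im_circleMap_zero_sub_inv, ← mul_div_assoc, mul_div_right_comm]
  refine mul_pos ?_ (by positivity)
  rcases neg_one_pow_eq_or ℝ k with h | h <;> rw [h]
  · exact div_pos one_pos (by linarith)
  · exact div_pos_of_neg_of_neg (by linarith) (by linarith)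

theorem neg_one_pow_mul_sin_mul_pos_of_mem_Ioo (hm : m ≠ 0)
    (hθ : θ ∈ Ioo (gridAngle m k) (gridAngle m (k + 1))) : 0 < (-1) ^ k * Real.sin (m * θ) := by
  have hm' : (0 : ℝ) < m := by positivity
  have hlow := mul_lt_mul_of_pos_left hθ.1 hm'
  have hupp := mul_lt_mul_of_pos_left hθ.2 hm'
  rw [mul_gridAngle hm] at hlow hupp
  push_cast at hupp
  rw [← Real.sin_sub_nat_mul_pi]
  exact Real.sin_pos_of_pos_of_lt_pi (by linarith) (by linarith)

theorem neg_one_pow_mul_pos_of_circleMap_zero_sub_inv_div_eq {q : ℝ} (hR : 1 < R) (hk : 0 < k)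
    (hkm : k + 1 < m) (hθ : θ ∈ Ioo (gridAngle m k) (gridAngle m (k + 1)))
    (heq : (circleMap 0 R θ - (circleMap 0 R θ)⁻¹) / (circleMap 0 R θ ^ m - 1) = q) :
    0 < (-1) ^ k * q := by
  have hm : m ≠ 0 := by lia
  have hsin : 0 < Real.sin θ := Real.sin_pos_of_pos_of_lt_pi
    ((gridAngle_pos hm hk).trans hθ.1) (hθ.2.trans (gridAngle_lt_pi hkm))
  have him := congrArg Complex.im
    ((div_eq_iff (sub_ne_zero.2 (circleMap_zero_pow_ne_one hm hR θ))).1 heq)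
  rw [im_circleMap_zero_sub_inv, Complex.im_ofReal_mul, Complex.sub_im, circleMap_zero_pow,
    circleMap_zero_im, Complex.one_im, sub_zero, mul_left_comm] at him
  have hq : 0 < q * Real.sin (m * θ) :=
    (mul_pos_iff_of_pos_left (by positivity : 0 < R ^ m)).1 (him ▸ by positivity)
  refine (pos_iff_pos_of_mul_pos ?_).2 (neg_one_pow_mul_sin_mul_pos_of_mem_Ioo hm hθ)
  rwa [mul_mul_mul_comm, ← mul_pow, neg_one_mul, neg_neg, one_pow, one_mul]

theorem exists_circleMap_zero_sub_inv_div_eq (hR : 1 < R) (hk : 0 < k) (hkm : k + 1 < m) :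
    ∃ θ ∈ Ioo (gridAngle m k) (gridAngle m (k + 1)), ∃ q : ℝ,
      (circleMap 0 R θ - (circleMap 0 R θ)⁻¹) / (circleMap 0 R θ ^ m - 1) = q := by
  have hm : m ≠ 0 := by lia
  have hcont : Continuous fun θ => (-1) ^ k *
      ((circleMap 0 R θ - (circleMap 0 R θ)⁻¹) / (circleMap 0 R θ ^ m - 1)).im := by
    have hζ := continuous_circleMap 0 R
    have hinv := hζ.inv₀ fun θ => circleMap_ne_center (by positivity)
    exact continuous_const.mul (Complex.continuous_im.comp
      ((hζ.sub hinv).div ((hζ.pow m).sub continuous_const)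
        fun θ => sub_ne_zero.2 (circleMap_zero_pow_ne_one hm hR θ)))
  have hright := neg_one_pow_mul_im_circleMap_zero_sub_inv_div_pos hR k.succ_pos hkm
  rw [pow_succ, mul_neg_one, neg_mul, neg_pos] at hright
  obtain ⟨θ, hθ, hzero⟩ := intermediate_value_Ioo'
    (gridAngle_strictMono hm k.lt_succ_self).le hcont.continuousOn
    ⟨hright, neg_one_pow_mul_im_circleMap_zero_sub_inv_div_pos hR hk (by lia)⟩
  have him := (mul_eq_zero.1 hzero).resolve_left (pow_ne_zero k (by norm_num))
  exact ⟨θ, hθ, _, Complex.ext (Complex.ofReal_re _).symm (him.trans (Complex.ofReal_im _).symm)⟩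

end JoukowskiCircle

namespace chebyshevLens

variable {N k : ℕ} [NeZero N] {γ R : ℝ} (hγ0 : 0 < γ) (hγ1 : γ < 1)

theorem exists_neg_one_pow_mul_arcDisp_neg (hR : 1 < R) (hγR : γ * R ^ 2 = 1) (hk : 0 < k)
    (hkN : k ≤ 2 * N) :
    ∃ θ ∈ Ioo (gridAngle (2 * (N + 1)) k) (gridAngle (2 * (N + 1)) (k + 1)),
      (-1) ^ k * (chebyshevLens N hγ0 hγ1).arcDisp ((R + R⁻¹) * Real.cos θ) < 0 := by
  obtain ⟨θ, hθ, q, heq⟩ :=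
    exists_circleMap_zero_sub_inv_div_eq (m := 2 * (N + 1)) hR hk (by lia)
  have hq := neg_one_pow_mul_pos_of_circleMap_zero_sub_inv_div_eq hR hk (by lia) hθ heq
  refine ⟨θ, hθ, ?_⟩
  have hsin : 0 < Real.sin θ := Real.sin_pos_of_pos_of_lt_pi
    ((gridAngle_pos (by lia) hk).trans hθ.1) (hθ.2.trans (gridAngle_lt_pi (by lia)))
  have hμ : 0 < γ⁻¹ - γ := sub_pos.2 (hγ1.trans (one_lt_inv_iff₀.2 ⟨hγ0, hγ1⟩))
  have hmap := lensMap_joukowski_of_mul_normSq_eq_one (N := N) hγ0 hγ1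
    (ζ := circleMap 0 R θ) (by simpa [Complex.normSq_eq_norm_sq] using hγR)
    (circleMap_zero_pow_ne_one (by lia) hR θ)
  rw [heq, circleMap_zero_add_inv, sub_eq_add_neg (conj _),
    (by push_cast; rfl : -(((γ : ℂ)⁻¹ - γ) * q) = (-((γ⁻¹ - γ) * q) : ℝ))] at hmap
  have him : 0 < (R - R⁻¹) * Real.sin θ :=
    mul_pos (sub_pos.2 ((inv_lt_one_of_one_lt₀ hR).trans hR)) hsin
  rw [((CollinearLens.lensMap_eq_conj_add_iff _ him _).1 hmap).2]
  nlinarith [mul_pos hμ hq]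

end chebyshevLens

theorem exp_pow_two_mul_sub_one (n : ℕ) (θ : ℝ) :
    Complex.exp (θ * Complex.I) ^ (2 * n) - 1 = 2 * Complex.I * Real.sin (n * θ) *
      (Real.cos (n * θ) + Real.sin (n * θ) * Complex.I) := by
  have hpow : Complex.exp (θ * Complex.I) ^ n =
      Real.cos (n * θ) + Real.sin (n * θ) * Complex.I := by
    rw [← Complex.exp_nat_mul, ← mul_assoc, Complex.exp_mul_I]
    push_cast
    rfl
  have htrig : (Real.sin (n * θ) : ℂ) ^ 2 + (Real.cos (n * θ) : ℂ) ^ 2 = 1 := by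
    exact_mod_cast Real.sin_sq_add_cos_sq (n * θ)
  rw [mul_comm 2 n, pow_mul, hpow]
  linear_combination (-Real.sin (n * θ) ^ 2 : ℂ) * Complex.I_sq + htrig

theorem exp_pow_two_mul_ne_one {n : ℕ} {θ : ℝ} (hs : Real.sin (n * θ) ≠ 0) :
    Complex.exp (θ * Complex.I) ^ (2 * n) ≠ 1 := by
  rw [← sub_ne_zero, exp_pow_two_mul_sub_one, Complex.ofReal_cos, Complex.ofReal_sin,
    ← Complex.exp_mul_I, ← Complex.ofReal_sin]
  exact mul_ne_zero (mul_ne_zero (by simp) (Complex.ofReal_ne_zero.2 hs)) (Complex.exp_ne_zero _)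

theorem exp_sub_inv_div_pow_sub_one {n : ℕ} {θ : ℝ} (hs : Real.sin (n * θ) ≠ 0) :
    (Complex.exp (θ * Complex.I) - (Complex.exp (θ * Complex.I))⁻¹) /
        (Complex.exp (θ * Complex.I) ^ (2 * n) - 1) =
      Real.sin θ * (Real.cot (n * θ) - Complex.I) := by
  have hs' : (Real.sin (n * θ) : ℂ) ≠ 0 := Complex.ofReal_ne_zero.2 hs
  have htrig : (Real.sin (n * θ) : ℂ) ^ 2 + (Real.cos (n * θ) : ℂ) ^ 2 = 1 := by
    exact_mod_cast Real.sin_sq_add_cos_sq (n * θ)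
  rw [div_eq_iff (sub_ne_zero.2 (exp_pow_two_mul_ne_one hs)), exp_sub_inv, exp_pow_two_mul_sub_one,
    Real.cot_eq_cos_div_sin, Complex.ofReal_div]
  field_simp
  linear_combination Real.sin θ * Real.sin (n * θ) ^ 2 * Complex.I_sq - Real.sin θ * htrig

theorem hasDerivAt_real_cot {x : ℝ} (hx : Real.sin x ≠ 0) :
    HasDerivAt Real.cot (-(1 + Real.cot x ^ 2)) x := by
  refine (((Real.hasDerivAt_cos x).div (Real.hasDerivAt_sin x) hx).congr_of_eventuallyEq
    (.of_forall Real.cot_eq_cos_div_sin)).congr_deriv ?_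
  rw [Real.cot_eq_cos_div_sin]
  field_simp
  ring

theorem CollinearLens.hasDerivAt_realDisp {N : ℕ} (L : CollinearLens N) {x : ℝ}
    (hx : ∀ j, x ≠ L.pos j) :
    HasDerivAt L.realDisp (-(1 - L.shear) - L.kernelSum x 0) x := by
  have hmap := (L.hasDerivAt_lensMap (z := x) fun j => Complex.ofReal_injective.ne
    (hx j)).real_of_complex.sub (hasDerivAt_id x)
  refine (hmap.congr_of_eventuallyEq (.of_forall fun y => ?_)).congr_deriv ?_
  · simp [lensMap_ofReal]
  · have : (L.shear - ∑ j, (L.mass j : ℂ) / (x - L.pos j) ^ 2) =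
        (L.shear - L.kernelSum x 0 : ℝ) := by simp [kernelSum]
    rw [this, Complex.ofReal_re]
    ring

namespace chebyshevLens

variable {N : ℕ} {γ θ x : ℝ} (hγ0 : 0 < γ) (hγ1 : γ < 1)

theorem abs_pos_lt_two (j : Fin N) : |(chebyshevLens N hγ0 hγ1).pos j| < 2 := by
  have hsin := sin_gridAngle_pos (m := N + 1) (Nat.succ_pos j.rev) (by lia)
  refine abs_lt_of_sq_lt_sq ?_ two_pos.le
  simp only [chebyshevLens]
  nlinarith [Real.sin_sq_add_cos_sq (gridAngle (N + 1) (j.rev + 1))]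

theorem exists_pos_eq_two_mul_cos (hθ0 : 0 < θ) (hθπ : θ < Real.pi)
    (hs : Real.sin ((N + 1 : ℕ) * θ) = 0) :
    ∃ j, (chebyshevLens N hγ0 hγ1).pos j = 2 * Real.cos θ := by
  obtain ⟨k, hk⟩ := Real.sin_eq_zero_iff.1 hs
  have hπ := Real.pi_pos
  have hk0 : 0 < k := by
    have : (0 : ℝ) < k * Real.pi := hk ▸ by positivity
    exact_mod_cast (mul_pos_iff_of_pos_right hπ).1 this
  lift k to ℕ using hk0.le
  have hkN : k < N + 1 := by
    have : (k : ℝ) * Real.pi < (N + 1 : ℕ) * Real.pi := by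
      rw [← Int.cast_natCast, hk]
      gcongr
    exact_mod_cast (mul_lt_mul_iff_left₀ hπ).1 this
  have hθ : gridAngle (N + 1) k = θ := by
    rw [gridAngle, ← Int.cast_natCast (R := ℝ) k, hk, mul_div_cancel_left₀ _ (by positivity)]
  refine ⟨Fin.rev ⟨k - 1, by lia⟩, ?_⟩
  simp only [chebyshevLens, Fin.rev_rev]
  rw [Nat.sub_add_cancel (by lia), hθ]

theorem realDisp_two_mul_cos (hs : Real.sin ((N + 1 : ℕ) * θ) ≠ 0) :
    (chebyshevLens N hγ0 hγ1).realDisp (2 * Real.cos θ) = (γ⁻¹ + γ - 2) * Real.cos θ -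
      (γ⁻¹ - γ) * (Real.sin θ * Real.cot ((N + 1 : ℕ) * θ)) := by
  have hmap := lensMap_joukowski hγ0 hγ1 (Complex.exp_ne_zero _) (exp_pow_two_mul_ne_one hs)
  rw [← ofReal_two_mul_cos, CollinearLens.lensMap_ofReal, exp_sub_inv_div_pow_sub_one hs,
    ← Complex.exp_neg, ← neg_mul, ← Complex.ofReal_neg] at hmap
  have hre := congrArg Complex.re hmap
  simp only [Complex.ofReal_re, ← Complex.ofReal_inv, ← Complex.ofReal_sub, Complex.sub_re,
    Complex.add_re, Complex.re_ofReal_mul, Complex.exp_ofReal_mul_I_re, Real.cos_neg, Complex.I_re,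
    sub_zero] at hre
  linear_combination hre

theorem two_mul_sin_mul_kernelSum (hx : ∀ j, 2 * Real.cos θ ≠ (chebyshevLens N hγ0 hγ1).pos j)
    (hs : Real.sin ((N + 1 : ℕ) * θ) ≠ 0) :
    2 * Real.sin θ * (1 - γ + (chebyshevLens N hγ0 hγ1).kernelSum (2 * Real.cos θ) 0) =
      -(γ⁻¹ + γ - 2) * Real.sin θ - (γ⁻¹ - γ) * (Real.cos θ * Real.cot ((N + 1 : ℕ) * θ) -
        Real.sin θ * ((N + 1) * (1 + Real.cot ((N + 1 : ℕ) * θ) ^ 2))) := by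
  have hleft : HasDerivAt (fun t => (chebyshevLens N hγ0 hγ1).realDisp (2 * Real.cos t))
      ((-(1 - γ) - (chebyshevLens N hγ0 hγ1).kernelSum (2 * Real.cos θ) 0) * (2 * -Real.sin θ)) θ :=
    HasDerivAt.comp (h₂ := (chebyshevLens N hγ0 hγ1).realDisp) θ
      ((chebyshevLens N hγ0 hγ1).hasDerivAt_realDisp hx) ((Real.hasDerivAt_cos θ).const_mul 2)
  have hmul := (hasDerivAt_id θ).const_mul ((N + 1 : ℕ) : ℝ)
  have hright := ((Real.hasDerivAt_cos θ).const_mul (γ⁻¹ + γ - 2)).sub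
    (((Real.hasDerivAt_sin θ).mul ((hasDerivAt_real_cot hs).comp θ hmul)).const_mul (γ⁻¹ - γ))
  have hnear : ∀ᶠ t in 𝓝 θ, Real.sin ((N + 1 : ℕ) * t) ≠ 0 :=
    ContinuousAt.eventually_ne (by fun_prop) hs
  have heq := hleft.unique (hright.congr_of_eventuallyEq
    (hnear.mono fun t ht => realDisp_two_mul_cos hγ0 hγ1 ht))
  simp only [Function.comp_apply] at heq
  push_cast at heq ⊢
  linear_combination heq

theorem lt_kernelSum_of_realDisp_eq_zero (hweak : 1 + γ < (N + 1) * (1 - γ)) (hθ0 : 0 < θ)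
    (hθπ : θ < Real.pi) (hx : ∀ j, 2 * Real.cos θ ≠ (chebyshevLens N hγ0 hγ1).pos j)
    (hzero : (chebyshevLens N hγ0 hγ1).realDisp (2 * Real.cos θ) = 0) :
    1 + γ < (chebyshevLens N hγ0 hγ1).kernelSum (2 * Real.cos θ) 0 := by
  have hs : Real.sin ((N + 1 : ℕ) * θ) ≠ 0 := fun h =>
    have ⟨j, hj⟩ := exists_pos_eq_two_mul_cos hγ0 hγ1 hθ0 hθπ h
    hx j hj.symm
  have hkernel := two_mul_sin_mul_kernelSum hγ0 hγ1 hx hs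
  rw [realDisp_two_mul_cos hγ0 hγ1 hs] at hzero
  have hsin := Real.sin_pos_of_pos_of_lt_pi hθ0 hθπ
  generalize Real.cot ((N + 1 : ℕ) * θ) = C at hzero hkernel
  generalize (chebyshevLens N hγ0 hγ1).kernelSum (2 * Real.cos θ) 0 = K at hkernel ⊢
  have hcos : (1 - γ) * Real.cos θ = (1 + γ) * (Real.sin θ * C) := by
    refine mul_left_cancel₀ (sub_pos.2 hγ1).ne' ?_
    field_simp at hzero
    linear_combination hzero
  have hK : 2 * γ * K = (1 + γ) * (N * (1 - γ) + ((N + 1) * (1 - γ) - (1 + γ)) * C ^ 2) := by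
    refine mul_left_cancel₀ hsin.ne' ?_
    field_simp at hkernel
    linear_combination hkernel - (1 + γ) * C * hcos
  have hbound : (1 + γ) * (2 * γ) < (1 + γ) * (N * (1 - γ)) :=
    mul_lt_mul_of_pos_left (by linarith) (by linarith)
  refine lt_of_mul_lt_mul_left (a := 2 * γ) ?_ (by positivity)
  nlinarith [mul_nonneg (mul_nonneg (by linarith : 0 ≤ 1 + γ) (sub_pos.2 hweak).le) (sq_nonneg C)]

theorem pos_lt_or_lt_pos_of_realDisp_eq_zero [NeZero N] (hweak : 1 + γ < (N + 1) * (1 - γ))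
    (hx : x ∉ (chebyshevLens N hγ0 hγ1).arcDomain)
    (hzero : (chebyshevLens N hγ0 hγ1).realDisp x = 0) :
    (∀ j, x < (chebyshevLens N hγ0 hγ1).pos j) ∨ ∀ j, (chebyshevLens N hγ0 hγ1).pos j < x := by
  rcases le_or_gt x (-2) with hle | hlow
  · exact .inl fun j => hle.trans_lt (abs_lt.1 (abs_pos_lt_two hγ0 hγ1 j)).1
  rcases le_or_gt 2 x with hge | hupp
  · exact .inr fun j => (abs_lt.1 (abs_pos_lt_two hγ0 hγ1 j)).2.trans_le hge
  have hne (j : Fin N) : x ≠ (chebyshevLens N hγ0 hγ1).pos j := fun h =>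
    hx (h ▸ CollinearLens.pos_mem_arcDomain _ j)
  obtain ⟨θ, hθ0, hθπ, rfl⟩ : ∃ θ, 0 < θ ∧ θ < Real.pi ∧ 2 * Real.cos θ = x :=
    ⟨Real.arccos (x / 2), Real.arccos_pos.2 (by linarith),
      Real.arccos_lt_pi.2 (by linarith), by
        rw [Real.cos_arccos (by linarith) (by linarith), mul_div_cancel₀ _ two_ne_zero]⟩
  exact absurd (CollinearLens.mem_arcDomain_of_lt_kernelSum_zero _ hne
    (lt_kernelSum_of_realDisp_eq_zero hγ0 hγ1 hweak hθ0 hθπ hne hzero)) hx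

end chebyshevLens

theorem exists_lensSolutions_ncard_eq_of_lt_mul {N : ℕ} [NeZero N] {γ : ℝ} (hγ0 : 0 < γ)
    (hγ1 : γ < 1) (hweak : 1 + γ < (N + 1) * (1 - γ)) :
    ∃ (ε : Fin N → ℝ) (z : Fin N → ℂ), (∀ j, 0 < ε j) ∧ Function.Injective z ∧
      (lensSolutions N γ ε z).Finite ∧ (lensSolutions N γ ε z).ncard = 5 * N - 1 := by
  set R := (√γ)⁻¹
  have hR : 1 < R :=
    (one_lt_inv₀ (Real.sqrt_pos.2 hγ0)).2 (by simpa using Real.sqrt_lt_sqrt hγ0.le hγ1)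
  have hγR : γ * R ^ 2 = 1 := by
    rw [inv_pow, Real.sq_sqrt hγ0.le, mul_inv_cancel₀ hγ0.ne']
  have hN := NeZero.pos N
  have hangle (k : ℕ) (hk : k ≤ 2 * N - 1) := chebyshevLens.exists_neg_one_pow_mul_arcDisp_neg
    (N := N) (k := 2 * N - k) hγ0 hγ1 hR hγR (by lia) (by lia)
  choose! θ hθ hsign using hangle
  refine (chebyshevLens N hγ0 hγ1).exists_lensSolutions_ncard_eq hγ1
    (xs := fun k => (R + R⁻¹) * Real.cos (θ k))
    (fun x => chebyshevLens.pos_lt_or_lt_pos_of_realDisp_eq_zero hγ0 hγ1 hweak) ?_ fun k hk => ?_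
  · intro i hi j hj hij
    have hi : i ≤ 2 * N - 1 := hi
    have hj : j ≤ 2 * N - 1 := hj
    have hlt : θ j < θ i := (hθ j hj).2.trans_le
      (((gridAngle_strictMono (by lia)).monotone (by lia)).trans (hθ i hi).1.le)
    have hpos : 0 < θ j := (gridAngle_pos (by lia) (by lia)).trans (hθ j hj).1
    have hpi : θ i < Real.pi := (hθ i hi).2.trans (gridAngle_lt_pi (by lia))
    exact mul_lt_mul_of_pos_left (Real.cos_lt_cos_of_nonneg_of_le_pi hpos.le hpi.le hlt)
      (by positivity)
  · have hparity : (-1 : ℝ) ^ (2 * N - k) = (-1) ^ k := by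
      refine neg_one_pow_congr ?_
      rw [Nat.even_sub (by lia)]
      simp
    exact hparity ▸ hsign k hk

theorem stmt_15_general (N : ℕ) (hN : 0 < N) (γ : ℝ) (hγ0 : 0 < γ) (hγ1 : γ < 1) :
    ∃ (ε : Fin N → ℝ) (z : Fin N → ℂ),
      (∀ j, 0 < ε j) ∧ Function.Injective z ∧
      (lensSolutions N γ ε z).Finite ∧
      (lensSolutions N γ ε z).ncard = 5 * N - 1 := by
  rcases lt_or_ge (((N : ℝ) + 1) * (1 - γ)) 2 with hstrong | hweak
  · obtain ⟨M, rfl⟩ := Nat.exists_eq_add_one.2 hN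
    push_cast at hstrong
    exact exists_lensSolutions_ncard_eq_of_mul_lt_two hγ0 hγ1 (by linarith)
  · have : NeZero N := ⟨hN.ne'⟩
    exact exists_lensSolutions_ncard_eq_of_lt_mul hγ0 hγ1 (by linarith)

/-- Gravitational lensing with shear: For every even `N ≥ 2` and every
shear `γ` with `(2 − √2)/(2 + √2) < γ < 1`, there are positive masses `ε_j` and distinct
positions `z_j` such that the lensing equation has exactly `5N − 1` solutions. -/
theorem stmt_15 (N : ℕ) (hN : 2 ≤ N) (hEven : Even N) (γ : ℝ)
    (hγ0 : (2 - Real.sqrt 2) / (2 + Real.sqrt 2) < γ) (hγ1 : γ < 1) :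
    ∃ (ε : Fin N → ℝ) (z : Fin N → ℂ),
      (∀ j, 0 < ε j) ∧ Function.Injective z ∧
      (lensSolutions N γ ε z).Finite ∧
      (lensSolutions N γ ε z).ncard = 5 * N - 1 :=
  stmt_15_general N (by lia) γ ((div_pos (sub_pos.2 ((Real.sqrt_lt' two_pos).2 (by norm_num)))
    (by positivity)).trans hγ0) hγ1
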